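/- arXiv:1209.4985 — 3 statements merged into one kernel-verified Lean document; each statement's English description precedes it below -/
import Mathlib

section
/- For every integer k ≥ 2, every nonempty finite sequence (τ_n)_{n=0}^{m−1} of positive integers and every real 0 < δ ≤ 1 there exists an integer N with the following property: if (p_n)_{n=0}^{m−1} is a finite sequence of variable words over k such that the length of p_n is τ_n for every 0 ≤ n ≤ m−1, L is a finite subset of ℕ of cardinality at least N, and A ⊆ [k]^{<ℕ} satisfies dens_{[k]^ℓ}(A) ≥ δ for every ℓ ∈ L, then there exist a word c over k and a finite sequence (w_n)_{n=0}^{m−1} of variable words over k of pattern (p_n)_{n=0}^{m−1} such that the set {c} ∪ {c⌢w_0(a_0)⌢···⌢w_n(a_n) : 0 ≤ n ≤ m−1 and a_0,…,a_n ∈ [k]} is contained in A. -/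
/-- A word over `k`: a finite sequence with values in `[k]`. -/
abbrev Word (k : ℕ) := List (Fin k)

/-- A "possibly variable" letter sequence: `none` plays the role of the variable `v`. -/
abbrev VWord (k : ℕ) := List (Option (Fin k))

/-- Substitution of the letter `a` for every occurrence of the variable. -/
def subst {k : ℕ} (w : VWord k) (a : Fin k) : Word k := w.map (fun o => o.getD a)

/-- `w` is a variable word: the variable `v` occurs in it. -/
def IsVar {k : ℕ} (w : VWord k) : Prop := none ∈ w

/-- The word `c ⌢ w₀(a₀) ⌢ ⋯ ⌢ wₙ(aₙ)`. -/
def csWord {k : ℕ} (c : Word k) (ws : ℕ → VWord k) (n : ℕ) (a : ℕ → Fin k) : Word k :=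
  c ++ ((List.range (n + 1)).map fun i => subst (ws i) (a i)).flatten

/-- The set `{c} ∪ {c ⌢ w₀(a₀) ⌢ ⋯ ⌢ wₙ(aₙ) : 0 ≤ n ≤ m-1, a₀,…,aₙ ∈ [k]}`. -/
def csSet {k : ℕ} (c : Word k) (m : ℕ) (ws : ℕ → VWord k) : Set (Word k) :=
  insert c {x | ∃ n < m, ∃ a : ℕ → Fin k, x = csWord c ws n a}

/-- The density `dens_{[k]^n}(A) = |A ∩ [k]^n| / k^n`. -/
noncomputable def dens (k n : ℕ) (A : Set (Word k)) : ℝ :=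
  (Set.ncard {x ∈ A | x.length = n} : ℝ) / (k : ℝ) ^ n


namespace DCSP

/-- substitution of a letter for the variable. -/
def sb {α : Type} (u : List (Option α)) (a : α) : List α := u.map (fun o => o.getD a)

@[simp] theorem sb_nil {α : Type} (a : α) : sb ([] : List (Option α)) a = [] := rfl
@[simp] theorem sb_append {α : Type} (u v : List (Option α)) (a : α) :
    sb (u ++ v) a = sb u a ++ sb v a := by simp [sb]
@[simp] theorem sb_none {α : Type} (u : List (Option α)) (a : α) :
    sb (none :: u) a = a :: sb u a := by simp [sb]
@[simp] theorem sb_some {α : Type} (u : List (Option α)) (a b : α) :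
    sb (some b :: u) a = b :: sb u a := by simp [sb]
@[simp] theorem sb_map_some {α : Type} (x : List α) (a : α) : sb (x.map some) a = x := by
  induction x <;> simp_all
@[simp] theorem sb_length {α : Type} (u : List (Option α)) (a : α) :
    (sb u a).length = u.length := by simp [sb]

/-- evaluation of a sequence of left variable words (leading variable omitted). -/
def ev {α : Type} : List (List (Option α)) → List α → List α
  | [], y => y
  | _ :: _, [] => []
  | u :: us, a :: y => a :: (sb u a ++ ev us y)

@[simp] theorem ev_nil {α : Type} (y : List α) : ev [] y = y := by simp [ev]
@[simp] theorem ev_nil' {α : Type} (us : List (List (Option α))) : ev us [] = [] := by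
  cases us <;> simp [ev]
@[simp] theorem ev_cons {α : Type} (u : List (Option α)) (us : List (List (Option α))) (a : α)
    (y : List α) : ev (u :: us) (a :: y) = a :: (sb u a ++ ev us y) := by simp [ev]

/-- embeddings of the tree of words. -/
structure Emb {α : Type} (φ : List α → List α) : Prop where
  len : ∀ x y, x.length = y.length → (φ x).length = (φ y).length
  line : ∀ (n : ℕ) (u : List (Option α)), ∃ u' : List (Option α), ∀ x, x.length = n →
    ∀ a, φ (x ++ a :: sb u a) = φ x ++ a :: sb u' a

theorem var_split {α : Type} (v : List (Option α)) (h : none ∈ v) :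
    ∃ (p : List α) (r : List (Option α)), v = p.map some ++ none :: r := by
  induction v with
  | nil => simp at h
  | cons o v ih =>
    cases o with
    | none => exact ⟨[], v, by simp⟩
    | some b =>
      obtain ⟨p, r, hp⟩ := ih (by simpa using h)
      exact ⟨b :: p, r, by simp [hp]⟩

theorem const_split {α : Type} (v : List (Option α)) (h : none ∉ v) :
    ∃ (p : List α), v = p.map some := by
  induction v with
  | nil => exact ⟨[], rfl⟩
  | cons o v ih =>
    cases o with
    | none => simp at h
    | some b =>
      obtain ⟨p, hp⟩ := ih (by simpa using h)
      exact ⟨b :: p, by simp [hp]⟩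

theorem Emb.sub {α : Type} {φ : List α → List α} (h : Emb φ) (v : List (Option α)) :
    ∃ v' : List (Option α), ∀ a, φ (sb v a) = sb v' a := by
  by_cases hv : none ∈ v
  · obtain ⟨p, r, rfl⟩ := var_split v hv
    obtain ⟨u', hu⟩ := h.line p.length r
    refine ⟨(φ p).map some ++ none :: u', fun a => ?_⟩
    simpa using hu p rfl a
  · obtain ⟨p, rfl⟩ := const_split v hv
    exact ⟨(φ p).map some, fun a => by simp⟩

theorem Emb.id {α : Type} : Emb (fun x : List α => x) :=
  ⟨fun _ _ h => h, fun _ u => ⟨u, fun _ _ _ => rfl⟩⟩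

theorem Emb.comp {α : Type} {φ ψ : List α → List α} (h : Emb φ) (h' : Emb ψ) :
    Emb (fun x => φ (ψ x)) := by
  refine ⟨fun x y e => h.len _ _ (h'.len _ _ e), fun n u => ?_⟩
  obtain ⟨u', hu'⟩ := h'.line n u
  by_cases hn : ∃ x0 : List α, x0.length = n
  · obtain ⟨x0, h0⟩ := hn
    obtain ⟨u'', hu''⟩ := h.line (ψ x0).length u'
    refine ⟨u'', fun x hx a => ?_⟩
    simp only [hu' x hx a]
    exact hu'' (ψ x) (h'.len _ _ (by rw [hx, h0])) a
  · exact ⟨[], fun x hx => (hn ⟨x, hx⟩).elim⟩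

theorem Emb.pfx {α : Type} (c : List α) : Emb (fun x : List α => c ++ x) := by
  refine ⟨fun x y e => by simp [e], fun n u => ⟨u, fun x hx a => by simp⟩⟩

theorem ev_length {α : Type} (us : List (List (Option α))) : ∀ x y : List α,
    x.length = y.length → (ev us x).length = (ev us y).length := by
  induction us with
  | nil => intro x y h; simpa using h
  | cons u us ih =>
    intro x y h
    cases x with
    | nil => cases y with
      | nil => rfl
      | cons b y => simp at h
    | cons a x => cases y with
      | nil => simp at h
      | cons b y => simp [ih x y (by simpa using h)]

theorem Emb.ev {α : Type} (us : List (List (Option α))) : Emb (ev us) := by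
  induction us with
  | nil =>
    have : (DCSP.ev ([] : List (List (Option α)))) = fun x => x := by funext x; simp
    rw [this]; exact Emb.id
  | cons u us ih =>
    refine ⟨ev_length _, fun n v => ?_⟩
    cases n with
    | zero =>
      obtain ⟨v', hv'⟩ := ih.sub v
      refine ⟨u ++ v', fun x hx a => ?_⟩
      obtain rfl := List.length_eq_zero_iff.mp hx
      simp [hv']
    | succ n =>
      obtain ⟨v', hv'⟩ := ih.line n v
      refine ⟨v', fun x hx a => ?_⟩
      cases x with
      | nil => simp at hx
      | cons b x =>
        simp only [List.cons_append, ev_cons]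
        rw [hv' x (by simpa using hx) a]
        simp

theorem Emb.tmpl {α : Type} (c : List α) (us : List (List (Option α))) :
    Emb (fun y => c ++ DCSP.ev us y) := (Emb.pfx c).comp (Emb.ev us)

/-- insensitivity is preserved by embeddings -/
theorem Emb.ins {α β : Type} {φ : List α → List α} (h : Emb φ) (π : α → β) :
    ∀ y y' x : List α, y.map π = y'.map π → (φ (x ++ y)).map π = (φ (x ++ y')).map π := by
  intro y
  induction y with
  | nil => intro y' x e; cases y' with
    | nil => rfl
    | cons b y => simp at e
  | cons a r ih =>
    intro y' x e
    cases y' with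
    | nil => simp at e
    | cons a' r' =>
      simp only [List.map_cons, List.cons.injEq] at e
      obtain ⟨u', hu⟩ := h.line x.length (r.map some)
      have h1 := hu x rfl a
      have h2 := hu x rfl a'
      simp only [sb_map_some] at h1 h2
      have h3 : (φ (x ++ a :: r)).map π = (φ (x ++ a' :: r)).map π := by
        rw [h1, h2]
        simp only [List.map_append, List.map_cons, e.1, sb, List.map_map]
        congr 2
        apply List.map_congr_left
        intro o _
        cases o <;> simp [e.1]
      have h4 := ih r' (x ++ [a']) e.2
      simp only [List.append_assoc, List.cons_append, List.nil_append] at h4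
      rw [h3, h4]

theorem Emb.ins' {α β : Type} {φ : List α → List α} (h : Emb φ) (π : α → β)
    (y y' : List α) (e : y.map π = y'.map π) : (φ y).map π = (φ y').map π := by
  simpa using h.ins π y y' [] e

/-- every embedding is given by a template up to a given height -/
theorem Emb.exists_tmpl {α : Type} {φ : List α → List α} (h : Emb φ) :
    ∀ M : ℕ, ∃ us : List (List (Option α)), us.length = M ∧
      ∀ y : List α, y.length ≤ M → φ y = φ [] ++ DCSP.ev us y := by
  intro M
  choose g hg using fun n => h.line n []
  simp only [sb_nil] at hg
  have key : ∀ (M n : ℕ) (x y : List α), x.length = n → y.length ≤ M →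
      φ (x ++ y) = φ x ++ DCSP.ev ((List.range' n M).map g) y := by
    intro M
    induction M with
    | zero =>
      intro n x y hx hy
      obtain rfl := List.length_eq_zero_iff.mp (Nat.le_zero.mp hy)
      simp
    | succ M ih =>
      intro n x y hx hy
      cases y with
      | nil => simp
      | cons a y =>
        have := ih (n+1) (x ++ [a]) y (by simp [hx]) (by simpa using hy)
        simp only [List.append_assoc, List.cons_append, List.nil_append] at this
        rw [this, hg n x hx a, List.range'_succ]
        simp
  refine ⟨(List.range' 0 M).map g, by simp, fun y hy => ?_⟩
  simpa using key M 0 [] y rfl hy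

/-- lifting of templates to a larger alphabet -/
def lft {α β : Type} (h : α → β) (us : List (List (Option α))) : List (List (Option β)) :=
  us.map (fun u => u.map (Option.map h))

theorem ev_lft {α β : Type} (h : α → β) (us : List (List (Option α))) :
    ∀ y : List α, ev (lft h us) (y.map h) = (ev us y).map h := by
  induction us with
  | nil => intro y; simp [lft]
  | cons u us ih =>
    intro y
    cases y with
    | nil => simp
    | cons a y =>
      have := ih y
      simp only [lft, List.map_cons, ev_cons, List.map_append] at this ⊢
      rw [this]
      simp only [sb, List.map_map]
      congr 2
      apply List.map_congr_left
      intro o _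
      cases o <;> simp

/-- naturality with a retraction -/
theorem ev_lft_retr {α β : Type} (h : α → β) (π : β → α) (hπ : ∀ a, π (h a) = a)
    (us : List (List (Option α))) :
    ∀ z : List β, (ev (lft h us) z).map π = ev us (z.map π) := by
  induction us with
  | nil => intro y; simp [lft]
  | cons u us ih =>
    intro y
    cases y with
    | nil => simp
    | cons a y =>
      have := ih y
      simp only [lft, List.map_cons, ev_cons, List.map_append] at this ⊢
      rw [this]
      simp only [sb, List.map_map]
      congr 2
      apply List.map_congr_left
      intro o _
      cases o <;> simp [hπ]

end DCSP


namespace DCSP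
open Finset

section OS
variable {α β Ω : Type} [Fintype α] [DecidableEq α] [Fintype Ω] {n : ℕ}

/-- change coordinate `p` to `a` -/
def up (p : Fin n) (a : α) (z : Ω × (Fin n → α)) : Ω × (Fin n → α) :=
  (z.1, Function.update z.2 p a)

/-- test functions: depend on coordinates `< p` and on the `π`-image -/
structure Tst (π : α → β) (p : Fin n) (u : Ω × (Fin n → α) → ℝ) : Prop where
  bd : ∀ z, |u z| ≤ 1
  dep : ∀ ω s s', (∀ i, i < p → s i = s' i) → (∀ i, π (s i) = π (s' i)) → u (ω, s) = u (ω, s')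

theorem sum_up (μ : Ω → ℝ) (p : Fin n) (a : α) (G u : Ω × (Fin n → α) → ℝ) :
    ∑ z, μ z.1 * (G (up p a z) * u z) =
      ∑ z : Ω × (Fin n → α), μ z.1 * (G z * ((if z.2 p = a then 1 else 0) * ∑ b, u (up p b z))) := by
  let e : Equiv.Perm ((Ω × (Fin n → α)) × α) :=
    Function.Involutive.toPerm (fun q => (up p q.2 q.1, q.1.2 p)) (by
      rintro ⟨⟨ω, s⟩, b⟩
      simp [up])
  have h1 : ∑ z, μ z.1 * (G (up p a z) * u z) =
      ∑ q : (Ω × (Fin n → α)) × α, μ q.1.1 * (G (up p q.2 q.1) * u q.1) * (if q.2 = a then 1 else 0) := by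
    symm
    rw [Fintype.sum_prod_type]
    apply Finset.sum_congr rfl
    intro z _
    simp
  have h2 : ∑ z : Ω × (Fin n → α), μ z.1 * (G z * ((if z.2 p = a then 1 else 0) * ∑ b, u (up p b z))) =
      ∑ q : (Ω × (Fin n → α)) × α, μ q.1.1 * (G q.1 * u (up p q.2 q.1)) * (if q.1.2 p = a then 1 else 0) := by
    symm
    rw [Fintype.sum_prod_type]
    apply Finset.sum_congr rfl
    intro z _
    simp only [Finset.mul_sum]
    apply Finset.sum_congr rfl
    intro b _
    ring
  rw [h1, h2]
  apply Fintype.sum_equiv e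
  rintro ⟨⟨ω, s⟩, b⟩
  simp [e, up]

theorem os_orth (μ : Ω → ℝ) (π : α → β) (a a' : α) (ha : π a = π a') (p q : Fin n) (hpq : p < q)
    (u v : Ω × (Fin n → α) → ℝ) (hu : Tst π p u) (hv : Tst π q v) :
    ∑ z : Ω × (Fin n → α), μ z.1 *
      ((((if z.2 p = a then 1 else 0) - (if z.2 p = a' then 1 else 0)) * ∑ b, u (up p b z)) *
      (((if z.2 q = a then 1 else 0) - (if z.2 q = a' then 1 else 0)) * ∑ b, v (up q b z))) = 0 := by
  set f : Ω × (Fin n → α) → ℝ := fun z => μ z.1 *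
      ((((if z.2 p = a then 1 else 0) - (if z.2 p = a' then 1 else 0)) * ∑ b, u (up p b z)) *
      (((if z.2 q = a then 1 else 0) - (if z.2 q = a' then 1 else 0)) * ∑ b, v (up q b z))) with hf
  let e : Equiv.Perm (Ω × (Fin n → α)) :=
    Function.Involutive.toPerm (fun z => up q (Equiv.swap a a' (z.2 q)) z) (by
      rintro ⟨ω, s⟩
      simp [up])
  have hs : ∑ z, f z = ∑ z, - f z := by
    apply Fintype.sum_equiv e
    rintro ⟨ω, s⟩
    have hne : p ≠ q := hpq.ne
    have e1 : ∀ b, u (up p b (e (ω, s))) = u (up p b (ω, s)) := by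
      intro b
      apply hu.dep
      · intro i hi
        have : i ≠ q := (hi.trans hpq).ne
        simp [e, up, Function.update_apply, this]
      · intro i
        by_cases hip : i = p
        · subst hip; simp [e, up]
        · by_cases hiq : i = q
          · subst hiq
            simp only [e, up, Function.Involutive.coe_toPerm, Function.update_apply, hip, if_false, if_true]
            rw [Equiv.swap_apply_def]
            split_ifs with h1 h2
            · rw [h1, ha]
            · rw [h2, ha]
            · rfl
          · simp [e, up, Function.update_apply, hip, hiq]
    have e2 : ∀ b, v (up q b (e (ω, s))) = v (up q b (ω, s)) := by
      intro b
      simp [e, up]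
    have e3 : (e (ω, s)).2 p = s p := by simp [e, up, hne]
    have e4 : (e (ω, s)).2 q = Equiv.swap a a' (s q) := by simp [e, up]
    have e5 : (e (ω, s)).1 = ω := rfl
    simp only [hf, e1, e2, e3, e4, e5]
    have h6 : (Equiv.swap a a' (s q) = a) ↔ s q = a' := by
      rw [Equiv.swap_apply_eq_iff, Equiv.swap_apply_left]
    have h7 : (Equiv.swap a a' (s q) = a') ↔ s q = a := by
      rw [Equiv.swap_apply_eq_iff, Equiv.swap_apply_right]
    simp only [h6, h7]
    ring
  rw [Finset.sum_neg_distrib] at hs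
  linarith

theorem os_core (μ : Ω → ℝ) (hμ : ∀ ω, 0 ≤ μ ω) (π : α → β) (a a' : α) (ha : π a = π a')
    (H : Ω × (Fin n → α) → ℝ) (hH : ∀ z, |H z| ≤ 1) (C : Finset (Fin n)) (ε : ℝ) (hε : 0 < ε)
    (u : Fin n → Ω × (Fin n → α) → ℝ) (hu : ∀ p ∈ C, Tst π p (u p))
    (hD : ∀ p ∈ C, ε * (∑ z : Ω × (Fin n → α), μ z.1) <
      ∑ z, μ z.1 * ((H (up p a z) - H (up p a' z)) * u p z)) :
    (C.card : ℝ) = 0 ∨ C.card * ε ^ 2 < (Fintype.card α : ℝ) ^ 2 := by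
  classical
  rcases C.eq_empty_or_nonempty with h0 | h0
  · left; simp [h0]
  right
  set T := ∑ z : Ω × (Fin n → α), μ z.1 with hT
  have hT0 : 0 ≤ T := Finset.sum_nonneg (fun z _ => hμ _)
  set K : ℝ := ((Fintype.card α : ℕ) : ℝ) with hK
  set v : Fin n → Ω × (Fin n → α) → ℝ := fun p z =>
    ((if z.2 p = a then 1 else 0) - (if z.2 p = a' then 1 else 0)) * ∑ b, u p (up p b z) with hv
  have h1 : ∀ p, ∑ z, μ z.1 * ((H (up p a z) - H (up p a' z)) * u p z) =
      ∑ z, μ z.1 * (H z * v p z) := by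
    intro p
    have := sum_up μ p a H (u p)
    have h2 := sum_up μ p a' H (u p)
    calc _ = ∑ z, μ z.1 * (H (up p a z) * u p z) - ∑ z, μ z.1 * (H (up p a' z) * u p z) := by
          rw [← Finset.sum_sub_distrib]; apply Finset.sum_congr rfl; intro z _; ring
      _ = _ := by
          rw [this, h2, ← Finset.sum_sub_distrib]; apply Finset.sum_congr rfl; intro z _
          simp only [hv]; ring
  have h2 : (C.card : ℝ) * (ε * T) < ∑ z, μ z.1 * (H z * ∑ p ∈ C, v p z) := by
    have : ∑ z, μ z.1 * (H z * ∑ p ∈ C, v p z) = ∑ p ∈ C, ∑ z, μ z.1 * (H z * v p z) := by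
      rw [Finset.sum_comm]; apply Finset.sum_congr rfl; intro z _
      simp only [Finset.mul_sum]
    rw [this, ← nsmul_eq_mul, ← Finset.sum_const]
    apply Finset.sum_lt_sum_of_nonempty h0
    intro p hp
    rw [← h1]; exact hD p hp
  have hvb : ∀ p ∈ C, ∀ z, (v p z) ^ 2 ≤ K ^ 2 := by
    intro p hp z
    rw [sq_le_sq]
    simp only [hv, abs_mul]
    have hs : |∑ b, u p (up p b z)| ≤ K := by
      calc _ ≤ ∑ b, |u p (up p b z)| := Finset.abs_sum_le_sum_abs _ _
        _ ≤ ∑ b : α, 1 := Finset.sum_le_sum (fun b _ => (hu p hp).bd _)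
        _ = K := by simp [hK]
    have hK0 : 0 ≤ K := by positivity
    have : |((if z.2 p = a then 1 else 0) - (if z.2 p = a' then 1 else 0) : ℝ)| ≤ 1 := by
      split_ifs <;> simp
    rw [abs_of_nonneg hK0]
    calc _ ≤ 1 * K := mul_le_mul this hs (abs_nonneg _) zero_le_one
      _ = K := one_mul _
  have h3 : ∑ z, μ z.1 * (∑ p ∈ C, v p z) ^ 2 ≤ C.card * (K ^ 2 * T) := by
    have hex : ∑ z, μ z.1 * (∑ p ∈ C, v p z) ^ 2 = ∑ p ∈ C, ∑ q ∈ C, ∑ z, μ z.1 * (v p z * v q z) := by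
      calc _ = ∑ z, ∑ p ∈ C, ∑ q ∈ C, μ z.1 * (v p z * v q z) := by
            apply Finset.sum_congr rfl; intro z _
            rw [sq, Finset.sum_mul_sum]; simp only [Finset.mul_sum]
        _ = _ := by
            rw [Finset.sum_comm]; apply Finset.sum_congr rfl; intro p _; rw [Finset.sum_comm]
    rw [hex, ← nsmul_eq_mul]
    apply Finset.sum_le_card_nsmul
    intro p hp
    rw [Finset.sum_eq_single p]
    · rw [hT, Finset.mul_sum]
      apply Finset.sum_le_sum
      intro z _
      have := hvb p hp z
      have := mul_le_mul_of_nonneg_left this (hμ z.1)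
      nlinarith
    · intro q hq hqp
      rcases lt_or_gt_of_ne hqp with h | h
      · have := os_orth μ π a a' ha q p h (u q) (u p) (hu q hq) (hu p hp)
        rw [← this]; apply Finset.sum_congr rfl; intro z _; simp only [hv]; ring
      · exact os_orth μ π a a' ha p q h (u p) (u q) (hu p hp) (hu q hq)
    · intro h; exact (h hp).elim
  have h4 : (∑ z, μ z.1 * (H z * ∑ p ∈ C, v p z)) ^ 2 ≤ T * (C.card * (K ^ 2 * T)) := by
    calc (∑ z, μ z.1 * (H z * ∑ p ∈ C, v p z)) ^ 2
        ≤ (∑ z : Ω × (Fin n → α), μ z.1 * (H z)^2) * (∑ z, μ z.1 * (∑ p ∈ C, v p z) ^ 2) := by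
          apply Finset.sum_sq_le_sum_mul_sum_of_sq_le_mul
          · intro z _; exact mul_nonneg (hμ _) (sq_nonneg _)
          · intro z _; exact mul_nonneg (hμ _) (sq_nonneg _)
          · intro z _; apply le_of_eq; ring
      _ ≤ _ := by
          apply mul_le_mul _ h3 _ hT0
          · rw [hT]; apply Finset.sum_le_sum; intro z _
            have : (H z)^2 ≤ 1 := by rw [sq_le_one_iff_abs_le_one]; exact hH z
            nlinarith [hμ z.1]
          · exact Finset.sum_nonneg (fun z _ => mul_nonneg (hμ _) (sq_nonneg _))
  have hc : (0:ℝ) < C.card := by exact_mod_cast h0.card_pos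
  by_contra hcon
  push Not at hcon
  have h5 : ((C.card : ℝ) * (ε * T))^2 < (∑ z, μ z.1 * (H z * ∑ p ∈ C, v p z)) ^ 2 := by
    apply pow_lt_pow_left₀ h2 (by positivity) (by norm_num)
  have h6 : C.card * K^2 * T^2 ≤ C.card * (C.card * ε^2) * T^2 := by gcongr
  nlinarith

theorem os (K J : ℕ) (ε : ℝ) (hε : 0 < ε) : ∃ m : ℕ, ∀ {α β Ω ι : Type} [Fintype α] [DecidableEq α] [Fintype Ω]
    [Fintype ι] (n : ℕ), Fintype.card α = K → Fintype.card ι = J →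
    ∀ (μ : Ω → ℝ), (∀ ω, 0 ≤ μ ω) → ∀ (π : α → β)
    (H : ι → Ω × (Fin n → α) → ℝ), (∀ j z, |H j z| ≤ 1) → ∀ (C : Finset (Fin n)), m ≤ C.card →
    ∃ p ∈ C, ∀ j a a', π a = π a' → ∀ u, Tst π p u →
      |∑ z, μ z.1 * ((H j (up p a z) - H j (up p a' z)) * u z)| ≤ ε * (∑ z : Ω × (Fin n → α), μ z.1) := by
  obtain ⟨R, hR⟩ := exists_nat_gt ((K:ℝ)^2 / ε^2)
  refine ⟨J * K * K * (R + 1) + 1, ?_⟩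
  intro α β Ω ι _ _ _ _ n hK hJ μ hμ π H hH C hC
  classical
  by_contra hcon
  push Not at hcon
  have : ∀ p : Fin n, ∃ j : Option (ι × α × α), ∃ u : Ω × (Fin n → α) → ℝ, p ∈ C → ∃ q, j = some q ∧
      π q.2.1 = π q.2.2 ∧ Tst π p u ∧ ε * (∑ z : Ω × (Fin n → α), μ z.1) <
      ∑ z, μ z.1 * ((H q.1 (up p q.2.1 z) - H q.1 (up p q.2.2 z)) * u z) := by
    intro p
    by_cases hp : p ∈ C
    · obtain ⟨j, a, a', ha, u, hu, h⟩ := hcon p hp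
      rcases lt_abs.mp h with h | h
      · exact ⟨some (j, a, a'), u, fun _ => ⟨_, rfl, ha, hu, h⟩⟩
      · refine ⟨some (j, a, a'), fun z => - u z, fun _ => ⟨_, rfl, ha, ⟨?_, ?_⟩, ?_⟩⟩
        · intro z; simpa using hu.bd z
        · intro ω s s' h1 h2; simp [hu.dep ω s s' h1 h2]
        · simpa [mul_neg, Finset.sum_neg_distrib] using h
    · exact ⟨none, fun _ => 0, fun h => (hp h).elim⟩
  choose g u hg using this
  have hpig : ∃ q ∈ (Finset.univ : Finset (ι × α × α)), R + 1 ≤ (C.filter (fun p => g p = some q)).card := by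
    by_contra hno
    push Not at hno
    have : C.card ≤ ∑ q : ι × α × α, (C.filter (fun p => g p = some q)).card := by
      rw [← Finset.card_biUnion]
      · apply Finset.card_le_card
        intro p hp
        obtain ⟨q, hq, -⟩ := hg p hp
        simp [hp, hq]
      · intro q _ q' _ hqq
        rw [Function.onFun, Finset.disjoint_left]
        intro p h1 h2
        simp only [Finset.mem_filter] at h1 h2
        exact hqq (by simpa using h1.2.symm.trans h2.2)
    have h2 : ∑ q : ι × α × α, (C.filter (fun p => g p = some q)).card ≤
        (Finset.univ : Finset (ι × α × α)).card • (R+1) :=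
      Finset.sum_le_card_nsmul _ _ _ (fun q hq => (hno q hq).le)
    simp only [Finset.card_univ, Fintype.card_prod, hK, hJ, smul_eq_mul] at h2
    have : J * (K * K) * (R+1) = J * K * K * (R+1) := by ring
    omega
  obtain ⟨q, -, hq⟩ := hpig
  have hmem : ∀ p ∈ C.filter (fun p => g p = some q), π q.2.1 = π q.2.2 ∧ Tst π p (u p) ∧ ε * (∑ z : Ω × (Fin n → α), μ z.1) <
      ∑ z, μ z.1 * ((H q.1 (up p q.2.1 z) - H q.1 (up p q.2.2 z)) * u p z) := by
    intro p hp
    simp only [Finset.mem_filter] at hp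
    obtain ⟨q', h1, h2⟩ := hg p hp.1
    rw [hp.2] at h1
    obtain rfl : q = q' := by simpa using h1
    exact h2
  obtain ⟨p0, hp0⟩ := Finset.card_pos.mp (show 0 < (C.filter (fun p => g p = some q)).card by omega)
  have hcore := os_core μ hμ π q.2.1 q.2.2 (hmem p0 hp0).1 (H q.1) (hH q.1) _ ε hε u
    (fun p hp => (hmem p hp).2.1) (fun p hp => (hmem p hp).2.2)
  have hq' : ((R:ℝ) + 1) ≤ (C.filter (fun p => g p = some q)).card := by exact_mod_cast hq
  have hR0 : (0:ℝ) ≤ R := by positivity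
  rcases hcore with h | h
  · linarith
  · rw [hK] at h
    rw [div_lt_iff₀ (by positivity)] at hR
    nlinarith [sq_nonneg ε]

end OS
end DCSP


namespace DCSP
open Finset

section TE
variable {α β : Type} {n : ℕ}

/-- the noise embedding: the coordinates in `P` are replaced by the given letters. -/
def te : List (Fin n) → (Fin n → α) → List α → List α
  | [], s, y => List.ofFn s ++ y
  | p :: _, s, [] => (List.ofFn s).take p
  | p :: P, s, a :: y => te P (Function.update s p a) y

theorem te_nil (s : Fin n → α) (y : List α) : te [] s y = List.ofFn s ++ y := by
  cases y <;> rfl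

/-- head of the list of positions -/
def hd : List (Fin n) → ℕ
  | [] => n
  | p :: _ => p

theorem hd_le (P : List (Fin n)) : hd P ≤ n := by
  cases P with
  | nil => simp [hd]
  | cons p P => exact p.2.le

theorem take_upd (s s' : Fin n → α) (p : Fin n) (a : α) (q : ℕ) (hpq : (p:ℕ) < q) (hq : q ≤ n)
    (h : ∀ i, p ≤ i → s i = s' i) :
    (List.ofFn (Function.update s' p a)).take q =
      (List.ofFn s').take p ++ a :: ((List.ofFn s).take q).drop (p+1) := by
  apply List.ext_getElem
  · simp; omega
  · intro i h1 h2
    simp only [List.length_take, List.length_ofFn] at h1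
    have hp := p.2
    rcases lt_trichotomy i p with hi | hi | hi
    · rw [List.getElem_append_left (by simp; omega)]
      have : (⟨i, by omega⟩ : Fin n) ≠ p := fun e => by simp [← e] at hi
      simp [Function.update_apply, this]
    · rw [List.getElem_append_right (by simp; omega)]
      have : (⟨i, by omega⟩ : Fin n) = p := Fin.ext hi
      simp [Function.update_apply, this, hi]
    · rw [List.getElem_append_right (by simp; omega)]
      have hne : (⟨i, by omega⟩ : Fin n) ≠ p := fun e => by simp [← e] at hi
      have hle : p ≤ (⟨i, by omega⟩ : Fin n) := Fin.mk_le_mk.mpr hi.le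
      rw [List.getElem_cons]
      have hm : min (p:ℕ) n = p := by omega
      have : ¬ (i - ((List.take p (List.ofFn s')).length) = 0) := by simp; omega
      rw [dif_neg this]
      simp only [List.getElem_take, List.getElem_ofFn, List.getElem_drop, List.length_take, List.length_ofFn, hm,
        Function.update_apply, hne, if_false]
      rw [← h _ hle]
      congr 2
      omega

theorem te_tmpl (P : List (Fin n)) (hP : P.Pairwise (· < ·)) : ∀ s : Fin n → α,
    ∃ us, ∀ s' : Fin n → α, (∀ i : Fin n, hd P ≤ i → s i = s' i) → ∀ y,
      te P s' y = (List.ofFn s').take (hd P) ++ ev us y := by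
  induction P with
  | nil =>
    intro s
    refine ⟨[], fun s' _ y => ?_⟩
    rw [te_nil]; simp [hd]
  | cons p P ih =>
    intro s
    rw [List.pairwise_cons] at hP
    obtain ⟨us, hus⟩ := ih hP.2 s
    have hpq : (p:ℕ) < hd P := by
      cases P with
      | nil => exact p.2
      | cons q P => exact hP.1 q (by simp)
    refine ⟨(((List.ofFn s).take (hd P)).drop (p+1)).map some :: us, fun s' h y => ?_⟩
    cases y with
    | nil => simp [te, hd]
    | cons a y =>
      have h2 := hus (Function.update s' p a) (by
        intro i hi
        have : i ≠ p := fun e => by subst e; omega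
        rw [Function.update_of_ne this]
        exact h i (by simp only [hd]; omega)) y
      show te P (Function.update s' p a) y = (List.ofFn s').take p ++ _
      simp only [ev_cons, sb_map_some]
      rw [h2, take_upd s s' p a (hd P) hpq (hd_le P) (fun i hi => h i hi)]
      simp

theorem te_emb (P : List (Fin n)) (hP : P.Pairwise (· < ·)) (s : Fin n → α) : Emb (te P s) := by
  obtain ⟨us, h⟩ := te_tmpl P hP s
  have : te P s = fun y => (List.ofFn s).take (hd P) ++ ev us y := funext (h s (fun _ _ => rfl))
  rw [this]
  exact Emb.tmpl _ _

theorem te_length (P : List (Fin n)) : ∀ (s : Fin n → α) (y : List α), y.length < P.length →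
    (te P s y).length ≤ n := by
  induction P with
  | nil => intro s y h; simp at h
  | cons p P ih =>
    intro s y h
    cases y with
    | nil => simp [te]
    | cons a y => exact ih _ y (by simpa using h)

theorem te_ins (π : α → β) (P : List (Fin n)) : ∀ (s s' : Fin n → α) (y y' : List α),
    (∀ i, π (s i) = π (s' i)) → y.map π = y'.map π → (te P s y).map π = (te P s' y').map π := by
  induction P with
  | nil =>
    intro s s' y y' h e
    simp only [te_nil, List.map_append, e, List.map_ofFn]
    congr 2
    funext i; exact h i
  | cons p P ih =>
    intro s s' y y' h e
    cases y with
    | nil => cases y' with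
      | nil =>
        simp only [te, List.map_take, List.map_ofFn]
        congr 2
        funext i; exact h i
      | cons b y' => simp at e
    | cons a y => cases y' with
      | nil => simp at e
      | cons b y' =>
        simp only [List.map_cons, List.cons.injEq] at e
        simp only [te]
        apply ih _ _ _ _ _ e.2
        intro i
        simp only [Function.update_apply]
        split_ifs
        · exact e.1
        · exact h i
end TE

theorem split_top {n : ℕ} (C : Finset (Fin n)) (m1 m2 : ℕ) (h : m1 + m2 ≤ C.card) :
    ∃ C1 C2 : Finset (Fin n), C1 ⊆ C ∧ C2 ⊆ C ∧ C1.card = m1 ∧ m2 ≤ C2.card ∧ ∀ p ∈ C1, ∀ q ∈ C2, p < q := by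
  let e := C.orderEmbOfFin rfl
  refine ⟨(Finset.univ.filter (fun i : Fin C.card => (i:ℕ) < m1)).map e.toEmbedding,
    (Finset.univ.filter (fun i : Fin C.card => m1 ≤ (i:ℕ))).map e.toEmbedding, ?_, ?_, ?_, ?_, ?_⟩
  · intro p hp
    simp only [Finset.mem_map] at hp
    obtain ⟨i, -, rfl⟩ := hp
    exact C.orderEmbOfFin_mem rfl i
  · intro p hp
    simp only [Finset.mem_map] at hp
    obtain ⟨i, -, rfl⟩ := hp
    exact C.orderEmbOfFin_mem rfl i
  · rw [Finset.card_map, Fin.card_filter_val_lt]; omega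
  · rw [Finset.card_map]
    have h1 := Finset.card_filter_add_card_filter_not (s := (Finset.univ : Finset (Fin C.card))) (fun i : Fin C.card => (i:ℕ) < m1)
    rw [Fin.card_filter_val_lt] at h1
    simp only [not_lt, Finset.card_univ, Fintype.card_fin] at h1
    omega
  · intro p hp q hq
    simp only [Finset.mem_map, Finset.mem_filter] at hp hq
    obtain ⟨i, hi, rfl⟩ := hp
    obtain ⟨j, hj, rfl⟩ := hq
    show e i < e j
    rw [e.lt_iff_lt, Fin.lt_def]
    omega

theorem ps {α β : Type} [Fintype α] [DecidableEq α] (π : α → β) (ρ : ℕ) : ∀ (ε : ℝ), 0 < ε → 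
    ∃ m : ℕ, ∀ {Ω : Type} [Fintype Ω] (n : ℕ) (C : Finset (Fin n)), m ≤ C.card →
    ∀ (μ : Ω → ℝ), (∀ ω, 0 ≤ μ ω) → ∀ (F : List α → Ω → ℝ), (∀ t ω, |F t ω| ≤ 1) →
    ∃ p P, (p :: P).Pairwise (· < ·) ∧ P.length = ρ ∧ (∀ q ∈ p :: P, q ∈ C) ∧
      ∀ y y', y.length ≤ ρ → y.map π = y'.map π → ∀ u, Tst π p u →
      |∑ z : Ω × (Fin n → α), μ z.1 * ((F (te (p::P) z.2 y) z.1 - F (te (p::P) z.2 y') z.1) * u z)|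
        ≤ ε * (∑ z : Ω × (Fin n → α), μ z.1) := by
  induction ρ with
  | zero =>
    intro ε hε
    refine ⟨1, ?_⟩
    intro Ω _ n C hC μ hμ F hF
    obtain ⟨p, hp⟩ := Finset.card_pos.mp (show 0 < C.card by omega)
    refine ⟨p, [], by simp, rfl, by simpa using hp, ?_⟩
    intro y y' hy e u hu
    obtain rfl := List.length_eq_zero_iff.mp (Nat.le_zero.mp hy)
    have : y' = [] := by simpa using e.symm
    subst this
    simp
    exact mul_nonneg hε.le (Finset.sum_nonneg (fun z _ => hμ _))
  | succ ρ ih =>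
    intro ε hε
    set K : ℕ := Fintype.card α with hK
    obtain ⟨m2, hm2⟩ := ih (ε / (2 * (K + 1))) (by positivity)
    have hfin := List.finite_length_le α ρ
    let ι := {y : List α // y.length ≤ ρ}
    have : Finite ι := hfin
    have : Fintype ι := Fintype.ofFinite ι
    obtain ⟨m1, hm1⟩ := os K (Fintype.card ι) (ε/2) (by positivity)
    refine ⟨m1 + m2, ?_⟩
    intro Ω _ n C hC μ hμ F hF
    obtain ⟨C1, C2, hC1, hC2, hc1, hc2, hlt⟩ := split_top C m1 m2 hC
    obtain ⟨q, P, hsort, hlen, hmem, hP⟩ := hm2 n C2 hc2 μ hμ F hF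
    obtain ⟨p, hp, hpos⟩ := hm1 n rfl rfl μ hμ π
      (fun (y : ι) (z : Ω × (Fin n → α)) => F (te (q::P) z.2 y.1) z.1) (fun _ _ => hF _ _) C1 hc1.ge
    have hpq : p < q := hlt p hp q (hmem q (by simp))
    refine ⟨p, q :: P, ?_, by simp [hlen], ?_, ?_⟩
    · rw [List.pairwise_cons]
      exact ⟨fun r hr => hlt p hp r (hmem r hr), hsort⟩
    · intro r hr
      rcases List.mem_cons.mp hr with rfl | hr
      · exact hC1 hp
      · exact hC2 (hmem r hr)
    intro y y' hy e u hu
    set T := ∑ z : Ω × (Fin n → α), μ z.1 with hT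
    have hT0 : 0 ≤ T := Finset.sum_nonneg (fun z _ => hμ _)
    cases y with
    | nil =>
      have : y' = [] := by simpa using e.symm
      subst this
      simp
      positivity
    | cons a r =>
      cases y' with
      | nil => simp at e
      | cons a' r' =>
        simp only [List.map_cons, List.cons.injEq] at e
        have hr : r.length ≤ ρ := by simpa using hy
        have h1 := hpos ⟨r, hr⟩ a a' e.1 u hu
        simp only [up] at h1
        set ub : Ω × (Fin n → α) → ℝ := fun z => ((if z.2 p = a' then 1 else 0) * ∑ b, u (up p b z)) with hub
        have hKpos : (0:ℝ) < K + 1 := by positivity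
        have hubt : Tst π q (fun z => ub z / (K + 1)) := by
          constructor
          · intro z
            rw [abs_div, abs_of_pos hKpos, div_le_one hKpos]
            have hs : |∑ b, u (up p b z)| ≤ K := by
              calc _ ≤ ∑ b, |u (up p b z)| := Finset.abs_sum_le_sum_abs _ _
                _ ≤ ∑ b : α, 1 := Finset.sum_le_sum (fun b _ => hu.bd _)
                _ = K := by simp [hK]
            simp only [hub]
            split_ifs
            · rw [one_mul]; linarith
            · simp; positivity
          · intro ω s s' h1 h2
            simp only [hub]
            simp only [h1 p hpq]
            congr 2
            apply Finset.sum_congr rfl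
            intro b _
            apply hu.dep
            · intro i hi
              simp only [up, Function.update_apply]
              split_ifs
              · rfl
              · exact h1 i (hi.trans hpq)
            · intro i
              simp only [Function.update_apply]
              split_ifs
              · rfl
              · exact h2 i
        have h2 := hP r r' hr e.2 _ hubt
        have h3 := sum_up μ p a' (fun z => F (te (q::P) z.2 r) z.1 - F (te (q::P) z.2 r') z.1) u
        simp only [up] at h3
        have h4 : |∑ z : Ω × (Fin n → α), μ z.1 * ((F (te (q::P) (Function.update z.2 p a') r) z.1
            - F (te (q::P) (Function.update z.2 p a') r') z.1) * u z)| ≤ ε / 2 * T := by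
          rw [h3]
          have h5 : ∑ z : Ω × (Fin n → α), μ z.1 * ((F (te (q::P) z.2 r) z.1 - F (te (q::P) z.2 r') z.1) *
              ((if z.2 p = a' then 1 else 0) * ∑ b, u (z.1, Function.update z.2 p b))) =
              (K + 1) * ∑ z : Ω × (Fin n → α), μ z.1 * ((F (te (q::P) z.2 r) z.1 - F (te (q::P) z.2 r') z.1) * (ub z / (K + 1))) := by
            rw [Finset.mul_sum]
            apply Finset.sum_congr rfl
            intro z _
            simp only [hub, up]
            field_simp
          rw [h5, abs_mul, abs_of_pos hKpos]
          calc _ ≤ (K+1) * (ε / (2 * (K + 1)) * T) := mul_le_mul_of_nonneg_left h2 hKpos.le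
            _ = _ := by field_simp
        simp only [te] at *
        have h6 : ∑ z : Ω × (Fin n → α), μ z.1 * ((F (te (q::P) (Function.update z.2 p a) r) z.1
            - F (te (q::P) (Function.update z.2 p a') r') z.1) * u z) =
            ∑ z : Ω × (Fin n → α), μ z.1 * ((F (te (q::P) (Function.update z.2 p a) r) z.1
            - F (te (q::P) (Function.update z.2 p a') r) z.1) * u z) +
            ∑ z : Ω × (Fin n → α), μ z.1 * ((F (te (q::P) (Function.update z.2 p a') r) z.1
            - F (te (q::P) (Function.update z.2 p a') r') z.1) * u z) := by
          rw [← Finset.sum_add_distrib]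
          apply Finset.sum_congr rfl
          intro z _
          ring
        rw [h6]
        calc _ ≤ _ := abs_add_le _ _
          _ ≤ ε/2 * T + ε/2*T := add_le_add h1 h4
          _ = ε * T := by ring

theorem avg_exists {α Ω : Type} [Fintype α] [DecidableEq α] [Nonempty α] [Fintype Ω] {n : ℕ}
    (μ : Ω → ℝ) (F : List α → Ω → ℝ) (P : List (Fin n)) :
    ∀ (i : ℕ) (hi : i < P.length), ∃ y : List α, y.length = i ∧
      ∑ z : Ω × (Fin n → α), μ z.1 * F ((List.ofFn z.2).take P[i]) z.1 ≤
      ∑ z : Ω × (Fin n → α), μ z.1 * F (te P z.2 y) z.1 := by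
  induction P with
  | nil => intro i hi; simp at hi
  | cons p P ih =>
    intro i hi
    cases i with
    | zero => exact ⟨[], rfl, by simp [te]⟩
    | succ i =>
      obtain ⟨y, hy, h⟩ := ih i (by simpa using hi)
      suffices ∃ a, ∑ z : Ω × (Fin n → α), μ z.1 * F (te P z.2 y) z.1 ≤
          ∑ z : Ω × (Fin n → α), μ z.1 * F (te P (Function.update z.2 p a) y) z.1 by
        obtain ⟨a, ha⟩ := this
        exact ⟨a :: y, by simp [hy], h.trans ha⟩
      by_contra hcon
      push Not at hcon
      have h1 := Finset.sum_lt_sum_of_nonempty (s := (Finset.univ : Finset α)) Finset.univ_nonempty (fun a _ => hcon a)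
      have h2 : ∀ a, ∑ z : Ω × (Fin n → α), μ z.1 * F (te P (Function.update z.2 p a) y) z.1 = 
          ∑ z : Ω × (Fin n → α), μ z.1 * (F (te P z.2 y) z.1 * ((if z.2 p = a then 1 else 0) * (Fintype.card α : ℝ))) := by
        intro a
        have := sum_up μ p a (fun z => F (te P z.2 y) z.1) (fun _ => 1)
        simp only [up, mul_one] at this
        rw [this]
        simp
      simp only [h2] at h1
      rw [Finset.sum_comm] at h1
      simp only [← Finset.mul_sum, ← Finset.sum_mul] at h1
      simp at h1
      have h3 : ∑ z : Ω × (Fin n → α), μ z.1 * (F (te P z.2 y) z.1 * (Fintype.card α : ℝ)) = 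
        (Fintype.card α : ℝ) * ∑ z : Ω × (Fin n → α), μ z.1 * F (te P z.2 y) z.1 := by
        rw [Finset.mul_sum]; apply Finset.sum_congr rfl; intro z _; ring
      rw [h3] at h1
      exact lt_irrefl _ h1

theorem ni {α : Type} [Fintype α] [DecidableEq α] [Nonempty α] (ρ : ℕ) (ε : ℝ) (hε : 0 < ε) :
    ∃ m : ℕ, ∀ {Ω : Type} [Fintype Ω] (n : ℕ) (C : Finset (Fin n)), m ≤ C.card →
    ∀ (μ : Ω → ℝ), (∀ ω, 0 ≤ μ ω) → ∀ (F : List α → Ω → ℝ), (∀ t ω, |F t ω| ≤ 1) → ∀ b : ℝ,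
    (∀ l ∈ C, b * (∑ z : Ω × (Fin n → α), μ z.1) ≤
      ∑ z : Ω × (Fin n → α), μ z.1 * F ((List.ofFn z.2).take l) z.1) →
    ∃ P, P.Pairwise (· < ·) ∧ P.length = ρ + 1 ∧ 
      ∀ y, y.length ≤ ρ → (b - ε) * (∑ z : Ω × (Fin n → α), μ z.1) ≤
      ∑ z : Ω × (Fin n → α), μ z.1 * F (te P z.2 y) z.1 := by
  obtain ⟨m, hm⟩ := ps (fun _ : α => ()) ρ ε hε
  refine ⟨m, ?_⟩
  intro Ω _ n C hC μ hμ F hF b hb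
  obtain ⟨p, P, hsort, hlen, hmem, hP⟩ := hm n C hC μ hμ F hF
  refine ⟨p :: P, hsort, by simp [hlen], fun y hy => ?_⟩
  have hyl : y.length < (p::P).length := by simp; omega
  obtain ⟨y', hy', h⟩ := avg_exists μ F (p::P) y.length hyl
  have h1 := hP y y' hy (by simp [List.map_const', hy']) (fun _ => 1) ⟨by simp, by simp⟩
  have h2 := hb _ (hmem _ (List.getElem_mem hyl))
  simp only [mul_one, mul_sub, Finset.sum_sub_distrib] at h1
  have h3 := (abs_le.mp h1).1
  rw [sub_mul]
  linarith

end DCSP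


namespace DCSP
open Finset

open Classical in
/-- indicator of a proposition -/
noncomputable def ind (p : Prop) : ℝ := if p then 1 else 0

theorem ind_true {p : Prop} (h : p) : ind p = 1 := by simp [ind, h]
theorem ind_false {p : Prop} (h : ¬ p) : ind p = 0 := by simp [ind, h]
theorem ind_nonneg (p : Prop) : 0 ≤ ind p := by unfold ind; split_ifs <;> norm_num
theorem ind_le_one (p : Prop) : ind p ≤ 1 := by unfold ind; split_ifs <;> norm_num
theorem ind_mono {p q : Prop} (h : p → q) : ind p ≤ ind q := by
  by_cases hp : p
  · rw [ind_true hp, ind_true (h hp)]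
  · rw [ind_false hp]; exact ind_nonneg q
theorem ind_congr {p q : Prop} (h : p ↔ q) : ind p = ind q := by rw [propext h]
theorem ind_and (p q : Prop) : ind (p ∧ q) = ind p * ind q := by
  unfold ind; split_ifs <;> simp_all
theorem ind_not (p : Prop) : ind (¬ p) = 1 - ind p := by
  unfold ind; split_ifs <;> simp_all
theorem ind_pos {p : Prop} (h : 0 < ind p) : p := by
  by_contra hp; rw [ind_false hp] at h; exact lt_irrefl _ h

/-- the probabilistic density Carlson-Simpson statement -/
def DCS (α : Type) (m : ℕ) (δ : ℝ) : Prop :=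
  ∃ N : ℕ, ∀ (Ω : Type) [Fintype Ω] (μ : Ω → ℝ) (X : List α → Ω → Prop),
    (∀ ω, 0 ≤ μ ω) → 0 < ∑ ω, μ ω →
    (∀ t, t.length ≤ N → δ * ∑ ω, μ ω ≤ ∑ ω, μ ω * ind (X t ω)) →
    ∃ φ, Emb φ ∧ ∃ ω, 0 < μ ω ∧ ∀ y, y.length ≤ m → X (φ y) ω

theorem DCS.mono {α : Type} {m : ℕ} {δ δ' : ℝ} (h : DCS α m δ) (hd : δ ≤ δ') : DCS α m δ' := by
  obtain ⟨N, hN⟩ := h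
  refine ⟨N, fun Ω _ μ X hμ ht hX => hN Ω μ X hμ ht (fun t htN => le_trans ?_ (hX t htN))⟩
  exact mul_le_mul_of_nonneg_right hd ht.le

theorem dcsp {α : Type} [Finite α] {m : ℕ} {δ : ℝ} (hδ : 0 < δ) (h : DCS α m (δ/2)) :
    ∃ (N : ℕ) (p : ℝ), 0 < p ∧ p ≤ 1 ∧ ∀ (Ω : Type) [Fintype Ω] (μ : Ω → ℝ) (X : List α → Ω → Prop),
    (∀ ω, 0 ≤ μ ω) → 0 < ∑ ω, μ ω →
    (∀ t, t.length ≤ N → δ * ∑ ω, μ ω ≤ ∑ ω, μ ω * ind (X t ω)) →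
    ∃ φ, Emb φ ∧ (∀ y, y.length ≤ m → (φ y).length ≤ N) ∧
      p * ∑ ω, μ ω ≤ ∑ ω, μ ω * ind (∀ y, y.length ≤ m → X (φ y) ω) := by
  classical
  obtain ⟨N, hN⟩ := h
  let R := {y : List α // y.length ≤ m} → {t : List α // t.length ≤ N}
  have : Finite {y : List α // y.length ≤ m} := List.finite_length_le α m
  have : Finite {t : List α // t.length ≤ N} := List.finite_length_le α N
  have : Finite R := Pi.finite
  have : Fintype R := Fintype.ofFinite R
  set c : ℝ := ((Fintype.card R : ℕ) : ℝ) with hc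
  have hc1 : c + 1 ≠ 0 := by positivity
  refine ⟨N, min (δ / (2 * (c + 1))) 1, by positivity, min_le_right _ _, ?_⟩
  intro Ω _ μ X hμ ht hX
  by_contra hcon
  push Not at hcon
  let bad : R → Ω → Prop := fun r ω => ∃ φ, Emb φ ∧ (∀ y (hy : y.length ≤ m), φ y = (r ⟨y, hy⟩).1) ∧
    ∀ y, y.length ≤ m → X (φ y) ω
  let Bad : Ω → Prop := fun ω => ∃ r, bad r ω
  set t := ∑ ω, μ ω with htt
  have h1 : ∀ r, ∑ ω, μ ω * ind (bad r ω) ≤ δ / (2 * (c+1)) * t := by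
    intro r
    by_cases hr : ∃ φ, Emb φ ∧ (∀ y (hy : y.length ≤ m), φ y = (r ⟨y, hy⟩).1)
    · obtain ⟨φ, hφ, hφr⟩ := hr
      have h2 := hcon φ hφ (fun y hy => by rw [hφr y hy]; exact (r ⟨y, hy⟩).2)
      calc _ ≤ ∑ ω, μ ω * ind (∀ y, y.length ≤ m → X (φ y) ω) := by
            apply Finset.sum_le_sum
            intro ω _
            apply mul_le_mul_of_nonneg_left _ (hμ ω)
            apply ind_mono
            rintro ⟨ψ, -, h3, h4⟩ y hy
            rw [hφr y hy, ← h3 y hy]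
            exact h4 y hy
        _ ≤ _ := h2.le
        _ ≤ _ := mul_le_mul_of_nonneg_right (min_le_left _ _) ht.le
    · have : ∀ ω, ind (bad r ω) = 0 := by
        intro ω
        apply ind_false
        rintro ⟨φ, h1, h2, -⟩
        exact hr ⟨φ, h1, h2⟩
      simp only [this, mul_zero, Finset.sum_const_zero]
      positivity
  have h2 : ∑ ω, μ ω * ind (Bad ω) ≤ δ / 2 * t := by
    calc _ ≤ ∑ ω, ∑ r, μ ω * ind (bad r ω) := by
          apply Finset.sum_le_sum
          intro ω _
          rw [← Finset.mul_sum]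
          apply mul_le_mul_of_nonneg_left _ (hμ ω)
          by_cases hb : Bad ω
          · obtain ⟨r, hr⟩ := id hb
            rw [ind_true hb, ← ind_true hr]
            exact Finset.single_le_sum (f := fun r => ind (bad r ω)) (fun i _ => ind_nonneg _) (Finset.mem_univ r)
          · rw [ind_false hb]; exact Finset.sum_nonneg (fun _ _ => ind_nonneg _)
      _ = ∑ r, ∑ ω, μ ω * ind (bad r ω) := Finset.sum_comm
      _ ≤ ∑ r : R, δ / (2 * (c+1)) * t := Finset.sum_le_sum (fun r _ => h1 r)
      _ = c * (δ / (2 * (c+1)) * t) := by simp [hc]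
      _ ≤ (c + 1) * (δ / (2 * (c+1)) * t) := by
          apply mul_le_mul_of_nonneg_right (by linarith) (by positivity)
      _ = _ := by field_simp
  let μ' : Ω → ℝ := fun ω => μ ω * ind (¬ Bad ω)
  have hμ' : ∀ ω, 0 ≤ μ' ω := fun ω => mul_nonneg (hμ ω) (ind_nonneg _)
  have hle : ∑ ω, μ' ω ≤ t := Finset.sum_le_sum (fun ω _ => mul_le_of_le_one_right (hμ ω) (ind_le_one _))
  have h3 : ∀ s : List α, s.length ≤ N → δ / 2 * t ≤ ∑ ω, μ' ω * ind (X s ω ∧ s.length ≤ N) := by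
    intro s hs
    have h4 := hX s hs
    have h5 : ∑ ω, μ ω * ind (X s ω) ≤ ∑ ω, μ' ω * ind (X s ω ∧ s.length ≤ N) + ∑ ω, μ ω * ind (Bad ω) := by
      rw [← Finset.sum_add_distrib]
      apply Finset.sum_le_sum
      intro ω _
      simp only [μ', ind_not, ind_and, ind_true hs, mul_one]
      nlinarith [mul_nonneg (mul_nonneg (hμ ω) (ind_nonneg (Bad ω))) (sub_nonneg.mpr (ind_le_one (X s ω)))]
    linarith
  have htot : 0 < ∑ ω, μ' ω := by
    have h4 := h3 [] (by simp)
    have : 0 < δ / 2 * t := by positivity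
    calc 0 < _ := this.trans_le h4
      _ ≤ _ := Finset.sum_le_sum (fun ω _ => mul_le_of_le_one_right (hμ' ω) (ind_le_one _))
  obtain ⟨φ, hφ, ω, hω, hall⟩ := hN Ω μ' (fun s ω => X s ω ∧ s.length ≤ N) hμ' htot (fun s hs =>
    (mul_le_mul_of_nonneg_left hle (by positivity)).trans (h3 s hs))
  have hnb : ¬ Bad ω := by
    apply ind_pos
    by_contra hn
    have h0 : ind (¬ Bad ω) = 0 := le_antisymm (not_lt.mp hn) (ind_nonneg _)
    simp only [μ', h0, mul_zero] at hω
    exact lt_irrefl _ hω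
  apply hnb
  exact ⟨fun y => ⟨φ y.1, (hall y.1 y.2).2⟩, φ, hφ, fun y hy => rfl, fun y hy => (hall y hy).1⟩

theorem sum_fst {Ω S : Type} [Fintype Ω] [Fintype S] (g : Ω → ℝ) :
    ∑ z : Ω × S, g z.1 = Fintype.card S * ∑ ω, g ω := by
  rw [Fintype.sum_prod_type, Finset.mul_sum]
  simp

theorem dcsl {α : Type} [Fintype α] [DecidableEq α] [Nonempty α] {m : ℕ} {d γ : ℝ} (h : DCS α m d) (hγ : 0 < γ) :
    ∃ m0 : ℕ, ∀ (Ω : Type) [Fintype Ω] (μ : Ω → ℝ) (X : List α → Ω → Prop) (n : ℕ) (C : Finset (Fin n)),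
    (∀ ω, 0 ≤ μ ω) → 0 < ∑ ω, μ ω → m0 ≤ C.card →
    (∀ l ∈ C, (d + γ) * (∑ z : Ω × (Fin n → α), μ z.1) ≤
      ∑ z : Ω × (Fin n → α), μ z.1 * ind (X ((List.ofFn z.2).take l) z.1)) →
    ∃ φ, Emb φ ∧ ∃ ω, 0 < μ ω ∧ ∀ y, y.length ≤ m → X (φ y) ω := by
  obtain ⟨N, hN⟩ := h
  obtain ⟨m0, hm0⟩ := ni (α := α) N γ hγ
  refine ⟨m0, ?_⟩
  intro Ω _ μ X n C hμ ht hC hX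
  obtain ⟨P, hs, hl, hP⟩ := hm0 n C hC μ hμ (fun t ω => ind (X t ω))
    (fun t ω => by rw [abs_of_nonneg (ind_nonneg _)]; exact ind_le_one _) (d + γ) hX
  obtain ⟨φ, hφ, z, hz, hall⟩ := hN (Ω × (Fin n → α)) (fun z => μ z.1) (fun y z => X (te P z.2 y) z.1)
    (fun z => hμ _) (by
      rw [sum_fst]
      exact mul_pos (by exact_mod_cast Fintype.card_pos) ht) (fun y hy => by simpa using hP y hy)
  exact ⟨fun y => te P z.2 (φ y), (te_emb P hs z.2).comp hφ, z.1, hz, hall⟩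

section tower
variable {Z γ : Type} [Fintype Z]

open Classical in
/-- conditional expectation with respect to the fibres of `c` -/
noncomputable def avg (c : Z → γ) (f : Z → ℝ) (z : Z) : ℝ :=
  (∑ z', if c z' = c z then f z' else 0) / (∑ z', if c z' = c z then (1:ℝ) else 0)

theorem avg_congr (c : Z → γ) (f : Z → ℝ) {z z' : Z} (h : c z = c z') : avg c f z = avg c f z' := by
  unfold avg
  congr 1 <;>
  · apply Finset.sum_congr rfl
    intro x _
    by_cases hx : c x = c z
    · rw [if_pos hx, if_pos (hx.trans h)]
    · rw [if_neg hx, if_neg (fun e => hx (e.trans h.symm))]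

open Classical in
theorem avg_den_pos (c : Z → γ) (z : Z) : 0 < ∑ z', if c z' = c z then (1:ℝ) else 0 := by
  apply Finset.sum_pos'
  · intro i _; split_ifs <;> norm_num
  · exact ⟨z, Finset.mem_univ _, by simp⟩

theorem avg_le_one (c : Z → γ) (f : Z → ℝ) (hf : ∀ z, |f z| ≤ 1) (z : Z) : avg c f z ≤ 1 := by
  classical
  unfold avg
  rw [div_le_one (avg_den_pos c z)]
  apply Finset.sum_le_sum
  intro i _
  split_ifs
  · exact (abs_le.mp (hf i)).2
  · rfl

theorem tower (c : Z → γ) (f g : Z → ℝ) (hg : ∀ z z', c z = c z' → g z = g z') :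
    ∑ z, g z * f z = ∑ z, g z * avg c f z := by
  classical
  set w : Z → ℝ := fun z => ∑ z', if c z' = c z then (1:ℝ) else 0 with hw
  have hwp : ∀ z, w z ≠ 0 := fun z => (avg_den_pos c z).ne'
  have h1 : ∀ z, g z * avg c f z = ∑ z', if c z' = c z then g z' * f z' / w z' else 0 := by
    intro z
    unfold avg
    rw [← mul_div_assoc, Finset.mul_sum, Finset.sum_div]
    apply Finset.sum_congr rfl
    intro z' _
    by_cases h : c z' = c z
    · have : w z' = w z := by simp [hw, h]
      simp only [h, if_true]
      rw [hg z' z h, this]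
    · simp [h]
  simp only [h1]
  rw [Finset.sum_comm]
  apply Finset.sum_congr rfl
  intro z _
  have : ∑ x, (if c z = c x then g z * f z / w z else 0) = (g z * f z / w z) * w z := by
    rw [hw, Finset.mul_sum]
    apply Finset.sum_congr rfl
    intro x _
    by_cases h : c z = c x
    · simp [h]
    · have : ¬ c x = c z := fun e => h e.symm
      simp [h, this]
  rw [this, div_mul_cancel₀ _ (hwp z)]

end tower

theorem map_getD_some {α : Type} (j : α) (y : List α) :
    (y.map some).map (fun o : Option α => o.getD j) = y := by
  induction y <;> simp_all

/-- Key lemma: removing an insensitive constraint -/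
theorem kl {α : Type} [Fintype α] [DecidableEq α] (h : ∀ m δ, 0 < δ → DCS α m δ) (j : α) (M : ℕ) (β : ℝ) (hβ : 0 < β) :
    ∃ N : ℕ, ∀ (Ω : Type) [Fintype Ω] (μ : Ω → ℝ) (f : List (Option α) → Ω → ℝ)
    (G : List (Option α) → Ω → Prop), (∀ ω, 0 ≤ μ ω) → 0 < ∑ ω, μ ω → (∀ t ω, |f t ω| ≤ 1) →
    (∀ t t' : List (Option α), t.map (fun o => o.getD j) = t'.map (fun o => o.getD j) → ∀ ω, G t ω → G t' ω) →
    (∀ t, t.length ≤ N → β * ∑ ω, μ ω ≤ ∑ ω, μ ω * (f t ω * ind (G t ω))) →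
    ∃ (Ω' : Type) (_ : Fintype Ω') (μ' : Ω' → ℝ) (Φ : Ω' → Ω) (φ : Ω' → List (Option α) → List (Option α)),
      (∀ ω, 0 ≤ μ' ω) ∧ 0 < ∑ ω, μ' ω ∧ (∀ ω, Emb (φ ω)) ∧ (∀ ω, 0 < μ' ω → 0 < μ (Φ ω)) ∧
      (∀ ω, 0 < μ' ω → ∀ z, z.length ≤ M → G (φ ω z) (Φ ω)) ∧
      (∀ z, z.length ≤ M → β / 4 * ∑ ω, μ' ω ≤ ∑ ω, μ' ω * f (φ ω z) (Φ ω)) := by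
  classical
  set π : Option α → α := fun o => o.getD j with hπ
  obtain ⟨ρ, q, hq0, hq1, hq⟩ := dcsp (δ := β/2) (m := M) (by positivity) (h M (β/2/2) (by positivity))
  obtain ⟨n, hn⟩ := ps π ρ (β * q / 4) (by positivity)
  refine ⟨n, ?_⟩
  intro Ω _ μ f G hμ ht hf hG hX
  obtain ⟨p0, P0, hsort, hlen, -, hP⟩ := hn n (Finset.univ) (by simp) μ hμ f hf
  set P := p0 :: P0 with hPdef
  set T := ∑ z : Ω × (Fin n → Option α), μ z.1 with hT
  have hT0 : 0 < T := by
    rw [hT, sum_fst]; exact mul_pos (by exact_mod_cast Fintype.card_pos) ht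
  let c : Ω × (Fin n → Option α) → Ω × (Fin n → α) := fun z => (z.1, fun i => π (z.2 i))
  let F : List α → Ω × (Fin n → Option α) → ℝ := fun y z => f (te P z.2 (y.map some)) z.1
  have hGc : ∀ (y y' : List (Option α)) (z z' : Ω × (Fin n → Option α)), c z = c z' → y.map π = y'.map π →
      G (te P z.2 y) z.1 → G (te P z'.2 y') z'.1 := by
    rintro y y' ⟨ω, s⟩ ⟨ω', s'⟩ hc hy hg
    simp only [c, Prod.mk.injEq] at hc
    obtain ⟨rfl, hc⟩ := hc
    exact hG _ _ (te_ins π P s s' y y' (fun i => congrFun hc i) hy) ω hg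
  let G' : List α → Ω × (Fin n → Option α) → Prop := fun y z =>
    G (te P z.2 (y.map some)) z.1 ∧ β / 2 ≤ avg c (F y) z
  have hG'c : ∀ y z z', c z = c z' → G' y z → G' y z' := by
    intro y z z' hc hg
    exact ⟨hGc _ _ z z' hc rfl hg.1, by rw [← avg_congr c (F y) hc]; exact hg.2⟩
  have hmass : ∀ y : List α, y.length ≤ ρ → β / 2 * T ≤ ∑ z : Ω × (Fin n → Option α), μ z.1 * ind (G' y z) := by
    intro y hy
    have h1 : β * T ≤ ∑ z : Ω × (Fin n → Option α), (μ z.1 * ind (G (te P z.2 (y.map some)) z.1)) * F y z := by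
      rw [hT, sum_fst, Fintype.sum_prod_type, Finset.sum_comm]
      have : β * (((Fintype.card (Fin n → Option α) : ℕ) : ℝ) * ∑ ω, μ ω) = ∑ s : Fin n → Option α, β * ∑ ω, μ ω := by
        simp only [Finset.sum_const, Finset.card_univ, nsmul_eq_mul]; ring
      rw [this]
      apply Finset.sum_le_sum
      intro s _
      have hl : (te P s (y.map some)).length ≤ n := te_length P s _ (by simp [hPdef, hlen]; omega)
      refine (hX _ hl).trans (le_of_eq ?_)
      apply Finset.sum_congr rfl
      intro ω _
      simp only [F]; ring
    rw [tower c] at h1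
    · have h2 : ∑ z : Ω × (Fin n → Option α), (μ z.1 * ind (G (te P z.2 (y.map some)) z.1)) * avg c (F y) z ≤
          ∑ z : Ω × (Fin n → Option α), (μ z.1 * ind (G' y z) + β / 2 * μ z.1) := by
        apply Finset.sum_le_sum
        intro z _
        have hz := hμ z.1
        have ha := avg_le_one c (F y) (fun z => hf _ _) z
        by_cases h1 : G (te P z.2 (y.map some)) z.1
        · by_cases h2 : β / 2 ≤ avg c (F y) z
          · rw [ind_true h1, ind_true (show G' y z from ⟨h1, h2⟩)]
            nlinarith
          · rw [ind_true h1, ind_false (show ¬ G' y z from fun h => h2 h.2)]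
            push Not at h2
            nlinarith
        · rw [ind_false h1, ind_false (show ¬ G' y z from fun h => h1 h.1)]
          simp; positivity
      rw [Finset.sum_add_distrib, ← Finset.mul_sum] at h2
      linarith
    · intro z z' hc
      have : z.1 = z'.1 := by have := congrArg Prod.fst hc; exact this
      rw [this]
      congr 1
      apply ind_congr
      rw [← this]
      constructor
      · intro hg; have := hGc _ _ z z' hc rfl hg; rwa [‹z.1 = z'.1›]
      · intro hg; rw [‹z.1 = z'.1›] at hg; exact hGc _ _ z' z hc.symm rfl hg
  obtain ⟨V, hV, hVl, hVm⟩ := hq (Ω × (Fin n → Option α)) (fun z => μ z.1) G' (fun z => hμ _) hT0 hmass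
  obtain ⟨us, -, hus⟩ := hV.exists_tmpl M
  let Vh : List (Option α) → List (Option α) := fun z => (V []).map some ++ ev (lft some us) z
  have hVh : ∀ z : List (Option α), z.length ≤ M → (Vh z).map π = V (z.map π) := by
    intro z hz
    simp only [Vh, List.map_append]
    rw [ev_lft_retr some π (fun a => rfl) us z, hus (z.map π) (by rw [List.length_map]; exact hz)]
    rw [show ((V []).map some).map π = V [] from map_getD_some j _]
  let u : Ω × (Fin n → Option α) → ℝ := fun z => ind (∀ y, y.length ≤ M → G' (V y) z)
  have huc : ∀ z z', c z = c z' → u z = u z' := by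
    intro z z' hc
    apply ind_congr
    exact ⟨fun h y hy => hG'c _ z z' hc (h y hy), fun h y hy => hG'c _ z' z hc.symm (h y hy)⟩
  have hut : Tst π p0 u := by
    constructor
    · intro z; simp only [u]; rw [abs_of_nonneg (ind_nonneg _)]; exact ind_le_one _
    · intro ω s s' _ h2
      apply huc
      simp only [c, Prod.mk.injEq, true_and]
      funext i; exact h2 i
  have hupos : ∀ z, 0 < μ z.1 * u z → 0 < μ z.1 ∧ ∀ y, y.length ≤ M → G' (V y) z := by
    intro z hz
    have h1 : 0 < u z := by
      by_contra hn
      have : u z = 0 := le_antisymm (not_lt.mp hn) (ind_nonneg _)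
      rw [this, mul_zero] at hz
      exact lt_irrefl _ hz
    exact ⟨pos_of_mul_pos_left hz h1.le, ind_pos h1⟩
  refine ⟨Ω × (Fin n → Option α), inferInstance, fun z => μ z.1 * u z, Prod.fst,
    fun z y => te P z.2 (Vh y), fun z => mul_nonneg (hμ _) (ind_nonneg _), ?_, ?_, ?_, ?_, ?_⟩
  · exact (mul_pos hq0 hT0).trans_le hVm
  · intro z
    exact (te_emb P hsort z.2).comp (Emb.tmpl _ _)
  · intro z hz; exact (hupos z hz).1
  · intro z hz y hy
    have h1 := ((hupos z hz).2 (y.map π) (by simpa using hy)).1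
    refine hGc _ _ z z rfl ?_ h1
    rw [map_getD_some, hVh y hy]
  · intro y hy
    set y' := V (y.map π) with hy'
    have hy'l : y'.length ≤ ρ := hVl _ (by simpa using hy)
    have h1 := hP (y'.map some) (Vh y) (by simpa using hy'l) (by rw [map_getD_some, hVh y hy]) u hut
    have h2 : ∑ z : Ω × (Fin n → Option α), (μ z.1 * u z) * F y' z =
        ∑ z : Ω × (Fin n → Option α), (μ z.1 * u z) * avg c (F y') z := by
      apply tower
      intro z z' hc
      rw [huc z z' hc, show z.1 = z'.1 by have := congrArg Prod.fst hc; exact this]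
    have h3 : β / 2 * ∑ z : Ω × (Fin n → Option α), μ z.1 * u z ≤ ∑ z : Ω × (Fin n → Option α), (μ z.1 * u z) * avg c (F y') z := by
      rw [Finset.mul_sum]
      apply Finset.sum_le_sum
      intro z _
      by_cases hz : ∀ y, y.length ≤ M → G' (V y) z
      · have := (hz (y.map π) (by simpa using hy)).2
        have h0 : 0 ≤ μ z.1 * u z := mul_nonneg (hμ _) (ind_nonneg _)
        rw [mul_comm]
        exact mul_le_mul_of_nonneg_left this h0
      · have : u z = 0 := ind_false hz
        simp [this]
    have h4 : ∑ z : Ω × (Fin n → Option α), μ z.1 * ((f (te P z.2 (y'.map some)) z.1 - f (te P z.2 (Vh y)) z.1) * u z)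
      = ∑ z : Ω × (Fin n → Option α), (μ z.1 * u z) * F y' z -
        ∑ z : Ω × (Fin n → Option α), (μ z.1 * u z) * f (te P z.2 (Vh y)) z.1 := by
      rw [← Finset.sum_sub_distrib]
      apply Finset.sum_congr rfl
      intro z _
      simp only [F]; ring
    rw [h4] at h1
    have h5 := (abs_le.mp h1).2
    have h6 : β * q / 4 * T ≤ β / 4 * ∑ z : Ω × (Fin n → Option α), μ z.1 * u z := by
      have := mul_le_mul_of_nonneg_left hVm (show 0 ≤ β / 4 by positivity)
      linarith
    linarith

/-- iterated key lemma -/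
theorem it {α : Type} [Fintype α] [DecidableEq α] (h : ∀ m δ, 0 < δ → DCS α m δ) (J : Finset α) :
    ∀ (M : ℕ) (β : ℝ), 0 < β →
    ∃ N : ℕ, ∀ (Ω : Type) [Fintype Ω] (μ : Ω → ℝ) (f : List (Option α) → Ω → ℝ)
    (G : α → List (Option α) → Ω → Prop), (∀ ω, 0 ≤ μ ω) → 0 < ∑ ω, μ ω → (∀ t ω, |f t ω| ≤ 1) →
    (∀ j, ∀ t t' : List (Option α), t.map (fun o => o.getD j) = t'.map (fun o => o.getD j) → ∀ ω, G j t ω → G j t' ω) →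
    (∀ t, t.length ≤ N → β * ∑ ω, μ ω ≤ ∑ ω, μ ω * (f t ω * ind (∀ j ∈ J, G j t ω))) →
    ∃ (Ω' : Type) (_ : Fintype Ω') (μ' : Ω' → ℝ) (Φ : Ω' → Ω) (φ : Ω' → List (Option α) → List (Option α)),
      (∀ ω, 0 ≤ μ' ω) ∧ 0 < ∑ ω, μ' ω ∧ (∀ ω, Emb (φ ω)) ∧ (∀ ω, 0 < μ' ω → 0 < μ (Φ ω)) ∧
      (∀ z, z.length ≤ M → 0 ≤ ∑ ω, μ' ω * f (φ ω z) (Φ ω)) := by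
  induction J using Finset.induction_on with
  | empty =>
    intro M β hβ
    refine ⟨M, ?_⟩
    intro Ω _ μ f G hμ ht hf hG hX
    refine ⟨Ω, inferInstance, μ, id, fun _ z => z, hμ, ht, fun _ => Emb.id, fun _ h => h, fun z hz => ?_⟩
    have := hX z hz
    simp only [Finset.notMem_empty, false_imp_iff, implies_true, ind_true, mul_one] at this
    exact (mul_nonneg hβ.le ht.le).trans this
  | insert j J hj ih =>
    intro M β hβ
    obtain ⟨N1, hN1⟩ := ih M (β/4) (by positivity)
    obtain ⟨N, hN⟩ := kl h j N1 β hβ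
    refine ⟨N, ?_⟩
    intro Ω _ μ f G hμ ht hf hG hX
    obtain ⟨Ω1, _, μ1, Φ1, φ1, hμ1, ht1, he1, hp1, -, hm1⟩ := hN Ω μ (fun t ω => f t ω * ind (∀ i ∈ J, G i t ω)) (G j) hμ ht
      (by
        intro t ω
        rw [abs_mul, abs_of_nonneg (ind_nonneg _)]
        exact mul_le_one₀ (hf _ _) (ind_nonneg _) (ind_le_one _)) (hG j) (by
        intro t htN
        refine (hX t htN).trans (le_of_eq ?_)
        apply Finset.sum_congr rfl
        intro ω _
        rw [mul_assoc, ← ind_and]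
        congr 2
        apply ind_congr
        simp only [Finset.mem_insert, forall_eq_or_imp]
        tauto)
    obtain ⟨Ω2, i2, μ2, Φ2, φ2, hμ2, ht2, he2, hp2, hm2⟩ := hN1 Ω1 μ1 (fun z ω => f (φ1 ω z) (Φ1 ω))
      (fun i z ω => G i (φ1 ω z) (Φ1 ω)) hμ1 ht1 (fun _ _ => hf _ _) (by
        intro i t t' e ω
        exact hG i _ _ ((he1 ω).ins' _ _ _ e) _) (fun t htN => hm1 t htN)
    exact ⟨Ω2, i2, μ2, fun ω => Φ1 (Φ2 ω), fun ω z => φ1 (Φ2 ω) (φ2 ω z), hμ2, ht2,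
      fun ω => (he1 _).comp (he2 ω), fun ω hω => hp1 _ (hp2 _ hω), hm2⟩

end DCSP


namespace DCSP

section uf
open Filter

attribute [local instance] Ultrafilter.mul Ultrafilter.semigroup

/-- minimal idempotents in compact right topological semigroups -/
theorem exists_min_idem {M : Type} [Nonempty M] [Semigroup M] [TopologicalSpace M] [CompactSpace M] [T2Space M]
    (hc : ∀ r : M, Continuous (· * r)) :
    ∃ e : M, e * e = e ∧ ∀ p : M, p * p = p → e * p = p → p * e = p → p = e := by
  let S : Set (Set M) := { N | IsClosed N ∧ N.Nonempty ∧ ∀ m, ∀ m' ∈ N, m * m' ∈ N }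
  obtain ⟨N, hN⟩ : ∃ N', Minimal (· ∈ S) N' := by
    refine zorn_superset _ fun c hcs hch => ?_
    refine
      ⟨⋂₀ c, ⟨isClosed_sInter fun t ht => (hcs ht).1, ?_, fun m m' hm' => ?_⟩, fun s hs =>
        Set.sInter_subset_of_mem hs⟩
    · obtain rfl | hcnemp := c.eq_empty_or_nonempty
      · rw [Set.sInter_empty]
        apply Set.univ_nonempty
      rw [Set.sInter_eq_iInter]
      apply @IsCompact.nonempty_iInter_of_directed_nonempty_isCompact_isClosed _ _ _ hcnemp.coe_sort
          ((↑) : c → Set M)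
      · refine DirectedOn.directed_val (IsChain.directedOn hch.symm)
      exacts [fun i => (hcs i.prop).2.1, fun i => (hcs i.prop).1.isCompact, fun i => (hcs i.prop).1]
    · rw [Set.mem_sInter]
      exact fun t ht => (hcs ht).2.2 m m' (Set.mem_sInter.mp hm' t ht)
  obtain ⟨N_closed, hne, N_mul⟩ := hN.prop
  obtain ⟨e, heN, he⟩ := exists_idempotent_in_compact_subsemigroup hc N hne N_closed.isCompact
    (fun x _ y hy => N_mul x y hy)
  refine ⟨e, he, fun p hp hep hpe => ?_⟩
  have hpN : p ∈ N := by rw [← hpe]; exact N_mul p e heN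
  have h1 : Set.range (· * p) = N := by
    apply hN.eq_of_subset
    · refine ⟨(isCompact_range (hc p)).isClosed, ⟨_, ⟨p, rfl⟩⟩, ?_⟩
      rintro m _ ⟨m', rfl⟩
      exact ⟨m * m', mul_assoc _ _ _⟩
    · rintro _ ⟨m', rfl⟩
      exact N_mul _ _ hpN
  rw [← h1] at heN
  obtain ⟨q, hq⟩ := heN
  simp only at hq
  have : e * p = e := by rw [← hq, mul_assoc, hp]
  rw [← hep, this]

theorem map_mul_uf {M M' : Type} [Semigroup M] [Semigroup M'] (h : M → M') (hh : ∀ x y, h (x * y) = h x * h y)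
    (U V : Ultrafilter M) : Ultrafilter.map h (U * V) = Ultrafilter.map h U * Ultrafilter.map h V := by
  apply Ultrafilter.coe_inj.mp
  apply Filter.ext'
  intro p
  rw [Ultrafilter.eventually_mul]
  simp only [Ultrafilter.coe_map, Filter.eventually_map]
  rw [Ultrafilter.eventually_mul]
  simp only [hh]

theorem uf_exists (α : Type) : ∃ (e : Ultrafilter (List α)) (f : Ultrafilter (List (Option α))),
    (∀ P : List α → Prop, (∀ᶠ x in e, P x) → ∀ᶠ x in e, ∀ᶠ x' in e, P (x ++ x')) ∧
    (∀ P : List (Option α) → Prop, (∀ᶠ w in f, P w) → ∀ᶠ w in f, ∀ᶠ w' in f, P (w ++ w')) ∧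
    (∀ P : List (Option α) → Prop, (∀ᶠ w in f, P w) → ∀ᶠ w in f, ∀ᶠ x in e, P (w ++ List.map some x)) ∧
    (∀ P : List (Option α) → Prop, (∀ᶠ w in f, P w) → ∀ᶠ x in e, ∀ᶠ w in f, P (List.map some x ++ w)) ∧
    (∀ᶠ w in (f : Filter (List (Option α))), none ∈ w) ∧
    (∀ b : α, ∀ P : List α → Prop, (∀ᶠ x in e, P x) → ∀ᶠ w in f, P (sb w b)) := by
  have : Nonempty (Ultrafilter (FreeMonoid α)) := ⟨pure 1⟩
  obtain ⟨e, hee, hmin⟩ := exists_min_idem (M := Ultrafilter (FreeMonoid α)) Ultrafilter.continuous_mul_left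
  let ι : FreeMonoid α → FreeMonoid (Option α) := fun x => List.map some x
  have hι : ∀ x y, ι (x * y) = ι x * ι y := fun x y => List.map_append
  let eh : Ultrafilter (FreeMonoid (Option α)) := Ultrafilter.map ι e
  have hehe : eh * eh = eh := by rw [← map_mul_uf ι hι, hee]
  let A : Set (Ultrafilter (FreeMonoid (Option α))) := {U | {t : FreeMonoid (Option α) | none ∈ FreeMonoid.toList t} ∈ U}
  have hAcl : IsClosed A := ultrafilter_isClosed_basic _
  have hAl : ∀ U V, V ∈ A → U * V ∈ A := by
    intro U V hV
    suffices hgoal : ∀ᶠ t in (↑(U * V) : Filter (FreeMonoid (Option α))), none ∈ FreeMonoid.toList t from hgoal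
    rw [Ultrafilter.eventually_mul]
    apply Filter.Eventually.of_forall
    intro t
    filter_upwards [hV] with t' ht'
    exact List.mem_append_right _ ht'
  have hAr : ∀ U V, U ∈ A → U * V ∈ A := by
    intro U V hU
    suffices hgoal : ∀ᶠ t in (↑(U * V) : Filter (FreeMonoid (Option α))), none ∈ FreeMonoid.toList t from hgoal
    rw [Ultrafilter.eventually_mul]
    filter_upwards [hU] with t' ht'
    apply Filter.Eventually.of_forall
    intro t
    exact List.mem_append_left _ ht'
  have hA0 : (pure (FreeMonoid.of none) : Ultrafilter (FreeMonoid (Option α))) ∈ A := by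
    have h1 : (FreeMonoid.of none) ∈ {t : FreeMonoid (Option α) | none ∈ FreeMonoid.toList t} :=
      List.mem_singleton.mpr rfl
    exact Ultrafilter.mem_pure.mpr h1
  obtain ⟨g, ⟨U, hU, hUg⟩, hg⟩ := exists_idempotent_in_compact_subsemigroup
    (M := Ultrafilter (FreeMonoid (Option α))) Ultrafilter.continuous_mul_left ((· * eh) '' A) ⟨_, ⟨_, hA0, rfl⟩⟩
    (hAcl.isCompact.image (Ultrafilter.continuous_mul_left eh)) (by
      rintro _ ⟨U, hU, rfl⟩ _ ⟨V, hV, rfl⟩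
      exact ⟨U * eh * V, hAl _ _ hV, by simp only [mul_assoc]⟩)
  simp only at hUg
  have hge : g * eh = g := by rw [← hUg, mul_assoc, hehe]
  let f := eh * g
  have hff : f * f = f := by
    show eh * g * (eh * g) = eh * g
    rw [mul_assoc, ← mul_assoc g, hge, hg]
  have hef : eh * f = f := by show eh * (eh * g) = eh * g; rw [← mul_assoc, hehe]
  have hfe : f * eh = f := by show (eh * g) * eh = eh * g; rw [mul_assoc, hge]
  have hfA : f ∈ A := hAl _ _ (by rw [← hUg]; exact hAr _ _ hU)
  let σ : α → FreeMonoid (Option α) → FreeMonoid α := fun b t => FreeMonoid.ofList (sb (FreeMonoid.toList t) b)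
  have hsb : ∀ b : α, Ultrafilter.map (σ b) f = e := by
    intro b
    have hh : ∀ x y : FreeMonoid (Option α), σ b (x * y) = σ b x * σ b y := fun x y => sb_append _ _ b
    have h0 : Ultrafilter.map (σ b) eh = e := by
      have h1 : σ b ∘ ι = id := by
        funext x
        exact sb_map_some (FreeMonoid.toList x) b
      have h2 : Ultrafilter.map (σ b) eh = Ultrafilter.map (σ b ∘ ι) e := Ultrafilter.map_map ..
      rw [h2, h1, Ultrafilter.map_id]
    apply hmin
    · rw [← map_mul_uf _ hh, hff]
    · conv_lhs => rw [← h0]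
      rw [← map_mul_uf _ hh, hef]
    · conv_lhs => rw [← h0]
      rw [← map_mul_uf _ hh, hfe]
  refine ⟨e, f, ?_, ?_, ?_, ?_, ?_, ?_⟩
  · intro P hP
    have : ∀ᶠ x in (↑(e * e) : Filter (FreeMonoid α)), P x := by rw [hee]; exact hP
    exact (Ultrafilter.eventually_mul e e P).mp this
  · intro P hP
    have : ∀ᶠ x in (↑(f * f) : Filter (FreeMonoid (Option α))), P x := by rw [hff]; exact hP
    exact (Ultrafilter.eventually_mul f f P).mp this
  · intro P hP
    have : ∀ᶠ x in (↑(f * eh) : Filter (FreeMonoid (Option α))), P x := by rw [hfe]; exact hP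
    exact (Ultrafilter.eventually_mul f eh P).mp this
  · intro P hP
    have : ∀ᶠ x in (↑(eh * f) : Filter (FreeMonoid (Option α))), P x := by rw [hef]; exact hP
    exact (Ultrafilter.eventually_mul eh f P).mp this
  · exact hfA
  · intro b P hP
    have h1 : ∀ᶠ x in (↑(Ultrafilter.map (σ b) f) :
        Filter (FreeMonoid α)), P x := by rw [hsb b]; exact hP
    exact h1

/-- the constant prefix before the first variable -/
def pre {α : Type} : List (Option α) → List α
  | [] => []
  | none :: _ => []
  | some a :: w => a :: pre w

theorem pre_split {α : Type} (p : List α) (r : List (Option α)) : pre (p.map some ++ none :: r) = p := by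
  induction p with
  | nil => simp [pre]
  | cons a p ih => simp [pre, ih]

theorem pre_append {α : Type} (w w' : List (Option α)) (h : none ∈ w) : pre (w ++ w') = pre w := by
  obtain ⟨p, r, rfl⟩ := var_split w h
  rw [List.append_assoc, List.cons_append, pre_split, pre_split]

variable {α : Type} (e : Ultrafilter (List α)) (f : Ultrafilter (List (Option α)))
  (C : List α → (α → List α) → Prop)

/-- generic validity -/
def ok (r : List α) (s : List (Option α)) : Prop := ∀ᶠ w in f, C r (fun a => sb s a ++ pre w)

/-- good lines -/
def lgood (r : List α) (s : List (Option α)) : Prop :=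
  ok f C r s ∧ (∀ᶠ w in f, ok f C r (s ++ w)) ∧ (∀ᶠ x in e, ok f C r (s ++ List.map some x))

/-- base condition for roots -/
def base (x : List α) : Prop := ∀ᶠ w in f, ok f C (x ++ pre w) (x.map some ++ w)

/-- good roots -/
def rgood (x : List α) : Prop := base f C x ∧ ∀ᶠ x' in e, base f C (x ++ x')

theorem fusion [Finite α]
    (hee : ∀ P : List α → Prop, (∀ᶠ x in e, P x) → ∀ᶠ x in e, ∀ᶠ x' in e, P (x ++ x'))
    (hff : ∀ P : List (Option α) → Prop, (∀ᶠ w in f, P w) → ∀ᶠ w in f, ∀ᶠ w' in f, P (w ++ w'))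
    (hfe : ∀ P : List (Option α) → Prop, (∀ᶠ w in f, P w) → ∀ᶠ w in f, ∀ᶠ x in e, P (w ++ List.map some x))
    (hef : ∀ P : List (Option α) → Prop, (∀ᶠ w in f, P w) → ∀ᶠ x in e, ∀ᶠ w in f, P (List.map some x ++ w))
    (hnone : ∀ᶠ w in (f : Filter (List (Option α))), none ∈ w)
    (hsb : ∀ b : α, ∀ P : List α → Prop, (∀ᶠ x in e, P x) → ∀ᶠ w in f, P (sb w b)) (n : ℕ) :
    ∀ (R : Set (List α)) (Q : Set (List α × List (Option α))), R.Finite → Q.Finite →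
      (∀ x ∈ R, rgood e f C x) → (∀ q ∈ Q, lgood e f C q.1 q.2) →
      ∃ (p : List α) (us : List (List (Option α))), us.length = n ∧
        (∀ q ∈ Q, ∀ z : List (Option α), z.length ≤ n → C q.1 (fun a => sb q.2 a ++ (p ++ ev us (sb z a)))) ∧
        (∀ x ∈ R, ∀ (y : List α) (z : List (Option α)), y.length + 1 + z.length ≤ n →
          C (x ++ (p ++ ev us y)) (fun a => x ++ (p ++ ev us (y ++ a :: sb z a)))) := by
  have hbase : ∀ x, base f C x → ∀ᶠ w in f, lgood e f C (x ++ pre w) (x.map some ++ w) := by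
    intro x hx
    filter_upwards [hx, hff _ hx, hfe _ hx, hnone] with w h1 h2 h3 h4
    refine ⟨h1, ?_, ?_⟩
    · filter_upwards [h2] with w' h
      rwa [pre_append w w' h4, ← List.append_assoc] at h
    · filter_upwards [h3] with w' h
      rwa [pre_append w _ h4, ← List.append_assoc] at h
  have hlf : ∀ r s, lgood e f C r s → ∀ᶠ w in f, lgood e f C r (s ++ w) := by
    intro r s hl
    filter_upwards [hl.2.1, hff _ hl.2.1, hfe _ hl.2.1] with w h1 h2 h3
    refine ⟨h1, ?_, ?_⟩
    · filter_upwards [h2] with w' h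
      rwa [← List.append_assoc] at h
    · filter_upwards [h3] with w' h
      rwa [← List.append_assoc] at h
  have hle : ∀ r s, lgood e f C r s → ∀ᶠ x in e, lgood e f C r (s ++ List.map some x) := by
    intro r s hl
    filter_upwards [hl.2.2, hef _ hl.2.1, hee _ hl.2.2] with w h1 h2 h3
    refine ⟨h1, ?_, ?_⟩
    · filter_upwards [h2] with w' h
      rwa [← List.append_assoc] at h
    · filter_upwards [h3] with w' h
      rwa [List.map_append, ← List.append_assoc] at h
  have hrg : ∀ x, rgood e f C x → ∀ᶠ x' in e, rgood e f C (x ++ x') := by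
    intro x hx
    filter_upwards [hx.2, hee _ hx.2] with x' h1 h2
    refine ⟨h1, ?_⟩
    filter_upwards [h2] with x'' h
    rwa [← List.append_assoc] at h
  induction n with
  | zero =>
    intro R Q hR hQ hRg hQg
    have h1 : ∀ᶠ w in f, ∀ q ∈ Q, C q.1 (fun a => sb q.2 a ++ pre w) :=
      (Filter.eventually_all_finite hQ).mpr (fun q hq => (hQg q hq).1)
    obtain ⟨w, hw⟩ := h1.exists
    refine ⟨pre w, [], rfl, ?_, ?_⟩
    · intro q hq z hz
      obtain rfl := List.length_eq_zero_iff.mp (Nat.le_zero.mp hz)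
      simpa using hw q hq
    · intro x _ y z h; omega
  | succ n ih =>
    intro R Q hR hQ hRg hQg
    have h1 : ∀ᶠ w in f, ∀ q ∈ Q, C q.1 (fun a => sb q.2 a ++ pre w) :=
      (Filter.eventually_all_finite hQ).mpr (fun q hq => (hQg q hq).1)
    have h2 : ∀ᶠ w in f, ∀ q ∈ Q, lgood e f C q.1 (q.2 ++ w) :=
      (Filter.eventually_all_finite hQ).mpr (fun q hq => hlf _ _ (hQg q hq))
    have h3 : ∀ᶠ w in f, ∀ q ∈ Q, ∀ b, lgood e f C q.1 (q.2 ++ (sb w b).map some) :=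
      (Filter.eventually_all_finite hQ).mpr (fun q hq => Filter.eventually_all.mpr
        (fun b => hsb b _ (hle _ _ (hQg q hq))))
    have h4 : ∀ᶠ w in f, ∀ x ∈ R, lgood e f C (x ++ pre w) (x.map some ++ w) :=
      (Filter.eventually_all_finite hR).mpr (fun x hx => hbase x (hRg x hx).1)
    have h5 : ∀ᶠ w in f, ∀ x ∈ R, ∀ b, rgood e f C (x ++ sb w b) :=
      (Filter.eventually_all_finite hR).mpr (fun x hx => Filter.eventually_all.mpr
        (fun b => hsb b _ (hrg _ (hRg x hx))))
    obtain ⟨w, h1, h2, h3, h4, h5, h6⟩ := (h1.and (h2.and (h3.and (h4.and (h5.and hnone))))).exists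
    obtain ⟨p0, r, rfl⟩ := var_split w h6
    set w := p0.map some ++ none :: r with hw
    have hpre : pre w = p0 := pre_split p0 r
    obtain ⟨p', us', hlen, hQ', hR'⟩ := ih (Set.image2 (fun x b => x ++ sb w b) R Set.univ)
      ((fun q => (q.1, q.2 ++ w)) '' Q ∪ Set.image2 (fun q b => (q.1, q.2 ++ (sb w b).map some)) Q Set.univ ∪
        (fun x => (x ++ pre w, x.map some ++ w)) '' R)
      (hR.image2 _ Set.finite_univ)
      (((hQ.image _).union (hQ.image2 _ Set.finite_univ)).union (hR.image _))
      (by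
        rintro _ ⟨x, hx, b, -, rfl⟩
        exact h5 x hx b)
      (by
        rintro _ ((⟨q, hq, rfl⟩ | ⟨q, hq, b, -, rfl⟩) | ⟨x, hx, rfl⟩)
        · exact h2 q hq
        · exact h3 q hq b
        · exact h4 x hx)
    have hsw : ∀ b, sb w b = p0 ++ b :: sb r b := by intro b; simp [hw]
    refine ⟨p0, (r ++ p'.map some) :: us', by simp [hlen], ?_, ?_⟩
    · intro q hq z hz
      cases z with
      | nil => simpa [hpre] using h1 q hq
      | cons o z =>
        have hz' : z.length ≤ n := by simpa using hz
        cases o with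
        | none =>
          have := hQ' (q.1, q.2 ++ w) (Or.inl (Or.inl ⟨q, hq, rfl⟩)) z hz'
          simpa [hsw] using this
        | some b =>
          have := hQ' (q.1, q.2 ++ (sb w b).map some) (Or.inl (Or.inr ⟨q, hq, b, trivial, rfl⟩)) z hz'
          simp only [sb_append, sb_map_some] at this
          simpa [hsw] using this
    · intro x hx y z hyz
      cases y with
      | nil =>
        have := hQ' (x ++ pre w, x.map some ++ w) (Or.inr ⟨x, hx, rfl⟩) z (by simp at hyz; omega)
        simp only [sb_append, sb_map_some, hpre] at this
        simpa [hsw] using this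
      | cons b y =>
        have := hR' (x ++ sb w b) ⟨x, hx, b, trivial, rfl⟩ y z (by simp at hyz; omega)
        simpa [hsw] using this

end uf

/-- the conclusion of the coloring theorem -/
def Mono {α : Type} (C : List α → (α → List α) → Prop) (n : ℕ) (c : List α) (us : List (List (Option α))) : Prop :=
  us.length = n ∧ ∀ (y : List α) (z : List (Option α)), y.length + 1 + z.length ≤ n →
    C (c ++ ev us y) (fun a => c ++ ev us (y ++ a :: sb z a))

theorem car_inf {α : Type} [Finite α] (C : List α → (α → List α) → Prop) :
    (∀ n, ∃ c us, Mono C n c us) ∨ (∀ n, ∃ c us, Mono (fun r h => ¬ C r h) n c us) := by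
  obtain ⟨e, f, hee, hff, hfe, hef, hnone, hsb⟩ := uf_exists α
  have key : ∀ D : List α → (α → List α) → Prop, (∀ᶠ x in e, base f D x) → ∀ n, ∃ c us, Mono D n c us := by
    intro D hD n
    obtain ⟨x, hx⟩ : ∃ x, rgood e f D x := by
      have := (hD.and (hee _ hD)).exists
      exact this
    obtain ⟨p, us, h1, -, h2⟩ := fusion e f D hee hff hfe hef hnone hsb n {x} ∅ (Set.finite_singleton _) Set.finite_empty
      (by simpa using hx) (by simp)
    refine ⟨x ++ p, us, h1, fun y z hyz => ?_⟩
    simpa using h2 x rfl y z hyz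
  by_cases h : ∀ᶠ x in e, base f C x
  · exact Or.inl (key C h)
  · right
    apply key
    rw [← Ultrafilter.eventually_not] at h
    filter_upwards [h] with x hx
    unfold base ok at hx ⊢
    rw [← Ultrafilter.eventually_not] at hx
    filter_upwards [hx] with w hw
    rwa [← Ultrafilter.eventually_not] at hw

/-- total length of a template -/
def tl {α : Type} (c : List α) (us : List (List (Option α))) : ℕ :=
  c.length + (us.map (fun u => u.length + 1)).sum

theorem ev_len_le {α : Type} (us : List (List (Option α))) : ∀ y : List α, y.length ≤ us.length →
    (ev us y).length ≤ (us.map (fun u => u.length + 1)).sum := by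
  induction us with
  | nil => intro y h; simp at h; simp [h]
  | cons u us ih =>
    intro y h
    cases y with
    | nil => simp
    | cons a y =>
      have := ih y (by simpa using h)
      simp only [ev_cons, List.length_cons, List.length_append, sb_length, List.map_cons, List.sum_cons]; omega

theorem car_fin (α : Type) [Finite α] (n1 n2 : ℕ) : ∃ N : ℕ, ∀ C : List α → (α → List α) → Prop,
    (∃ c us, Mono C n1 c us ∧ tl c us ≤ N) ∨ (∃ c us, Mono (fun r h => ¬ C r h) n2 c us ∧ tl c us ≤ N) := by
  by_contra hcon
  push Not at hcon
  choose D hD1 hD2 using hcon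
  let C : List α → (α → List α) → Prop := fun r h => ∀ᶠ N in (Filter.hyperfilter ℕ : Filter ℕ), D N r h
  have hge : ∀ k, ∀ᶠ N in (Filter.hyperfilter ℕ : Filter ℕ), k ≤ N := by
    intro k
    apply Filter.Eventually.filter_mono (Filter.hyperfilter_le_cofinite)
    rw [Nat.cofinite_eq_atTop]
    exact Filter.eventually_ge_atTop k
  have hfin : ∀ n, {q : List α × List (Option α) | q.1.length + 1 + q.2.length ≤ n}.Finite := by
    intro n
    apply ((List.finite_length_le α n).prod (List.finite_length_le (Option α) n)).subset
    rintro ⟨y, z⟩ h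
    simp only [Set.mem_setOf_eq] at h
    simp only [Set.mem_prod, Set.mem_setOf_eq]
    omega
  have key : ∀ (E : ℕ → List α → (α → List α) → Prop) n c us,
      Mono (fun r h => ∀ᶠ N in (Filter.hyperfilter ℕ : Filter ℕ), E N r h) n c us → ∃ N, Mono (E N) n c us ∧ tl c us ≤ N := by
    intro E n c us h
    have h1 : ∀ᶠ N in (Filter.hyperfilter ℕ : Filter ℕ), ∀ q ∈ {q : List α × List (Option α) | q.1.length + 1 + q.2.length ≤ n},
        E N (c ++ ev us q.1) (fun a => c ++ ev us (q.1 ++ a :: sb q.2 a)) :=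
      (Filter.eventually_all_finite (hfin n)).mpr (fun q hq => h.2 q.1 q.2 hq)
    obtain ⟨N, hN, hN2⟩ := (h1.and (hge (tl c us))).exists
    exact ⟨N, ⟨h.1, fun y z hyz => hN (y, z) hyz⟩, hN2⟩
  rcases car_inf C with h | h
  · obtain ⟨c, us, hM⟩ := h n1
    obtain ⟨N, h1, h2⟩ := key D n1 c us hM
    exact absurd h2 (not_le.mpr (hD1 N c us h1))
  · obtain ⟨c, us, hM⟩ := h n2
    obtain ⟨N, h1, h2⟩ := key (fun N r h => ¬ D N r h) n2 c us (by
      refine ⟨hM.1, fun y z hyz => ?_⟩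
      beta_reduce
      rw [Ultrafilter.eventually_not]
      exact hM.2 y z hyz)
    exact absurd h2 (not_le.mpr (hD2 N c us h1))

end DCSP


namespace DCSP
open Finset

theorem level_split {Z α : Type} [Fintype Z] [Fintype α] [DecidableEq α] (w : Z → ℝ) (hw : ∀ z, 0 ≤ w z)
    (x0 x1 : Z → Prop) (Bs : Z → Finset α) (δ β : ℝ) (hδ : 0 < δ) (hβ : 0 < β) (hW : 0 < ∑ z, w z)
    (h1 : (δ - δ * β / 8) * ∑ z, w z ≤ ∑ z, w z * ind (x1 z))
    (h2 : ∑ z, w z * ind (¬ x0 z) * ind (x1 z) ≤ (δ + δ * β / 8 + δ * β / 8) * ∑ z, w z * ind (¬ x0 z))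
    (h3 : β * ∑ z, w z ≤ ∑ z, w z * ind (x0 z ∧ Bs z = univ))
    (h4 : ∀ z, 0 < w z → x0 z → Bs z = univ → ¬ x1 z) :
    ∃ B, δ * β / (2 * Fintype.card (Finset α)) * ∑ z, w z ≤
      ∑ z, w z * ind (x0 z) * ((ind (x1 z) - (δ + δ * β / 8)) * ind (Bs z = B)) := by
  by_contra hcon
  push Not at hcon
  set W := ∑ z, w z with hWd
  set γ := δ * β / 8 with hγ
  have hγ0 : 0 < γ := by positivity
  have hc : (0 : ℝ) < Fintype.card (Finset α) := by exact_mod_cast Fintype.card_pos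
  set q : Finset α → ℝ := fun B => ∑ z, w z * ind (x0 z) * ((ind (x1 z) - (δ + γ)) * ind (Bs z = B)) with hq
  have hsum : ∑ B, q B = ∑ z, w z * ind (x0 z) * (ind (x1 z) - (δ + γ)) := by
    rw [hq, Finset.sum_comm]
    apply Finset.sum_congr rfl
    intro z _
    rw [← Finset.mul_sum, ← Finset.mul_sum]
    have : ∑ B, ind (Bs z = B) = 1 := by
      rw [Finset.sum_eq_single (Bs z)]
      · exact ind_true rfl
      · intro B _ hB; exact ind_false (fun h => hB h.symm)
      · simp
    rw [this, mul_one]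
  have hu : q univ ≤ - ((δ + γ) * (β * W)) := by
    have : q univ = - ((δ + γ) * ∑ z, w z * ind (x0 z ∧ Bs z = univ)) := by
      rw [hq, Finset.mul_sum, ← Finset.sum_neg_distrib]
      apply Finset.sum_congr rfl
      intro z _
      rw [ind_and]
      by_cases hz : 0 < w z
      · by_cases hx : x0 z
        · by_cases hB : Bs z = univ
          · rw [ind_false (h4 z hz hx hB)]; ring
          · rw [ind_false hB]; ring
        · rw [ind_false hx]; ring
      · have : w z = 0 := le_antisymm (not_lt.mp hz) (hw z)
        rw [this]; ring
    rw [this]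
    have : 0 < δ + γ := by positivity
    nlinarith [mul_le_mul_of_nonneg_left h3 this.le]
  have hrest : ∑ B, q B ≤ q univ + δ * β / 2 * W := by
    rw [← Finset.add_sum_erase _ _ (Finset.mem_univ (univ : Finset α))]
    have h5 : ∑ B ∈ univ.erase univ, q B ≤ (univ.erase (univ : Finset α)).card • (δ * β / (2 * Fintype.card (Finset α)) * W) :=
      Finset.sum_le_card_nsmul _ _ _ (fun B _ => (hcon B).le)
    have h6 : ((univ.erase (univ : Finset α)).card : ℝ) ≤ Fintype.card (Finset α) := by
      exact_mod_cast Finset.card_le_univ _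
    rw [nsmul_eq_mul] at h5
    have h7 : (0:ℝ) ≤ δ * β / (2 * Fintype.card (Finset α)) * W := by positivity
    have h8 := mul_le_mul_of_nonneg_right h6 h7
    have h9 : (Fintype.card (Finset α) : ℝ) * (δ * β / (2 * Fintype.card (Finset α)) * W) = δ * β / 2 * W := by
      field_simp
    linarith
  have hQ : -(3 * γ * W) ≤ ∑ B, q B := by
    rw [hsum]
    have e1 : ∑ z, w z * ind (x0 z) * (ind (x1 z) - (δ + γ)) =
        (∑ z, w z * ind (x1 z) - ∑ z, w z * ind (¬ x0 z) * ind (x1 z)) - (δ + γ) * (W - ∑ z, w z * ind (¬ x0 z)) := by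
      rw [hWd, ← Finset.sum_sub_distrib, ← Finset.sum_sub_distrib, Finset.mul_sum, ← Finset.sum_sub_distrib]
      apply Finset.sum_congr rfl
      intro z _
      rw [ind_not]; ring
    rw [e1]
    have h10 : ∑ z, w z * ind (¬ x0 z) ≤ W :=
      Finset.sum_le_sum (fun z _ => mul_le_of_le_one_right (hw z) (ind_le_one _))
    nlinarith
  have : 3 * γ * W = 3 / 8 * (δ * β * W) := by rw [hγ]; ring
  have h11 : 0 < δ * β * W := by positivity
  have h12 : 0 < γ * β * W := by positivity
  nlinarith

/-- the word witnessing a line -/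
def dbl {α : Type} (t : List (Option α)) : List (Option (Option α)) := t.map (Option.map some)

theorem sb_dbl_none {α : Type} (t : List (Option α)) : sb (dbl t) none = t := by
  induction t with
  | nil => rfl
  | cons o t ih => cases o <;> simp_all [dbl]

theorem sb_dbl_some {α : Type} (t : List (Option α)) (j : α) : sb (dbl t) (some j) = (sb t j).map some := by
  induction t with
  | nil => rfl
  | cons o t ih => cases o <;> simp_all [dbl]

theorem stepA {α : Type} [Fintype α] [DecidableEq α] (hα : ∀ m δ, 0 < δ → DCS α m δ) (δ β : ℝ)
    (hδ : 0 < δ) (hδ1 : δ ≤ 1) (hβ : 0 < β) (hβ1 : β ≤ 1) (hK : DCS (Option α) 1 (δ + δ * β / 8)) :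
    ∃ n : ℕ, ∀ (Ω : Type) [Fintype Ω] (μ : Ω → ℝ) (X : List (Option α) → Ω → Prop),
      (∀ ω, 0 ≤ μ ω) → 0 < ∑ ω, μ ω →
      (∀ t : List (Option α), t.length ≤ n → (δ - δ * β / 8) * ∑ ω, μ ω ≤ ∑ ω, μ ω * ind (X (none :: t) ω)) →
      (∀ t : List (Option α), t.length ≤ n → β * ∑ ω, μ ω ≤
        ∑ ω, μ ω * ind (X [] ω ∧ ∀ j : α, X (some j :: (sb t j).map some) ω)) →
      ∃ φ, Emb φ ∧ ∃ ω, 0 < μ ω ∧ ∀ y, y.length ≤ 1 → X (φ y) ω := by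
  have hγ0 : 0 < δ * β / 8 := by positivity
  obtain ⟨mU, hU⟩ := dcsl hK hγ0
  obtain ⟨Np, hNp⟩ := hK
  set γ := δ * β / 8 with hγ
  have hc : (0 : ℝ) < Fintype.card (Finset α) := by exact_mod_cast Fintype.card_pos
  set b : ℝ := δ * β / (2 * Fintype.card (Finset α)) / 2 with hb
  have hb0 : 0 < b := by positivity
  obtain ⟨Nit, hit⟩ := it hα univ Np (b / 2) (by positivity)
  obtain ⟨mN, hmN⟩ := ni (α := Option α) Nit (b / 2) (by positivity)
  set n := mU + Fintype.card (Finset α) * (mN + 1) with hn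
  refine ⟨n, ?_⟩
  intro Ω _ μ X hμ htot hd hD
  by_contra hwin
  -- wins through an embedding starting with `none`
  have hwin1 : ∀ ψ : List (Option α) → List (Option α), Emb ψ → ∀ ω, 0 < μ ω →
      ¬ ∀ y, y.length ≤ 1 → X (none :: ψ y) ω := by
    intro ψ hψ ω hω hall
    exact hwin ⟨fun y => [none] ++ ψ y, (Emb.pfx [none]).comp hψ, ω, hω, hall⟩
  have hline : ∀ t ω, 0 < μ ω → X [] ω → (∀ j : α, X (some j :: (sb t j).map some) ω) → ¬ X (none :: t) ω := by
    intro t ω hω h0 h1 h2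
    refine hwin ⟨ev [dbl t], Emb.ev _, ω, hω, ?_⟩
    intro y hy
    match y, hy with
    | [], _ => simpa using h0
    | [none], _ => simpa [sb_dbl_none] using h2
    | [some j], _ => simpa [sb_dbl_some] using h1 j
    | _ :: _ :: _, hy => simp at hy
  let S := Fin n → Option α
  let tk : Fin n → S → List (Option α) := fun l s => (List.ofFn s).take l
  have htkl : ∀ l s, (tk l s).length ≤ n := by
    intro l s; simp [tk]
  have hS : (0 : ℝ) < Fintype.card S := by exact_mod_cast Fintype.card_pos
  -- averaging a pointwise bound
  have havg : ∀ (l : Fin n) (c : ℝ) (g : List (Option α) → Ω → ℝ),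
      (∀ t : List (Option α), t.length ≤ n → c * ∑ ω, μ ω ≤ ∑ ω, μ ω * g t ω) →
      c * ∑ z : Ω × S, μ z.1 ≤ ∑ z : Ω × S, μ z.1 * g (tk l z.2) z.1 := by
    intro l c g hg
    rw [Fintype.sum_prod_type_right, Fintype.sum_prod_type_right, Finset.mul_sum]
    exact Finset.sum_le_sum (fun s _ => hg _ (htkl l s))
  let μ0 : Ω → ℝ := fun ω => μ ω * ind (X [] ω)
  let μc : Ω → ℝ := fun ω => μ ω * ind (¬ X [] ω)
  have hμ0 : ∀ ω, 0 ≤ μ0 ω := fun ω => mul_nonneg (hμ ω) (ind_nonneg _)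
  have hμc : ∀ ω, 0 ≤ μc ω := fun ω => mul_nonneg (hμ ω) (ind_nonneg _)
  have hmuzp : ∀ ω, 0 < μ0 ω → 0 < μ ω := by
    intro ω h
    rcases (hμ ω).lt_or_eq with h' | h'
    · exact h'
    · simp [μ0, ← h'] at h
  have hμcp : ∀ ω, 0 < μc ω → 0 < μ ω := by
    intro ω h
    rcases (hμ ω).lt_or_eq with h' | h'
    · exact h'
    · simp [μc, ← h'] at h
  have hle0 : ∑ ω, μ0 ω ≤ ∑ ω, μ ω :=
    Finset.sum_le_sum (fun ω _ => mul_le_of_le_one_right (hμ ω) (ind_le_one _))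
  have htot0 : 0 < ∑ ω, μ0 ω := by
    refine lt_of_lt_of_le (mul_pos hβ htot) ((hD [] (by simp)).trans ?_)
    exact Finset.sum_le_sum (fun ω _ => mul_le_mul_of_nonneg_left (ind_mono (fun h => h.1)) (hμ ω))
  classical
  let bad : Finset (Fin n) := univ.filter (fun l => ¬ (∑ z : Ω × S, μc z.1 * ind (X (none :: tk l z.2) z.1) ≤
    (δ + γ + γ) * ∑ z : Ω × S, μc z.1))
  have hbad : bad.card ≤ mU := by
    by_contra hcard
    push Not at hcard
    by_cases hz : 0 < ∑ ω, μc ω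
    · obtain ⟨φ, hφ, ω, hω, hall⟩ := hU Ω μc (fun t ω => X (none :: t) ω) n bad hμc hz hcard.le (fun l hl => by
        have := (Finset.mem_filter.mp hl).2
        exact (not_le.mp this).le)
      exact hwin1 φ hφ ω (hμcp ω hω) hall
    · have h0 : ∀ ω, μc ω = 0 := by
        have : ∑ ω, μc ω = 0 := le_antisymm (not_lt.mp hz) (Finset.sum_nonneg (fun ω _ => hμc ω))
        intro ω
        exact (Finset.sum_eq_zero_iff_of_nonneg (fun ω _ => hμc ω)).mp this ω (Finset.mem_univ _)
      have : bad = ∅ := by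
        apply Finset.filter_eq_empty_iff.mpr
        intro l _
        simp [h0]
      rw [this] at hcard
      simp at hcard
  let Bs : List (Option α) → Ω → Finset α := fun t ω => univ.filter (fun j => X (some j :: (sb t j).map some) ω)
  have hBs : ∀ t ω, Bs t ω = univ ↔ ∀ j : α, X (some j :: (sb t j).map some) ω := by
    intro t ω
    simp [Bs, Finset.filter_eq_self]
  have hgood : ∀ l ∈ badᶜ, ∃ B, δ * β / (2 * Fintype.card (Finset α)) * ∑ z : Ω × S, μ z.1 ≤
      ∑ z : Ω × S, μ z.1 * ind (X [] z.1) * ((ind (X (none :: tk l z.2) z.1) - (δ + γ)) * ind (Bs (tk l z.2) z.1 = B)) := by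
    intro l hl
    refine level_split (fun z : Ω × S => μ z.1) (fun z => hμ _) (fun z => X [] z.1) (fun z => X (none :: tk l z.2) z.1)
      (fun z => Bs (tk l z.2) z.1) δ β hδ hβ ?_ ?_ ?_ ?_ ?_
    · rw [sum_fst]; exact mul_pos hS htot
    · exact havg l _ (fun t ω => ind (X (none :: t) ω)) hd
    · simpa [bad] using hl
    · refine havg l _ (fun t ω => ind (X [] ω ∧ Bs t ω = univ)) (fun t ht => ?_)
      simp only [hBs]
      exact hD t ht
    · intro z hz h0 h1
      exact hline _ _ hz h0 ((hBs _ _).mp h1)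
  choose! Bl hBl using hgood
  obtain ⟨B, -, hB⟩ : ∃ B ∈ (univ : Finset (Finset α)), mN < ((badᶜ).filter (fun l => Bl l = B)).card := by
    apply Finset.exists_lt_card_fiber_of_mul_lt_card_of_maps_to (fun _ _ => Finset.mem_univ _)
    rw [Finset.card_compl, Fintype.card_fin]
    have : Fintype.card (Finset α) * (mN + 1) = Fintype.card (Finset α) * mN + Fintype.card (Finset α) := by ring
    have h2 : 0 < Fintype.card (Finset α) := Fintype.card_pos
    show Fintype.card (Finset α) * mN < _
    omega
  let f : List (Option α) → Ω → ℝ := fun t ω => (ind (X (none :: t) ω) - (δ + γ)) / 2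
  have hγ1 : γ ≤ 1 := by rw [hγ]; nlinarith
  have hf : ∀ t ω, |f t ω| ≤ 1 := by
    intro t ω
    have := ind_nonneg (X (none :: t) ω)
    have := ind_le_one (X (none :: t) ω)
    rw [abs_le]
    constructor <;> simp only [f] <;> linarith
  let G : α → List (Option α) → Ω → Prop := fun j t ω => (j ∈ B ↔ X (some j :: (sb t j).map some) ω)
  have hG : ∀ t ω, Bs t ω = B ↔ ∀ j ∈ (univ : Finset α), G j t ω := by
    intro t ω
    simp only [Finset.ext_iff, Bs, Finset.mem_filter, Finset.mem_univ, true_and, G, true_implies]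
    exact forall_congr' (fun j => Iff.comm)
  obtain ⟨P, hP1, hP2, hP3⟩ := hmN n ((badᶜ).filter (fun l => Bl l = B)) hB.le μ0 hμ0
    (fun t ω => f t ω * ind (∀ j ∈ (univ : Finset α), G j t ω)) (by
      intro t ω
      rw [abs_mul, abs_of_nonneg (ind_nonneg _)]
      exact mul_le_one₀ (hf t ω) (ind_nonneg _) (ind_le_one _)) b (by
      intro l hl
      obtain ⟨hl1, hl2⟩ := Finset.mem_filter.mp hl
      have h1 := hBl l hl1
      rw [hl2] at h1
      have h2 : ∑ z : Ω × S, μ0 z.1 ≤ ∑ z : Ω × S, μ z.1 := by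
        rw [sum_fst, sum_fst]; exact mul_le_mul_of_nonneg_left hle0 hS.le
      have h3 : ∑ z : Ω × S, μ z.1 * ind (X [] z.1) * ((ind (X (none :: tk l z.2) z.1) - (δ + γ)) * ind (Bs (tk l z.2) z.1 = B))
          = 2 * ∑ z : Ω × S, μ0 z.1 * (f (tk l z.2) z.1 * ind (∀ j ∈ (univ : Finset α), G j (tk l z.2) z.1)) := by
        rw [Finset.mul_sum]
        apply Finset.sum_congr rfl
        intro z _
        rw [ind_congr (hG _ _)]
        simp only [μ0, f]; ring
      rw [h3] at h1
      have h4 := mul_le_mul_of_nonneg_left h2 hb0.le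
      have h5 : δ * β / (2 * Fintype.card (Finset α)) = 2 * b := by rw [hb]; ring
      rw [h5] at h1
      have h6 : b * ∑ z : Ω × S, μ0 z.1 ≤
        ∑ z : Ω × S, μ0 z.1 * (f (tk l z.2) z.1 * ind (∀ j ∈ (univ : Finset α), G j (tk l z.2) z.1)) := by linarith
      exact h6)
  obtain ⟨Ω', _, μ', Φ, φ, h1, h2, h3, h4, h5⟩ := hit (Ω × S) (fun z => μ0 z.1) (fun y z => f (te P z.2 y) z.1)
    (fun j y z => G j (te P z.2 y) z.1) (fun z => hμ0 _) (by rw [sum_fst]; exact mul_pos hS htot0)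
    (fun t z => hf _ _) (by
      intro j t t' htt z hGt
      have : sb (te P z.2 t) j = sb (te P z.2 t') j := (te_emb P hP1 z.2).ins' _ t t' htt
      simp only [G] at hGt ⊢
      rwa [← this]) (by
      intro t ht
      have := hP3 t ht
      have e : b - b / 2 = b / 2 := by ring
      rwa [e] at this)
  obtain ⟨ψ, hψ, ω', hω', hall⟩ := hNp Ω' μ' (fun y ω => X (none :: te P (Φ ω).2 (φ ω y)) (Φ ω).1) h1 h2 (by
    intro t ht
    have := h5 t ht
    have e : ∑ ω, μ' ω * f (te P (Φ ω).2 (φ ω t)) (Φ ω).1 =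
      (∑ ω, μ' ω * ind (X (none :: te P (Φ ω).2 (φ ω t)) (Φ ω).1) - (δ + γ) * ∑ ω, μ' ω) / 2 := by
      rw [Finset.mul_sum, ← Finset.sum_sub_distrib, Finset.sum_div]
      apply Finset.sum_congr rfl
      intro ω _
      simp only [f]; ring
    rw [e] at this
    linarith)
  exact hwin1 (fun y => te P (Φ ω').2 (φ ω' (ψ y))) ((te_emb P hP1 _).comp ((h3 ω').comp hψ)) (Φ ω').1
    (hmuzp _ (h4 ω' hω')) hall

end DCSP


namespace DCSP
open Finset

theorem tl_bound {α : Type} (c : List α) (us : List (List (Option α))) (y : List α) (h : y.length ≤ us.length) :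
    (c ++ ev us y).length ≤ tl c us := by
  have := ev_len_le us y h
  simp only [List.length_append, tl]
  omega

theorem tl_lft {α β : Type} (h : α → β) (c : List α) (us : List (List (Option α))) :
    tl (c.map h) (lft h us) = tl c us := by
  simp only [tl, lft, List.length_map, List.map_map]
  congr 3
  funext u
  simp

theorem root_line {α : Type} {φ : List α → List α} {N1 : ℕ} (hφ : Emb φ)
    (hφl : ∀ y, y.length ≤ 1 → (φ y).length ≤ N1) :
    ∃ u : List (Option α), (∀ a, φ [a] = φ [] ++ a :: sb u a) ∧ (φ []).length + 1 + u.length ≤ N1 + 1 := by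
  obtain ⟨u, hu⟩ := hφ.line 0 []
  have hu' : ∀ a, φ [a] = φ [] ++ a :: sb u a := fun a => by simpa using hu [] rfl a
  have h0 := hφl [] (by simp)
  by_cases hne : Nonempty α
  · obtain ⟨a⟩ := hne
    refine ⟨u, hu', ?_⟩
    have := hφl [a] (by simp)
    rw [hu' a] at this
    simp at this
    omega
  · exact ⟨[], fun a => (hne ⟨a⟩).elim, by simpa using h0⟩

theorem ev_snoc {α : Type} (us : List (List (Option α))) : ∀ (x : List α) (a : α), x.length = us.length →
    ev us (x ++ [a]) = ev us x ++ [a] := by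
  induction us with
  | nil => intro x a h; simp
  | cons u us ih =>
    intro x a h
    cases x with
    | nil => simp at h
    | cons b x => simp [ih x a (by simpa using h)]

theorem stepB {α : Type} [Fintype α] [DecidableEq α] (hα : ∀ m δ, 0 < δ → DCS α m δ) (δ : ℝ)
    (hδ : 0 < δ) (hδ1 : δ ≤ 1) (hK : ∀ γ, 0 < γ → DCS (Option α) 1 (δ + γ)) :
    ∃ η, 0 < η ∧ DCS (Option α) 1 (δ - η) := by
  obtain ⟨N1, β, hβ, hβ1, hN1⟩ := dcsp (α := α) (m := 1) (δ := δ / 2) (by positivity) (hα 1 _ (by positivity))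
  have hγ0 : 0 < δ * β / 8 := by positivity
  obtain ⟨n, hn⟩ := stepA hα δ β hδ hδ1 hβ hβ1 (hK _ hγ0)
  obtain ⟨Nc, hNc⟩ := car_fin α (n + 1) (N1 + 1)
  refine ⟨δ * β / 8, hγ0, Nc, ?_⟩
  intro Ω _ μ X hμ htot hX
  have hsmall : δ / 2 ≤ δ - δ * β / 8 := by nlinarith
  rcases hNc (fun c h => β * ∑ ω, μ ω ≤ ∑ ω, μ ω * ind (X (c.map some) ω ∧ ∀ a : α, X ((h a).map some) ω)) with
    ⟨c, us, ⟨hlen, hM⟩, htl⟩ | ⟨c, us, ⟨hlen, hM⟩, htl⟩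
  · let Θ : List (Option α) → List (Option α) := fun z => c.map some ++ ev (lft some us) z
    have hΘ : Emb Θ := Emb.tmpl _ _
    have hΘι : ∀ y : List α, Θ (y.map some) = (c ++ ev us y).map some := by
      intro y
      simp only [Θ, ev_lft, List.map_append]
    have hΘl : ∀ z : List (Option α), z.length ≤ n + 1 → (Θ z).length ≤ Nc := by
      intro z hz
      refine (tl_bound _ _ z (by simp [lft]; omega)).trans ?_
      rw [tl_lft]; exact htl
    obtain ⟨φ, hφ, ω, hω, hall⟩ := hn Ω μ (fun z => X (Θ z)) hμ htot
      (fun t ht => hX _ (hΘl _ (by simpa using ht))) (by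
        intro t ht
        have := hM [] t (by simp; omega)
        refine this.trans (Finset.sum_le_sum (fun ω _ => mul_le_mul_of_nonneg_left (ind_mono ?_) (hμ ω)))
        rintro ⟨h1, h2⟩
        refine ⟨?_, fun j => ?_⟩
        · have := hΘι []
          rw [List.map_nil] at this
          rw [this]; exact h1
        · have := hΘι (j :: sb t j)
          rw [List.map_cons] at this
          rw [this]; exact h2 j)
    exact ⟨fun y => Θ (φ y), hΘ.comp hφ, ω, hω, hall⟩
  · exfalso
    obtain ⟨φ, hφ, hφl, hp⟩ := hN1 Ω μ (fun y => X ((c ++ ev us y).map some)) hμ htot (by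
      intro t ht
      refine le_trans ?_ (hX _ ?_)
      · exact mul_le_mul_of_nonneg_right hsmall htot.le
      · rw [List.length_map]
        exact (tl_bound _ _ t (by omega)).trans htl)
    obtain ⟨u, hu1, hu2⟩ := root_line hφ hφl
    apply hM (φ []) u hu2
    refine hp.trans (Finset.sum_le_sum (fun ω _ => mul_le_mul_of_nonneg_left (ind_mono ?_) (hμ ω)))
    intro h
    refine ⟨h [] (by simp), fun a => ?_⟩
    beta_reduce
    rw [← hu1 a]
    exact h [a] (by simp)

theorem P1 {α : Type} [Fintype α] [DecidableEq α] (hα : ∀ m δ, 0 < δ → DCS α m δ) :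
    ∀ δ, 0 < δ → DCS (Option α) 1 δ := by
  let S : Set ℝ := {δ | 0 < δ ∧ DCS (Option α) 1 δ}
  have hbig : ∀ δ, 1 < δ → δ ∈ S := by
    intro δ hδ
    refine ⟨by linarith, 0, ?_⟩
    intro Ω _ μ X hμ htot hX
    exfalso
    have h1 := hX [] (by simp)
    have h2 : ∑ ω, μ ω * ind (X [] ω) ≤ ∑ ω, μ ω :=
      Finset.sum_le_sum (fun ω _ => mul_le_of_le_one_right (hμ ω) (ind_le_one _))
    nlinarith
  have hbdd : BddBelow S := ⟨0, fun x hx => hx.1.le⟩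
  have hne : S.Nonempty := ⟨2, hbig 2 (by norm_num)⟩
  have h0 : 0 ≤ sInf S := le_csInf hne (fun x hx => hx.1.le)
  have h1 : sInf S ≤ 1 := by
    apply le_of_forall_pos_le_add
    intro ε hε
    exact csInf_le hbdd (hbig _ (by linarith))
  have hup : ∀ δ, sInf S < δ → DCS (Option α) 1 δ := by
    intro δ hδ
    obtain ⟨x, hx, hxδ⟩ := exists_lt_of_csInf_lt hne hδ
    exact hx.2.mono hxδ.le
  intro δ hδ
  rcases h0.lt_or_eq with hpos | hz
  · obtain ⟨η, hη, h⟩ := stepB hα (sInf S) hpos h1 (fun γ hγ => hup _ (by linarith))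
    by_cases hs : 0 < sInf S - η
    · have := csInf_le hbdd (show sInf S - η ∈ S from ⟨hs, h⟩)
      linarith
    · exact h.mono (by linarith)
  · exact hup δ (by rw [← hz]; exact hδ)

theorem Pm {α : Type} [Fintype α] (h1 : ∀ δ, 0 < δ → DCS α 1 δ) (m : ℕ) : ∀ δ, 0 < δ → DCS α m δ := by
  induction m with
  | zero =>
    intro δ hδ
    refine ⟨0, ?_⟩
    intro Ω _ μ X hμ htot hX
    have h := lt_of_lt_of_le (mul_pos hδ htot) (hX [] (by simp))
    obtain ⟨ω, -, hω⟩ := Finset.exists_lt_of_sum_lt (s := univ) (f := fun _ : Ω => (0:ℝ)) (by simpa using h)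
    have hp : 0 < μ ω := by
      rcases (hμ ω).lt_or_eq with h | h
      · exact h
      · simp [← h] at hω
    refine ⟨fun y => y, Emb.id, ω, hp, ?_⟩
    intro y hy
    obtain rfl := List.length_eq_zero_iff.mp (Nat.le_zero.mp hy)
    exact ind_pos (pos_of_mul_pos_right hω hp.le)
  | succ m ih =>
    intro δ hδ
    obtain ⟨N1, p, hp, hp1, hN1⟩ := dcsp (α := α) (m := 1) hδ (h1 _ (by positivity))
    obtain ⟨n, hn⟩ := ih p hp
    obtain ⟨Nc, hNc⟩ := car_fin α (n + 1) (N1 + 1)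
    refine ⟨Nc, ?_⟩
    intro Ω _ μ X hμ htot hX
    rcases hNc (fun c h => p * ∑ ω, μ ω ≤ ∑ ω, μ ω * ind (X c ω ∧ ∀ a : α, X (h a) ω)) with
      ⟨c, us, ⟨hlen, hM⟩, htl⟩ | ⟨c, us, ⟨hlen, hM⟩, htl⟩
    · obtain ⟨ψ, hψ, ω, hω, hall⟩ := hn Ω μ
        (fun y ω => X (c ++ ev us y) ω ∧ ∀ a : α, X (c ++ ev us (y ++ a :: sb [] a)) ω) hμ htot
        (fun t ht => hM t [] (by simpa using ht))
      obtain ⟨vs, hvs, hψv⟩ := hψ.exists_tmpl m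
      refine ⟨fun y => c ++ ev us (ψ [] ++ ev vs y), (Emb.tmpl c us).comp (Emb.tmpl _ _), ω, hω, ?_⟩
      intro y hy
      beta_reduce
      by_cases hy' : y.length ≤ m
      · rw [← hψv y hy']
        exact (hall y hy').1
      · have hym : y ≠ [] := by rintro rfl; simp at hy'
        obtain ⟨x, a, rfl⟩ : ∃ x a, y = x ++ [a] := ⟨y.dropLast, y.getLast hym, (List.dropLast_append_getLast hym).symm⟩
        have hx : x.length = m := by simp at hy hy'; omega
        rw [ev_snoc vs x a (hx.trans hvs.symm), ← List.append_assoc, ← hψv x hx.le]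
        exact (hall x hx.le).2 a
    · exfalso
      obtain ⟨φ, hφ, hφl, hp⟩ := hN1 Ω μ (fun y => X (c ++ ev us y)) hμ htot (by
        intro t ht
        exact hX _ ((tl_bound _ _ t (by omega)).trans htl))
      obtain ⟨u, hu1, hu2⟩ := root_line hφ hφl
      apply hM (φ []) u hu2
      refine hp.trans (Finset.sum_le_sum (fun ω _ => mul_le_mul_of_nonneg_left (ind_mono ?_) (hμ ω)))
      intro h
      refine ⟨h [] (by simp), fun a => ?_⟩
      beta_reduce
      rw [← hu1 a]
      exact h [a] (by simp)

theorem DCS.transport {α β : Type} (e : α ≃ β) {m : ℕ} {δ : ℝ} (h : DCS α m δ) : DCS β m δ := by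
  obtain ⟨N, hN⟩ := h
  refine ⟨N, ?_⟩
  intro Ω _ μ X hμ htot hX
  obtain ⟨φ, hφ, ω, hω, hall⟩ := hN Ω μ (fun y => X (y.map e)) hμ htot (fun t ht => hX _ (by simpa using ht))
  obtain ⟨us, hus, hφu⟩ := hφ.exists_tmpl m
  refine ⟨fun y => (φ []).map e ++ ev (lft e us) y, Emb.tmpl _ _, ω, hω, ?_⟩
  intro y hy
  have h1 := hall (y.map e.symm) (by simpa using hy)
  have h2 : (y.map e.symm).map e = y := by simp
  rw [hφu _ (by simpa using hy), List.map_append, ← ev_lft, h2] at h1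
  exact h1

theorem dcs_all (n : ℕ) : ∀ m δ, 0 < δ → DCS (Fin n) m δ := by
  induction n with
  | zero =>
    intro m δ hδ
    refine Pm (α := Fin 0) (fun δ hδ => ?_) m δ hδ
    · refine ⟨0, ?_⟩
      intro Ω _ μ X hμ htot hX
      have h := lt_of_lt_of_le (mul_pos hδ htot) (hX [] (by simp))
      obtain ⟨ω, -, hω⟩ := Finset.exists_lt_of_sum_lt (s := univ) (f := fun _ : Ω => (0:ℝ)) (by simpa using h)
      have hp : 0 < μ ω := by
        rcases (hμ ω).lt_or_eq with h | h
        · exact h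
        · simp [← h] at hω
      refine ⟨fun y => y, Emb.id, ω, hp, ?_⟩
      intro y hy
      match y with
      | [] => exact ind_pos (pos_of_mul_pos_right hω hp.le)
      | a :: _ => exact a.elim0
  | succ n ih =>
    have h := P1 ih
    intro m
    apply Pm
    intro δ hδ
    exact (h δ hδ).transport (finSuccEquiv n).symm

theorem dcs_fin (α : Type) [Finite α] (m : ℕ) (δ : ℝ) (hδ : 0 < δ) : DCS α m δ := by
  obtain ⟨n, ⟨e⟩⟩ := Finite.exists_equiv_fin α
  exact (dcs_all n m δ hδ).transport e.symm

end DCSP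


namespace DCSP
open Finset

/-- flattening words over words -/
def fl {k T : ℕ} (t : List (Fin T → Fin k)) : List (Fin k) := t.flatMap List.ofFn

theorem fl_append {k T : ℕ} (t t' : List (Fin T → Fin k)) : fl (t ++ t') = fl t ++ fl t' := by
  simp [fl]

theorem fl_surj {k T : ℕ} (q : ℕ) : ∀ w : List (Fin k), w.length = T * q →
    ∃ t : List (Fin T → Fin k), t.length = q ∧ fl t = w := by
  induction q with
  | zero =>
    intro w hw
    obtain rfl := List.length_eq_zero_iff.mp (by simpa using hw)
    exact ⟨[], rfl, rfl⟩
  | succ q ih =>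
    intro w hw
    have hT : T ≤ w.length := by rw [hw, Nat.mul_succ]; omega
    obtain ⟨t, ht, hf⟩ := ih (w.drop T) (by rw [List.length_drop, hw, Nat.mul_succ]; omega)
    refine ⟨(fun i => w[i.1]'(by omega)) :: t, by simp [ht], ?_⟩
    have h1 : List.ofFn (fun i : Fin T => w[i.1]'(by omega)) = w.take T := by
      apply List.ext_getElem
      · simp [hT]
      · intro i h1 h2; simp
    have h2 : ∀ b, fl (b :: t) = List.ofFn b ++ fl t := fun b => by simp [fl]
    rw [h2, h1, hf, List.take_append_drop]

theorem sum_take {β : Type} [Fintype β] (n q : ℕ) (hq : q ≤ n) (h : List β → ℝ) :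
    ∑ s : Fin n → β, h ((List.ofFn s).take q) =
      (Fintype.card β : ℝ) ^ (n - q) * ∑ s : Fin q → β, h (List.ofFn s) := by
  obtain ⟨d, rfl⟩ := Nat.exists_eq_add_of_le hq
  rw [← (Fin.appendEquiv (α := β) q d).sum_comp, Fintype.sum_prod_type]
  have : ∀ (a : Fin q → β) (b : Fin d → β),
      (List.ofFn (Fin.appendEquiv q d (a, b))).take q = List.ofFn a := by
    intro a b
    have e : Fin.appendEquiv q d (a, b) = Fin.append a b := rfl
    rw [e, List.ofFn_fin_append, List.take_left' (by simp)]
  simp only [this, Finset.sum_const, Finset.card_univ, nsmul_eq_mul, ← Finset.mul_sum]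
  simp

theorem level_dens {k T r q : ℕ} (A : Set (List (Fin k))) :
    (Set.ncard {x ∈ A | x.length = r + T * q} : ℝ) ≤
      ∑ x : Fin r → Fin k, ∑ s : Fin q → (Fin T → Fin k), ind (List.ofFn x ++ fl (List.ofFn s) ∈ A) := by
  classical
  rw [← Fintype.sum_prod_type']
  let g : (Fin r → Fin k) × (Fin q → (Fin T → Fin k)) → List (Fin k) := fun z => List.ofFn z.1 ++ fl (List.ofFn z.2)
  let B : Finset ((Fin r → Fin k) × (Fin q → (Fin T → Fin k))) := univ.filter (fun z => g z ∈ A)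
  have h1 : ∑ z : (Fin r → Fin k) × (Fin q → (Fin T → Fin k)), ind (List.ofFn z.1 ++ fl (List.ofFn z.2) ∈ A) = B.card := by
    rw [Finset.card_filter]
    push_cast
    apply Finset.sum_congr rfl
    intro z _
    unfold ind
    simp [g]
  rw [h1]
  have h2 : {x ∈ A | x.length = r + T * q} ⊆ (↑(B.image g) : Set (List (Fin k))) := by
    rintro w ⟨hw, hl⟩
    obtain ⟨t, ht, hf⟩ := fl_surj (T := T) q (w.drop r) (by rw [List.length_drop, hl]; omega)
    subst ht
    rw [Finset.coe_image]
    have e1 : List.ofFn (fun i : Fin r => w[i.1]'(by omega)) = w.take r := by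
      apply List.ext_getElem
      · simp; omega
      · intro i h1 h2; simp
    have e : g (fun i : Fin r => w[i.1]'(by omega), fun i => t[i.1]) = w := by
      simp only [g, e1]
      rw [show List.ofFn (fun i : Fin t.length => t[i.1]) = t from List.ofFn_getElem, hf, List.take_append_drop]
    refine ⟨_, ?_, e⟩
    simp only [B, Finset.coe_filter, Finset.mem_univ, true_and, Set.mem_setOf_eq, e]
    exact hw
  have h3 := Set.ncard_le_ncard h2 (Finset.finite_toSet _)
  rw [Set.ncard_coe_finset] at h3
  exact_mod_cast h3.trans Finset.card_image_le

/-- padded patterns -/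
def pad {k : ℕ} (a0 : Fin k) (T : ℕ) (p : VWord k) : Fin T → Option (Fin k) := fun i => (p[i.1]?).getD (some a0)

theorem pad_pfx {k : ℕ} (a0 : Fin k) (T : ℕ) (p : VWord k) (h : p.length ≤ T) : p <+: List.ofFn (pad a0 T p) := by
  rw [List.prefix_iff_eq_take]
  apply List.ext_getElem
  · simp [h]
  · intro i h1 h2
    simp [pad, h1]

/-- value of a padded pattern -/
def pv {k : ℕ} (a0 : Fin k) (T : ℕ) (p : VWord k) (a : Fin k) : Fin T → Fin k := fun i => (pad a0 T p i).getD a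

theorem subst_pad {k : ℕ} (a0 : Fin k) (T : ℕ) (p : VWord k) (a : Fin k) :
    subst (List.ofFn (pad a0 T p)) a = List.ofFn (pv a0 T p a) := by
  simp only [subst, List.map_ofFn]
  rfl

/-- the final variable words -/
def fw {k : ℕ} (a0 : Fin k) (T : ℕ) (p : VWord k) (u : List (Option (Fin T → Fin k))) : VWord k :=
  u.flatMap (fun o => List.ofFn (o.elim (pad a0 T p) (fun b i => some (b i))))

theorem subst_fw {k : ℕ} (a0 : Fin k) (T : ℕ) (p : VWord k) (u : List (Option (Fin T → Fin k))) (a : Fin k) :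
    subst (fw a0 T p u) a = fl (sb u (pv a0 T p a)) := by
  induction u with
  | nil => rfl
  | cons o u ih =>
    have e1 : fw a0 T p (o :: u) = List.ofFn (o.elim (pad a0 T p) (fun b i => some (b i))) ++ fw a0 T p u := by
      simp [fw]
    have e2 : ∀ w w' : VWord k, subst (w ++ w') a = subst w a ++ subst w' a := fun w w' => by simp [subst]
    have e3 : ∀ b (t : List (Fin T → Fin k)), fl (b :: t) = List.ofFn b ++ fl t := fun b t => by simp [fl]
    rw [e1, e2, ih]
    cases o with
    | none => rw [sb_none, e3, ← subst_pad]; rfl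
    | some b =>
      rw [sb_some, e3]
      congr 1
      simp only [subst, List.map_ofFn, Option.elim]
      rfl

end DCSP


/-- The finite density theorem for variable words of prescribed patterns:
here `τ 0, …, τ (m-1)` are the prescribed lengths of the patterns `p 0, …, p (m-1)`,
and `(wₙ)_{n<m}` is of pattern `(pₙ)_{n<m}` means `pₙ <+: wₙ` for every `n < m`. -/
theorem finite_density_carlson_simpson_pattern (k m : ℕ) (hk : 2 ≤ k) (hm : 1 ≤ m)
    (τ : ℕ → ℕ) (hτ : ∀ n < m, 1 ≤ τ n) (δ : ℝ) (hδ0 : 0 < δ) (hδ1 : δ ≤ 1) :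
    ∃ N : ℕ, ∀ p : ℕ → VWord k, (∀ n < m, IsVar (p n) ∧ (p n).length = τ n) →
      ∀ L : Finset ℕ, N ≤ L.card → ∀ A : Set (Word k),
        (∀ ℓ ∈ L, δ ≤ dens k ℓ A) →
        ∃ (c : Word k) (w : ℕ → VWord k),
          (∀ n < m, IsVar (w n) ∧ p n <+: w n) ∧ csSet c m w ⊆ A := by
  classical
  set T := ∑ n ∈ Finset.range m, τ n with hT
  have hτT : ∀ n < m, τ n ≤ T := fun n hn =>
    Finset.single_le_sum (f := τ) (fun _ _ => Nat.zero_le _) (Finset.mem_range.mpr hn)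
  have hT1 : 1 ≤ T := (hτ 0 hm).trans (hτT 0 hm)
  let a0 : Fin k := ⟨0, by omega⟩
  have : Nonempty (Fin T → Fin k) := ⟨fun _ => a0⟩
  obtain ⟨m0, hm0⟩ := DCSP.dcsl (DCSP.dcs_fin (Fin T → Fin k) m (δ / 2) (by positivity)) (half_pos hδ0)
  refine ⟨T * m0 + 1, ?_⟩
  intro p hp L hL A hA
  obtain ⟨r, hr, hrc⟩ : ∃ r ∈ Finset.range T, m0 < (L.filter (fun ℓ => ℓ % T = r)).card := by
    apply Finset.exists_lt_card_fiber_of_mul_lt_card_of_maps_to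
    · intro ℓ _; exact Finset.mem_range.mpr (Nat.mod_lt _ hT1)
    · rw [Finset.card_range]; omega
  set n := L.sup id + 1 with hn
  let C : Finset (Fin n) := Finset.univ.filter (fun q => r + T * q.1 ∈ L)
  have hC : m0 ≤ C.card := by
    refine hrc.le.trans ?_
    have hlt : ∀ ℓ ∈ L, ℓ / T < n := by
      intro ℓ hℓ
      have h1 : ℓ ≤ L.sup id := Finset.le_sup (f := id) hℓ
      have h2 := Nat.div_le_self ℓ T
      omega
    refine Finset.card_le_card_of_injOn (fun ℓ => if h : ℓ / T < n then ⟨ℓ / T, h⟩ else ⟨0, by omega⟩) ?_ ?_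
    · intro ℓ hℓ
      obtain ⟨h1, h2⟩ := Finset.mem_filter.mp hℓ
      simp only [hlt ℓ h1, dif_pos]
      simp only [C, Finset.coe_filter, Finset.mem_univ, true_and, Set.mem_setOf_eq]
      rw [← h2, Nat.mod_add_div]
      exact h1
    · intro ℓ hℓ ℓ' hℓ' e
      obtain ⟨h1, h2⟩ := Finset.mem_filter.mp hℓ
      obtain ⟨h1', h2'⟩ := Finset.mem_filter.mp hℓ'
      simp only [hlt ℓ h1, hlt ℓ' h1', dif_pos, Fin.mk.injEq] at e
      rw [← Nat.mod_add_div ℓ T, ← Nat.mod_add_div ℓ' T, h2, h2', e]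
  have hk0 : (0 : ℝ) < k := by exact_mod_cast (by omega : 0 < k)
  obtain ⟨φ, hφ, x, -, hall⟩ := hm0 (Fin r → Fin k) (fun _ => 1)
    (fun t x => List.ofFn x ++ DCSP.fl t ∈ A) n C (fun _ => zero_le_one) (by
      have : Nonempty (Fin r → Fin k) := ⟨fun _ => a0⟩
      simp; positivity) hC (by
      intro q hq
      have hqL : r + T * q.1 ∈ L := by simpa [C] using hq
      have h1 := hA _ hqL
      unfold dens at h1
      rw [le_div_iff₀ (by positivity)] at h1
      have h2 := h1.trans (DCSP.level_dens (T := T) (r := r) (q := q.1) A)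
      have h3 : ∑ z : (Fin r → Fin k) × (Fin n → (Fin T → Fin k)),
          (1:ℝ) * DCSP.ind (List.ofFn z.1 ++ DCSP.fl ((List.ofFn z.2).take q.1) ∈ A) =
          (Fintype.card (Fin T → Fin k) : ℝ) ^ (n - q.1) *
          ∑ x : Fin r → Fin k, ∑ s : Fin q.1 → (Fin T → Fin k),
            DCSP.ind (List.ofFn x ++ DCSP.fl (List.ofFn s) ∈ A) := by
        rw [Fintype.sum_prod_type, Finset.mul_sum]
        apply Finset.sum_congr rfl
        intro x _
        simp only [one_mul]
        exact DCSP.sum_take n q.1 q.2.le (fun t => DCSP.ind (List.ofFn x ++ DCSP.fl t ∈ A))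
      rw [h3]
      refine le_trans (le_of_eq ?_) (mul_le_mul_of_nonneg_left h2 (by positivity))
      simp only [Finset.sum_const, Finset.card_univ, Fintype.card_prod, Fintype.card_fun, Fintype.card_fin, nsmul_eq_mul]
      push_cast
      have e : n = q.1 + (n - q.1) := by have := q.2; omega
      have e2 : ((k:ℝ) ^ T) ^ n = ((k:ℝ) ^ T) ^ (n - q.1) * (k:ℝ) ^ (T * q.1) := by
        rw [pow_mul, ← pow_add]; congr 1; omega
      rw [e2, pow_add]
      ring)
  choose u hu using fun n => hφ.line n []
  let w : ℕ → VWord k := fun n => List.ofFn (DCSP.pad a0 T (p n)) ++ DCSP.fw a0 T (p n) (u n)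
  have hpre : ∀ n < m, p n <+: w n := fun n hn =>
    (DCSP.pad_pfx a0 T (p n) (by rw [(hp n hn).2]; exact hτT n hn)).trans (List.prefix_append _ _)
  have hw : ∀ n a, subst (w n) a = DCSP.fl (DCSP.pv a0 T (p n) a :: DCSP.sb (u n) (DCSP.pv a0 T (p n) a)) := by
    intro n a
    have e3 : ∀ b (t : List (Fin T → Fin k)), DCSP.fl (b :: t) = List.ofFn b ++ DCSP.fl t :=
      fun b t => by simp [DCSP.fl]
    rw [e3, ← DCSP.subst_fw, ← DCSP.subst_pad]
    simp [w, subst]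
  refine ⟨List.ofFn x ++ DCSP.fl (φ []), w, fun n hn => ⟨(hpre n hn).subset (hp n hn).1, hpre n hn⟩, ?_⟩
  have key : ∀ (a : ℕ → Fin k) (n : ℕ),
      DCSP.fl (φ ((List.range n).map (fun i => DCSP.pv a0 T (p i) (a i)))) =
      DCSP.fl (φ []) ++ ((List.range n).map fun i => subst (w i) (a i)).flatten := by
    intro a n
    induction n with
    | zero => simp
    | succ n ih =>
      have h1 := hu n ((List.range n).map (fun i => DCSP.pv a0 T (p i) (a i))) (by simp) (DCSP.pv a0 T (p n) (a n))
      rw [DCSP.sb_nil] at h1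
      rw [List.range_succ, List.map_append, List.map_singleton, h1, DCSP.fl_append, ih, ← hw]
      simp
  intro y hy
  rcases hy with rfl | ⟨n, hn, a, rfl⟩
  · exact hall [] (by simp)
  · have := hall ((List.range (n + 1)).map (fun i => DCSP.pv a0 T (p i) (a i))) (by simp; omega)
    rw [key, ← List.append_assoc] at this
    exact this
end

section
/- Let k, m, q ∈ ℕ with k ≥ 2 and q ≥ 1, and let 0 < ε < k^{−m}. Let N be a finite subset of ℕ with |N| ≥ (q⌊16 ε^{−4}⌋ + 1)m + 1 and let F be a family of subsets of [k]^{max(N)} with |F| = q. Then, setting N′ = N ∖ {max(N)}, there exists a subinterval M of N′ (i.e., M = J ∩ N′ for some interval J of ℕ) with |M| = m such that for every A ∈ F, every subset I of M and every y ∈ [k]^I we have |dens(A_y) − dens(A)| ≤ ε. -/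
/-!
`[k]^{max N}` is identified with the set of functions `Fin (max N) → Fin k`; for a
finset `I` of coordinates, a located word `y ∈ [k]^I` is a function `{i // i ∈ I} → Fin k`.
-/

/-- `dens(A_y)`: the density, in `[k]^{{0,…,n-1} ∖ I}`, of the section of `A` at
`y ∈ [k]^I`, i.e. `|{x ∈ A : x ∣_I = y}| / k^{n-|I|}`. -/
noncomputable def secDens (k n : ℕ) (A : Set (Fin n → Fin k)) (I : Finset (Fin n))
    (y : {i : Fin n // i ∈ I} → Fin k) : ℝ :=
  (Set.ncard {x ∈ A | ∀ i : {i : Fin n // i ∈ I}, x i.1 = y i} : ℝ) /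
    (k : ℝ) ^ (n - I.card)

/-- `dens(A) = |A| / kⁿ` for `A ⊆ [k]ⁿ`. -/
noncomputable def fullDens (k n : ℕ) (A : Set (Fin n → Fin k)) : ℝ :=
  (Set.ncard A : ℝ) / (k : ℝ) ^ n

lemma eii_ite (p r : Prop) [Decidable p] [Decidable r] [Decidable (p ∧ r)] :
    (if p then (1 : ℝ) else 0) * (if r then (1 : ℝ) else 0) = if p ∧ r then 1 else 0 := by
  by_cases hp : p <;> by_cases hr : r <;> simp [hp, hr]

open Finset in
lemma eii_count (k n : ℕ) (I : Finset (Fin n)) (z : Fin n → Fin k) :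
    ((univ.filter (fun x : Fin n → Fin k => ∀ i ∈ I, x i = z i)).card : ℝ)
      = (k : ℝ) ^ (n - I.card) := by
  have h : univ.filter (fun x : Fin n → Fin k => ∀ i ∈ I, x i = z i)
      = Fintype.piFinset (fun i => if i ∈ I then {z i} else univ) := by
    ext x
    simp only [mem_filter, mem_univ, true_and, Fintype.mem_piFinset]
    refine forall_congr' fun i => ?_
    by_cases hi : i ∈ I <;> simp [hi]
  rw [h, Fintype.card_piFinset]
  have h2 : ∀ i : Fin n, (if i ∈ I then ({z i} : Finset (Fin k)) else univ).card
      = if i ∈ I then 1 else k := by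
    intro i
    by_cases hi : i ∈ I <;> simp [hi]
  simp only [h2]
  rw [Finset.prod_ite]
  simp [Finset.filter_not, Finset.card_sdiff]

/-- normalized balanced indicator -/
noncomputable def eiiF (k n : ℕ) (I : Finset (Fin n)) (z x : Fin n → Fin k) : ℝ :=
  (k : ℝ) ^ I.card * (if ∀ i ∈ I, x i = z i then 1 else 0) - 1

open Finset in
lemma eii_cnt' (k n : ℕ) (I : Finset (Fin n)) (z : Fin n → Fin k) :
    (k : ℝ) ^ I.card * ∑ x : Fin n → Fin k, (if ∀ i ∈ I, x i = z i then (1 : ℝ) else 0)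
      = (k : ℝ) ^ n := by
  rw [Finset.sum_boole, eii_count, ← pow_add]
  congr 1
  have := Finset.card_le_univ I
  simp at this
  omega

lemma eii_orth (k n : ℕ) (I J : Finset (Fin n)) (hIJ : Disjoint I J) (z w : Fin n → Fin k) :
    ∑ x, eiiF k n I z x * eiiF k n J w x = 0 := by
  classical
  have h1 := eii_cnt' k n I z
  have h2 := eii_cnt' k n J w
  have h3 := eii_cnt' k n (I ∪ J) (fun i => if i ∈ I then z i else w i)
  rw [Finset.card_union_of_disjoint hIJ] at h3
  have h4 : ∀ x : Fin n → Fin k,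
      (if ∀ i ∈ I ∪ J, x i = (if i ∈ I then z i else w i) then (1 : ℝ) else 0)
      = (if ∀ i ∈ I, x i = z i then (1 : ℝ) else 0) *
        (if ∀ i ∈ J, x i = w i then (1 : ℝ) else 0) := by
    intro x
    rw [eii_ite]
    refine if_congr ?_ rfl rfl
    constructor
    · intro h
      refine ⟨fun i hi => ?_, fun i hi => ?_⟩
      · simpa [hi] using h i (Finset.mem_union_left _ hi)
      · have : i ∉ I := fun h' => Finset.disjoint_left.1 hIJ h' hi
        simpa [this] using h i (Finset.mem_union_right _ hi)
    · rintro ⟨ha, hb⟩ i hi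
      by_cases h' : i ∈ I
      · simpa [h'] using ha i h'
      · simpa [h'] using hb i ((Finset.mem_union.1 hi).resolve_left h')
  simp only [h4] at h3
  have h5 : ∀ x : Fin n → Fin k, eiiF k n I z x * eiiF k n J w x =
      (k : ℝ) ^ (I.card + J.card) * ((if ∀ i ∈ I, x i = z i then (1 : ℝ) else 0) *
        (if ∀ i ∈ J, x i = w i then (1 : ℝ) else 0))
      - (k : ℝ) ^ I.card * (if ∀ i ∈ I, x i = z i then (1 : ℝ) else 0)
      - (k : ℝ) ^ J.card * (if ∀ i ∈ J, x i = w i then (1 : ℝ) else 0) + 1 := by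
    intro x
    unfold eiiF
    ring
  simp only [h5, Finset.sum_add_distrib, Finset.sum_sub_distrib, ← Finset.mul_sum, h1, h2, h3]
  simp

lemma eii_norm (k n : ℕ) (I : Finset (Fin n)) (z : Fin n → Fin k) :
    ∑ x, eiiF k n I z x * eiiF k n I z x ≤ (k : ℝ) ^ n * (k : ℝ) ^ I.card := by
  have h1 := eii_cnt' k n I z
  have h5 : ∀ x : Fin n → Fin k, eiiF k n I z x * eiiF k n I z x =
      ((k : ℝ) ^ I.card - 2) *
        ((k : ℝ) ^ I.card * (if ∀ i ∈ I, x i = z i then (1 : ℝ) else 0)) + 1 := by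
    intro x
    unfold eiiF
    split_ifs <;> ring
  simp only [h5, Finset.sum_add_distrib, ← Finset.mul_sum, h1]
  simp
  nlinarith [show (0 : ℝ) ≤ (k : ℝ) ^ n by positivity]

open Classical in
lemma eii_inner (k n : ℕ) (hk : 2 ≤ k) (A : Set (Fin n → Fin k)) (I : Finset (Fin n))
    (z : Fin n → Fin k) :
    ∑ x, (if x ∈ A then (1 : ℝ) else 0) * eiiF k n I z x
      = (k : ℝ) ^ n * (secDens k n A I (fun i => z i.1) - fullDens k n A) := by
  have hk0 : (k : ℝ) ≠ 0 := by positivity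
  have e1 : ∑ x : Fin n → Fin k, (if x ∈ A then (1 : ℝ) else 0) = (Set.ncard A : ℝ) := by
    rw [Finset.sum_boole, Set.ncard_eq_toFinset_card']
    congr 2
    ext; simp
  have e2 : ∑ x : Fin n → Fin k, (if x ∈ A then (1 : ℝ) else 0) *
      (if ∀ i ∈ I, x i = z i then (1 : ℝ) else 0)
      = (Set.ncard {x ∈ A | ∀ i : {i : Fin n // i ∈ I}, x i.1 = z i.1} : ℝ) := by
    simp only [eii_ite]
    rw [Finset.sum_boole, Set.ncard_eq_toFinset_card']
    congr 2
    ext; simp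
  have e3 : ∀ x : Fin n → Fin k, (if x ∈ A then (1 : ℝ) else 0) * eiiF k n I z x
      = (k : ℝ) ^ I.card * ((if x ∈ A then (1 : ℝ) else 0) *
      (if ∀ i ∈ I, x i = z i then (1 : ℝ) else 0)) - (if x ∈ A then (1 : ℝ) else 0) := by
    intro x
    unfold eiiF
    ring
  simp only [e3, Finset.sum_sub_distrib, ← Finset.mul_sum, e1, e2]
  unfold secDens fullDens
  have hc : I.card ≤ n := by simpa using Finset.card_le_univ I
  have hp : (k : ℝ) ^ n = (k : ℝ) ^ I.card * (k : ℝ) ^ (n - I.card) := by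
    rw [← pow_add]; congr 1; omega
  rw [mul_sub, mul_div_cancel₀ _ (pow_ne_zero _ hk0)]
  rw [hp, mul_assoc, mul_div_cancel₀ _ (pow_ne_zero _ hk0)]

open Classical in
lemma eii_bound {ι : Type} (k n m : ℕ) (hk : 2 ≤ k) (ε : ℝ) (hε0 : 0 < ε)
    (hε : ε < ((k : ℝ) ^ m)⁻¹) (A : Set (Fin n → Fin k)) (T : Finset ι)
    (I : ι → Finset (Fin n)) (z : ι → Fin n → Fin k)
    (hd : ∀ i ∈ T, ∀ j ∈ T, i ≠ j → Disjoint (I i) (I j))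
    (hc : ∀ i ∈ T, (I i).card ≤ m)
    (hA : ∀ i ∈ T, ε < |secDens k n A (I i) (fun t => z i t.1) - fullDens k n A|) :
    (T.card : ℝ) * ε ^ 3 ≤ 1 := by
  have hk1 : (1 : ℝ) ≤ k := by exact_mod_cast (by omega : 1 ≤ k)
  set K : ℝ := (k : ℝ) ^ n with hK
  have hKpos : 0 < K := by positivity
  set d : ι → ℝ := fun i => secDens k n A (I i) (fun t => z i t.1) - fullDens k n A with hdd
  set s : ι → ℝ := fun i => if 0 ≤ d i then 1 else -1 with hs
  have hsd : ∀ i, s i * d i = |d i| := by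
    intro i
    simp only [hs]
    split_ifs with h
    · rw [abs_of_nonneg h, one_mul]
    · rw [abs_of_neg (not_le.1 h)]; ring
  have hss : ∀ i, s i * s i = 1 := by
    intro i
    simp only [hs]
    split_ifs <;> norm_num
  set G : (Fin n → Fin k) → ℝ := fun x => ∑ i ∈ T, s i * eiiF k n (I i) (z i) x with hG
  have cs := Finset.sum_mul_sq_le_sq_mul_sq Finset.univ
    (fun x : Fin n → Fin k => if x ∈ A then (1 : ℝ) else 0) G
  have hin : ∑ x, (if x ∈ A then (1 : ℝ) else 0) * G x = K * ∑ i ∈ T, |d i| := by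
    simp only [hG, Finset.mul_sum]
    rw [Finset.sum_comm]
    refine Finset.sum_congr rfl fun i _ => ?_
    rw [← hsd, mul_left_comm, ← eii_inner k n hk A (I i) (z i), Finset.mul_sum]
    refine Finset.sum_congr rfl fun x _ => ?_
    ring
  have hA1 : ∑ x : Fin n → Fin k, (if x ∈ A then (1 : ℝ) else 0) ^ 2 ≤ K := by
    calc _ ≤ ∑ x : Fin n → Fin k, (1 : ℝ) := by
          refine Finset.sum_le_sum fun x _ => ?_
          split_ifs <;> norm_num
      _ = K := by simp [hK]
  have hkm : (k : ℝ) ^ m ≤ 1 / ε := by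
    rw [le_div_iff₀ hε0]
    have : 0 < (k : ℝ) ^ m := by positivity
    have := (lt_inv_comm₀ hε0 this).1 hε
    have h2 := mul_lt_mul_of_pos_right this hε0
    rw [inv_mul_cancel₀ hε0.ne'] at h2
    exact h2.le
  have hG2 : ∑ x, G x ^ 2 ≤ T.card * (K * (1 / ε)) := by
    have : ∑ x, G x ^ 2 = ∑ i ∈ T, ∑ j ∈ T, s i * s j *
        ∑ x, eiiF k n (I i) (z i) x * eiiF k n (I j) (z j) x := by
      simp only [hG, sq, Finset.sum_mul_sum]
      simp only [Finset.mul_sum]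
      rw [Finset.sum_comm]
      refine Finset.sum_congr rfl fun i _ => ?_
      rw [Finset.sum_comm]
      refine Finset.sum_congr rfl fun j _ => ?_
      refine Finset.sum_congr rfl fun x _ => ?_
      ring
    rw [this, ← nsmul_eq_mul]
    refine Finset.sum_le_card_nsmul _ _ _ fun i hi => ?_
    rw [Finset.sum_eq_single_of_mem i hi]
    · rw [hss, one_mul]
      refine (eii_norm k n (I i) (z i)).trans ?_
      refine mul_le_mul_of_nonneg_left ?_ hKpos.le
      exact (pow_le_pow_right₀ hk1 (hc i hi)).trans hkm
    · intro j hj hji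
      rw [eii_orth k n _ _ (hd i hi j hj hji.symm), mul_zero]
  have hsum : T.card * ε ≤ ∑ i ∈ T, |d i| := by
    rw [← nsmul_eq_mul]
    exact Finset.card_nsmul_le_sum _ _ _ fun i hi => (hA i hi).le
  rw [hin] at cs
  have h1 : (K * (T.card * ε)) ^ 2 ≤ K * (T.card * (K * (1 / ε))) := by
    calc _ ≤ (K * ∑ i ∈ T, |d i|) ^ 2 := by gcongr
      _ ≤ _ := cs
      _ ≤ _ := by
        refine mul_le_mul hA1 hG2 (Finset.sum_nonneg fun x _ => sq_nonneg _) hKpos.le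
  rcases Nat.eq_zero_or_pos T.card with h0 | h0
  · rw [h0]; norm_num
  have hT : (0 : ℝ) < T.card := by exact_mod_cast h0
  have h2 : (K ^ 2 * T.card) * (T.card * ε ^ 3) ≤ (K ^ 2 * T.card) * 1 := by
    have h3 := mul_le_mul_of_nonneg_right h1 hε0.le
    have h4 : K * (T.card * (K * (1 / ε))) * ε = (K ^ 2 * T.card) * 1 := by
      field_simp
    rw [h4] at h3
    calc _ = (K * (T.card * ε)) ^ 2 * ε := by ring
      _ ≤ _ := h3
  exact le_of_mul_le_mul_left h2 (by positivity)

lemma eii_blocks (S : Finset ℕ) (m L : ℕ) (h : L * m ≤ S.card) :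
    ∃ a : ℕ → ℕ, Monotone a ∧ ∀ j < L, (Finset.Ico (a j) (a (j + 1)) ∩ S).card = m := by
  classical
  set g : ℕ → ℕ := fun t => (S.filter (· < t)).card with hg
  have g0 : g 0 = 0 := by simp [hg]
  have gs : ∀ t, g (t + 1) ≤ g t + 1 := by
    intro t
    have : S.filter (· < t + 1) ⊆ insert t (S.filter (· < t)) := by
      intro x
      simp only [Finset.mem_filter, Finset.mem_insert]
      rintro ⟨h1, h2⟩
      by_cases hx : x = t
      · exact Or.inl hx
      · exact Or.inr ⟨h1, by omega⟩
    exact (Finset.card_le_card this).trans (Finset.card_insert_le _ _)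
  have gtop : ∃ t, g t = S.card := by
    refine ⟨S.sup id + 1, ?_⟩
    simp only [hg]
    congr 1
    refine Finset.filter_true_of_mem fun x hx => ?_
    exact Nat.lt_succ_of_le (Finset.le_sup (f := id) hx)
  obtain ⟨t0, ht0⟩ := gtop
  have ex : ∀ j, ∃ t, min j L * m ≤ g t := fun j =>
    ⟨t0, by rw [ht0]; exact (Nat.mul_le_mul_right m (min_le_right _ _)).trans h⟩
  have hval : ∀ j, g (Nat.find (ex j)) = min j L * m := by
    intro j
    refine le_antisymm ?_ (Nat.find_spec (ex j))
    rcases hf : Nat.find (ex j) with _ | t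
    · rw [g0]; exact Nat.zero_le _
    · have := Nat.find_min (ex j) (m := t) (by omega)
      have := gs t
      omega
  have mono : Monotone (fun j => Nat.find (ex j)) := by
    intro i j hij
    refine Nat.find_min' (ex i) ?_
    refine le_trans ?_ (Nat.find_spec (ex j))
    exact Nat.mul_le_mul_right m (min_le_min_right _ hij)
  refine ⟨_, mono, fun j hj => ?_⟩
  have h1 := hval j
  have h2 := hval (j + 1)
  have h1 := h1.trans (congrArg (· * m) (min_eq_left hj.le))
  have h2 := h2.trans ((congrArg (· * m) (min_eq_left (by omega : j + 1 ≤ L))).trans (Nat.succ_mul j m))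
  have h3 : Nat.find (ex j) ≤ Nat.find (ex (j + 1)) := mono (Nat.le_succ j)
  have h4 : Finset.Ico (Nat.find (ex j)) (Nat.find (ex (j + 1))) ∩ S
      = S.filter (· < Nat.find (ex (j + 1))) \ S.filter (· < Nat.find (ex j)) := by
    ext x
    simp only [Finset.mem_inter, Finset.mem_Ico, Finset.mem_sdiff, Finset.mem_filter]
    constructor
    · rintro ⟨⟨p, q⟩, r⟩
      exact ⟨⟨r, q⟩, fun h => by omega⟩
    · rintro ⟨⟨r, q⟩, h⟩
      refine ⟨⟨?_, q⟩, r⟩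
      by_contra hh
      exact h ⟨r, by omega⟩
  show (Finset.Ico (Nat.find (ex j)) (Nat.find (ex (j + 1))) ∩ S).card = m
  rw [h4, Finset.card_sdiff_of_subset]
  · change g _ - g _ = m
    omega
  · intro x
    simp only [Finset.mem_filter]
    rintro ⟨p, q⟩
    exact ⟨p, by omega⟩

lemma eii_core (k m q n : ℕ) (hk : 2 ≤ k) (ε : ℝ)
    (hε0 : 0 < ε) (hε : ε < ((k : ℝ) ^ m)⁻¹) (S : Finset ℕ) (B : ℕ) (hB : B = ⌊16 / ε ^ 4⌋₊)
    (hScard : (q * B + 1) * m ≤ S.card)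
    (F : Finset (Set (Fin n → Fin k))) (hF : F.card = q) :
    ∃ M : Finset ℕ, M ⊆ S ∧
      (∃ a b : ℕ, M = Finset.Ico a b ∩ S) ∧ M.card = m ∧
      ∀ A ∈ F, ∀ I : Finset (Fin n), (∀ i ∈ I, (i : ℕ) ∈ M) →
        ∀ y : {i : Fin n // i ∈ I} → Fin k,
          |secDens k n A I y - fullDens k n A| ≤ ε := by
  classical
  obtain ⟨a, ha, hcard⟩ := eii_blocks S m (q * B + 1) hScard
  by_contra hcon
  have key : ∀ j : Fin (q * B + 1), ∃ A ∈ F, ∃ I : Finset (Fin n),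
      (∀ i ∈ I, (i : ℕ) ∈ Finset.Ico (a j) (a (j + 1)) ∩ S) ∧
      ∃ z : Fin n → Fin k, ε < |secDens k n A I (fun t => z t.1) - fullDens k n A| := by
    intro j
    by_contra hj
    push Not at hj
    refine hcon ⟨Finset.Ico (a j) (a (j + 1)) ∩ S, Finset.inter_subset_right,
      ⟨_, _, rfl⟩, hcard j j.2, fun A hA I hI y => ?_⟩
    have h1 := hj A hA I hI (fun i => if h : i ∈ I then y ⟨i, h⟩ else ⟨0, by omega⟩)
    have h2 : (fun t : {i : Fin n // i ∈ I} =>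
        (fun i => if h : i ∈ I then y ⟨i, h⟩ else (⟨0, by omega⟩ : Fin k)) t.1) = y := by
      funext t
      simp
    rw [h2] at h1
    exact h1
  choose Af hAf I hI z hz using key
  obtain ⟨A, hA, hlt⟩ := Finset.exists_lt_card_fiber_of_mul_lt_card_of_maps_to
    (s := (Finset.univ : Finset (Fin (q * B + 1)))) (t := F) (f := Af) (n := B)
    (fun j _ => hAf j) (by simp [hF])
  have hb := eii_bound k n m hk ε hε0 hε A (Finset.univ.filter fun j => Af j = A) I z ?_ ?_ ?_
  · have h1 : (16 / ε ^ 4 : ℝ) < (Finset.univ.filter fun j => Af j = A).card := by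
      refine (Nat.lt_floor_add_one _).trans_le ?_
      rw [← hB]
      exact_mod_cast hlt
    rw [div_lt_iff₀ (by positivity)] at h1
    have hk1 : (1 : ℝ) ≤ (k : ℝ) ^ m := one_le_pow₀ (by exact_mod_cast (by omega : 1 ≤ k))
    have h2 : ε < 1 := hε.trans_le (inv_le_one_of_one_le₀ hk1)
    have h3 := mul_le_mul_of_nonneg_right hb hε0.le
    nlinarith
  · intro i _ j _ hij
    have hdis := ha.pairwise_disjoint_on_Ico_succ (fun h => hij (Fin.ext h) : (i : ℕ) ≠ j)
    rw [Finset.disjoint_left]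
    intro x hx hy
    have p := (Finset.mem_inter.1 (hI i x hx)).1
    have r := (Finset.mem_inter.1 (hI j x hy)).1
    rw [Finset.mem_Ico] at p r
    exact (Set.disjoint_left.1 hdis : ∀ ⦃t : ℕ⦄, _) p r
  · intro j _
    rw [← hcard j j.2]
    exact Finset.card_le_card_of_injOn (fun x => (x : ℕ)) (fun x hx => hI j x hx)
      (fun x _ y _ h => Fin.ext h)
  · intro j hj
    have := (Finset.mem_filter.1 hj).2
    rw [← this]
    exact hz j

/-- Sublemma 3.7: on a long enough finite set `N` one finds a subinterval `M` of
`N' = N ∖ {max N}` of size `m` such that all sections of the members of `F` along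
located words with coordinates in `M` have nearly the full density. -/
theorem energy_increment_interval (k m q : ℕ) (hk : 2 ≤ k) (hq : 1 ≤ q) (ε : ℝ)
    (hε0 : 0 < ε) (hε : ε < ((k : ℝ) ^ m)⁻¹) (N : Finset ℕ) (hN : N.Nonempty)
    (hNcard : (q * ⌊16 / ε ^ 4⌋₊ + 1) * m + 1 ≤ N.card)
    (F : Finset (Set (Fin (N.max' hN) → Fin k))) (hF : F.card = q) :
    ∃ M : Finset ℕ, M ⊆ N.erase (N.max' hN) ∧
      (∃ a b : ℕ, M = Finset.Ico a b ∩ N.erase (N.max' hN)) ∧ M.card = m ∧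
      ∀ A ∈ F, ∀ I : Finset (Fin (N.max' hN)), (∀ i ∈ I, (i : ℕ) ∈ M) →
        ∀ y : {i : Fin (N.max' hN) // i ∈ I} → Fin k,
          |secDens k (N.max' hN) A I y - fullDens k (N.max' hN) A| ≤ ε := by
  refine eii_core k m q _ hk ε hε0 hε _ _ rfl ?_ F hF
  rw [Finset.card_erase_of_mem (N.max'_mem hN)]
  omega
end

section
/- For every integer k ≥ 2, every pair of integers d ≥ m ≥ 1 and every integer r ≥ 1 there exists an integer N with the following property: if n ≥ N and W is an n-dimensional Carlson–Simpson tree of [k]^{<ℕ}, then for every r-coloring of the set Subtr_m(W) there exists U ∈ Subtr_d(W) such that the set Subtr_m(U) is monochromatic. -/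
/-- `w` is a left variable word: its leftmost letter is the variable `v`. -/
def IsLeftVar {k : ℕ} (w : VWord k) : Prop := w.head? = some none

/-- `W` is an `m`-dimensional Carlson–Simpson tree of `[k]^{<ℕ}`. -/
def IsCSTree (k m : ℕ) (W : Set (Word k)) : Prop :=
  1 ≤ m ∧ ∃ (c : Word k) (ws : ℕ → VWord k),
    (∀ i < m, IsLeftVar (ws i)) ∧ W = csSet c m ws


open Filter

namespace CSProof

/-- Concatenation semigroup structure. -/
instance vwordSemigroup (k : ℕ) : Semigroup (VWord k) where
  mul x y := x ++ y
  mul_assoc := List.append_assoc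

theorem vmul {k : ℕ} (x y : VWord k) : x * y = x ++ y := rfl

attribute [local instance] Ultrafilter.semigroup

/-- Substitution of a letter or the variable. -/
def sub {k : ℕ} (w : VWord k) (b : Option (Fin k)) : VWord k := w.map (fun o => o.or b)

theorem sub_append {k : ℕ} (x y : VWord k) (b : Option (Fin k)) :
    sub (x ++ y) b = sub x b ++ sub y b := by simp [sub]

theorem sub_none {k : ℕ} (x : VWord k) : sub x none = x := by simp [sub]

theorem map_mul {k : ℕ} (U V : Ultrafilter (VWord k)) (b : Option (Fin k)) :
    (U * V).map (sub · b) = U.map (sub · b) * V.map (sub · b) := by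
  refine Ultrafilter.coe_inj.mp (Filter.ext' fun P => ?_)
  have h1 : (∀ᶠ x in ((U * V).map (sub · b) : Ultrafilter (VWord k)), P x) ↔
      ∀ᶠ x in ((U * V : Ultrafilter (VWord k)) : Filter (VWord k)), P (sub x b) := Iff.rfl
  rw [h1, Ultrafilter.eventually_mul, Ultrafilter.eventually_mul]
  change _ ↔ ∀ᶠ x in (U : Filter (VWord k)), ∀ᶠ y in (V : Filter (VWord k)),
    P (sub x b * sub y b)
  simp only [vmul, sub_append]

/-- Minimal left ideals in a compact subsemigroup. -/
theorem exists_min {M : Type*} [Semigroup M] [TopologicalSpace M] [T2Space M] [CompactSpace M]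
    (hc : ∀ r : M, Continuous (· * r)) (C : Set M) (hCn : C.Nonempty) (hC : IsClosed C)
    (hmul : ∀ x ∈ C, ∀ y ∈ C, x * y ∈ C) :
    ∃ q ∈ C, q * q = q ∧ ∀ x ∈ C, (x * q) * (x * q) = x * q → q * (x * q) = q := by
  let S : Set (Set M) :=
    {I | IsClosed I ∧ I.Nonempty ∧ I ⊆ C ∧ ∀ x ∈ C, ∀ y ∈ I, x * y ∈ I}
  obtain ⟨I, -, hI⟩ := zorn_superset_nonempty S (by
    intro c hcS hchain hne
    refine ⟨⋂₀ c, ⟨isClosed_sInter fun t ht => (hcS ht).1, ?_, ?_, ?_⟩,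
      fun s hs => Set.sInter_subset_of_mem hs⟩
    · have : Nonempty c := hne.to_subtype
      rw [Set.sInter_eq_iInter]
      refine IsCompact.nonempty_iInter_of_directed_nonempty_isCompact_isClosed _ ?_ ?_ ?_ ?_
      · exact DirectedOn.directed_val (IsChain.directedOn hchain.symm)
      · exact fun i => (hcS i.2).2.1
      · exact fun i => (hcS i.2).1.isCompact
      · exact fun i => (hcS i.2).1
    · obtain ⟨s, hs⟩ := hne
      exact (Set.sInter_subset_of_mem hs).trans (hcS hs).2.2.1
    · intro x hx y hy s hs
      exact (hcS hs).2.2.2 x hx y (hy s hs)) C ⟨hC, hCn, subset_rfl, hmul⟩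
  obtain ⟨hIc, hIn, hIC, hIm⟩ := hI.prop
  obtain ⟨q, hq, hqq⟩ := exists_idempotent_in_compact_subsemigroup hc I hIn hIc.isCompact
    (fun x hx y hy => hIm x (hIC hx) y hy)
  refine ⟨q, hIC hq, hqq, fun x hx hid => ?_⟩
  have hf : x * q ∈ I := hIm x hx q hq
  have hJ : (· * (x * q)) '' C ∈ S := by
    refine ⟨(hC.isCompact.image (hc _)).isClosed, hCn.image _, ?_, ?_⟩
    · rintro _ ⟨y, hy, rfl⟩
      exact hmul _ hy _ (hIC hf)
    · rintro y hy _ ⟨z, hz, rfl⟩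
      exact ⟨y * z, hmul _ hy _ hz, mul_assoc _ _ _⟩
  have hsub : (· * (x * q)) '' C ⊆ I := by
    rintro _ ⟨y, hy, rfl⟩
    exact hIm y hy _ hf
  obtain ⟨g, hg, hgq⟩ := hI.le_of_le hJ hsub hq
  change g * (x * q) = q at hgq
  calc q * (x * q) = g * (x * q) * (x * q) := by rw [hgq]
    _ = g * ((x * q) * (x * q)) := mul_assoc _ _ _
    _ = q := by rw [hid, hgq]

theorem exists_p (k : ℕ) : ∃ p : Ultrafilter (VWord k), (∀ᶠ w in (p : Filter (VWord k)), IsLeftVar w) ∧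
    ∀ (b : Option (Fin k)) (P : VWord k → Prop), (∀ᶠ w in (p : Filter (VWord k)), P w) →
      ∀ᶠ u in (p : Filter (VWord k)), ∀ᶠ w in (p : Filter (VWord k)), P (u ++ sub w b) := by
  have hc : ∀ r : Ultrafilter (VWord k), Continuous (· * r) := Ultrafilter.continuous_mul_left
  let K : Set (VWord k) := {w | none ∉ w}
  let L : Set (VWord k) := {w | IsLeftVar w}
  have memmul : ∀ (A B D : Set (VWord k)), (∀ x ∈ A, ∀ y ∈ B, x ++ y ∈ D) →
      ∀ U V : Ultrafilter (VWord k), A ∈ U → B ∈ V → D ∈ U * V := by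
    intro A B D h U V hU hV
    change ∀ᶠ x in ((U * V : Ultrafilter (VWord k)) : Filter (VWord k)), x ∈ D
    rw [Ultrafilter.eventually_mul]
    filter_upwards [hU] with x hx
    filter_upwards [hV] with y hy
    exact h x hx y hy
  obtain ⟨q, hqC, hqq, hqmin⟩ := exists_min hc {U : Ultrafilter (VWord k) | K ∈ U}
    ⟨pure [], by simp [K]⟩ (ultrafilter_isClosed_basic _)
    (fun U hU V hV => memmul K K K (by simp +contextual [K]) U V hU hV)
  have hLv : ∀ x ∈ L, ∀ y : VWord k, x ++ y ∈ L := by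
    intro x hx y
    cases x with
    | nil => simp [L, IsLeftVar] at hx
    | cons a x => simpa [L, IsLeftVar] using hx
  obtain ⟨p, ⟨x, hxL, hxp⟩, hpp⟩ := exists_idempotent_in_compact_subsemigroup hc
    ((· * q) '' {U : Ultrafilter (VWord k) | L ∈ U})
    (Set.Nonempty.image _ ⟨pure [none], by simp [L, IsLeftVar]⟩)
    ((ultrafilter_isClosed_basic _).isCompact.image (hc q)) (by
      rintro _ ⟨x, hx, rfl⟩ _ ⟨y, hy, rfl⟩
      refine ⟨x * q * y, ?_, mul_assoc _ _ _⟩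
      change L ∈ x * q * y
      refine memmul L Set.univ L (fun x hx y _ => hLv x hx y) _ _ ?_ Filter.univ_mem
      exact memmul L Set.univ L (fun x hx y _ => hLv x hx y) _ _ hx Filter.univ_mem)
  change x * q = p at hxp
  have hpq : p * q = p := by rw [← hxp, mul_assoc, hqq]
  refine ⟨p, ?_, ?_⟩
  · rw [← hxp]
    exact memmul L Set.univ L (fun x hx y _ => hLv x hx y) _ _ hxL Filter.univ_mem
  · intro b P hP
    have key : p * p.map (sub · b) = p := by
      rcases b with _ | a
      · have : (fun w : VWord k => sub w none) = id := by ext1 w; exact sub_none w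
        rw [this, Ultrafilter.map_id, hpp]
      · have hq1 : q.map (sub · (some a)) = q := by
          refine Ultrafilter.coe_inj.mp ?_
          rw [Ultrafilter.coe_map]
          conv_rhs => rw [← Filter.map_id (f := (q : Filter (VWord k)))]
          refine Filter.map_congr ?_
          filter_upwards [hqC] with w hw
          change sub w (some a) = w
          unfold sub
          conv_rhs => rw [← List.map_id w]
          refine List.map_congr_left fun o ho => ?_
          rcases o with _ | o
          · exact absurd ho hw
          · rfl
        have hpa : p.map (sub · (some a)) = x.map (sub · (some a)) * q := by
          rw [← hxp, map_mul, hq1]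
        have hxa : K ∈ x.map (sub · (some a)) := by
          rw [Ultrafilter.mem_map]
          refine Filter.univ_mem' fun w => ?_
          simp [K, sub]
        have hid := hqmin _ hxa (by rw [← hpa, ← map_mul, hpp])
        rw [← hpa] at hid
        calc p * p.map (sub · (some a)) = p * q * p.map (sub · (some a)) := by rw [hpq]
          _ = p * (q * p.map (sub · (some a))) := mul_assoc _ _ _
          _ = p := by rw [hid, hpq]
    rw [← key] at hP
    exact hP

/-- `Reach ws L L'`: the reversed list `L'` is obtained from `L` by processing a prefix of `ws`. -/
inductive Reach {k : ℕ} : List (VWord k) → List (VWord k) → List (VWord k) → Prop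
  | halt (ws L : List (VWord k)) : Reach ws L L
  | ext (w : VWord k) (ws L L' : List (VWord k)) : Reach ws (w :: L) L' → Reach (w :: ws) L L'
  | app (b : Option (Fin k)) (w u : VWord k) (ws L L' : List (VWord k)) :
      Reach ws ((u ++ sub w b) :: L) L' → Reach (w :: ws) (u :: L) L'

theorem exists_lim {α κ : Type*} [Finite κ] (p : Ultrafilter α) (f : α → κ) :
    ∃ c, ∀ᶠ u in (p : Filter α), f u = c := by
  obtain ⟨c, hc⟩ := (p.map f).eq_pure_of_finite
  refine ⟨c, ?_⟩
  have : {c} ∈ p.map f := by rw [hc]; simp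
  exact this

/-- Limit of a finite-valued function along an ultrafilter. -/
noncomputable def ulim {α κ : Type*} [Finite κ] (p : Ultrafilter α) (f : α → κ) : κ :=
  (exists_lim p f).choose

theorem ulim_spec {α κ : Type*} [Finite κ] (p : Ultrafilter α) (f : α → κ) :
    ∀ᶠ u in (p : Filter α), f u = ulim p f := (exists_lim p f).choose_spec

/-- Iterated limits. -/
noncomputable def iterLim {k : ℕ} {κ : Type*} [Finite κ] (p : Ultrafilter (VWord k))
    (g : List (VWord k) → κ) : ℕ → List (VWord k) → κ
  | 0, L => g L
  | j + 1, L => ulim p fun u => iterLim p g j (u :: L)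

/-- The limit colour of `L` is `c`. -/
def Good {k : ℕ} {κ : Type*} [Finite κ] (p : Ultrafilter (VWord k))
    (g : List (VWord k) → κ) (M : ℕ) (c : κ) (L : List (VWord k)) : Prop :=
  L.length ≤ M → iterLim p g (M - L.length) L = c

/-- `L` stays good after `n` generic steps. -/
def Stay {k : ℕ} {κ : Type*} [Finite κ] (p : Ultrafilter (VWord k))
    (g : List (VWord k) → κ) (M : ℕ) (c : κ) : ℕ → List (VWord k) → Prop
  | 0, L => Good p g M c L
  | n + 1, L => Good p g M c L ∧ (∀ᶠ w in (p : Filter (VWord k)), Stay p g M c n (w :: L)) ∧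
      ∀ u l, L = u :: l → ∀ b, ∀ᶠ w in (p : Filter (VWord k)),
        Stay p g M c n ((u ++ sub w b) :: l)

theorem Stay.good {k : ℕ} {κ : Type*} [Finite κ] {p : Ultrafilter (VWord k)}
    {g : List (VWord k) → κ} {M : ℕ} {c : κ} {n : ℕ} {L : List (VWord k)}
    (h : Stay p g M c n L) : Good p g M c L := by
  cases n with
  | zero => exact h
  | succ n => exact h.1

theorem good_ext {k : ℕ} {κ : Type*} [Finite κ] (p : Ultrafilter (VWord k))
    (g : List (VWord k) → κ) (M : ℕ) (c : κ) (L : List (VWord k)) (h : Good p g M c L) :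
    ∀ᶠ u in (p : Filter (VWord k)), Good p g M c (u :: L) := by
  by_cases hL : L.length < M
  · have h1 := h hL.le
    obtain ⟨j, hj⟩ : ∃ j, M - L.length = j + 1 := ⟨M - L.length - 1, by omega⟩
    rw [hj] at h1
    filter_upwards [ulim_spec p fun u => iterLim p g j (u :: L)] with u hu
    intro _
    have : M - (u :: L).length = j := by simp; omega
    rw [this, hu]
    exact h1
  · refine Filter.Eventually.of_forall fun u hu => ?_
    simp at hu
    omega

theorem stay_ext {k : ℕ} {κ : Type*} [Finite κ] (p : Ultrafilter (VWord k))
    (hp : ∀ (b : Option (Fin k)) (P : VWord k → Prop), (∀ᶠ w in (p : Filter (VWord k)), P w) →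
      ∀ᶠ u in (p : Filter (VWord k)), ∀ᶠ w in (p : Filter (VWord k)), P (u ++ sub w b))
    (g : List (VWord k) → κ) (M : ℕ) (c : κ) (n : ℕ) : ∀ (L : List (VWord k)),
    Good p g M c L → ∀ᶠ u in (p : Filter (VWord k)), Stay p g M c n (u :: L) := by
  induction n with
  | zero => exact fun L h => good_ext p g M c L h
  | succ n ih =>
    intro L h
    have h3 : ∀ᶠ u in (p : Filter (VWord k)), ∀ b, ∀ᶠ w in (p : Filter (VWord k)),
        Stay p g M c n ((u ++ sub w b) :: L) :=
      Filter.eventually_all.2 fun b => hp b (fun u => Stay p g M c n (u :: L)) (ih L h)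
    filter_upwards [good_ext p g M c L h, h3] with u h1 h3
    refine ⟨h1, ih _ h1, ?_⟩
    intro u' l hul b
    obtain ⟨rfl, rfl⟩ := List.cons.inj hul
    exact h3 b

theorem exists_ws {k : ℕ} {κ : Type*} [Finite κ] (p : Ultrafilter (VWord k))
    (hL : ∀ᶠ w in (p : Filter (VWord k)), IsLeftVar w)
    (g : List (VWord k) → κ) (M : ℕ) (c : κ) (n : ℕ) : ∀ (F : Set (List (VWord k))), F.Finite →
    (∀ L ∈ F, Stay p g M c n L) →
    ∃ ws : List (VWord k), ws.length = n ∧ (∀ w ∈ ws, IsLeftVar w) ∧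
      ∀ L ∈ F, ∀ L', Reach ws L L' → L'.length = M → g L' = c := by
  have base : ∀ (n : ℕ) (L : List (VWord k)), Stay p g M c n L → L.length = M → g L = c := by
    intro n L h hlen
    have := h.good hlen.le
    rwa [hlen, Nat.sub_self] at this
  induction n with
  | zero =>
    intro F _ h
    refine ⟨[], rfl, by simp, fun L hLF L' hR hlen => ?_⟩
    cases hR
    exact base _ _ (h L hLF) hlen
  | succ n ih =>
    intro F hF h
    have e1 : ∀ᶠ w in (p : Filter (VWord k)), ∀ L ∈ F, Stay p g M c n (w :: L) :=
      (Filter.eventually_all_finite hF).2 fun L hLF => (h L hLF).2.1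
    have e2 : ∀ᶠ w in (p : Filter (VWord k)), ∀ L ∈ F, ∀ b, ∀ u l, L = u :: l →
        Stay p g M c n ((u ++ sub w b) :: l) := by
      refine (Filter.eventually_all_finite hF).2 fun L hLF => Filter.eventually_all.2 fun b => ?_
      cases L with
      | nil => exact Filter.Eventually.of_forall fun w u l hh => by simp at hh
      | cons u l =>
        filter_upwards [(h _ hLF).2.2 u l rfl b] with w hw
        intro u' l' hul
        obtain ⟨rfl, rfl⟩ := List.cons.inj hul
        exact hw
    obtain ⟨w, hw1, hw2, hwL⟩ := (e1.and (e2.and hL)).exists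
    obtain ⟨ws, hlen, hws, hR⟩ := ih
      ((fun L => w :: L) '' F ∪
        ⋃ b : Option (Fin k), (fun L => (L.headD [] ++ sub w b) :: L.tail) '' (F ∩ {L | L ≠ []}))
      ((hF.image _).union (Set.finite_iUnion fun b => (hF.inter_of_left _).image _)) (by
        rintro L (⟨L, hLF, rfl⟩ | hLU)
        · exact hw1 L hLF
        · obtain ⟨b, L, ⟨hLF, hne⟩, rfl⟩ := Set.mem_iUnion.1 hLU
          cases L with
          | nil => exact absurd rfl hne
          | cons u l => exact hw2 _ hLF b u l rfl)
    refine ⟨w :: ws, by simp [hlen], by simpa using ⟨hwL, hws⟩, ?_⟩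
    intro L hLF L' hRL hM
    cases hRL with
    | halt => exact base _ _ (h L hLF) hM
    | ext _ _ _ _ hr => exact hR _ (Or.inl ⟨L, hLF, rfl⟩) _ hr hM
    | app b _ u _ l _ hr =>
      exact hR _ (Or.inr (Set.mem_iUnion.2 ⟨b, _, ⟨hLF, by simp⟩, rfl⟩)) _ hr hM

theorem infinite_thm {k : ℕ} {κ : Type*} [Finite κ] (g : List (VWord k) → κ) (M n : ℕ) :
    ∃ (c : κ) (ws : List (VWord k)), ws.length = n ∧ (∀ w ∈ ws, IsLeftVar w) ∧
      ∀ L', Reach ws [] L' → L'.length = M → g L' = c := by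
  obtain ⟨p, hL, hp⟩ := exists_p k
  have hg : Good p g M (iterLim p g M []) [] := fun _ => rfl
  refine ⟨iterLim p g M [], ?_⟩
  obtain ⟨ws, h1, h2, h3⟩ := exists_ws p hL g M (iterLim p g M []) n {[]} (Set.finite_singleton _) (by
    rintro L rfl
    cases n with
    | zero => exact hg
    | succ n => exact ⟨hg, stay_ext p hp g M _ n [] hg, by simp⟩)
  exact ⟨ws, h1, h2, fun L' hr => h3 [] rfl L' hr⟩

/-- Substitute the letters of `x` in the variable words `ws`, in order. -/
def ev {k : ℕ} : List (VWord k) → Word k → Word k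
  | [], _ => []
  | _ :: _, [] => []
  | w :: ws, a :: x => subst w a ++ ev ws x

/-- Variable version of `ev`. -/
def evv {k : ℕ} : List (VWord k) → VWord k → VWord k
  | [], _ => []
  | _ :: _, [] => []
  | w :: ws, o :: u => sub w o ++ evv ws u

/-- Composition of sequences of variable words. -/
def compL {k : ℕ} : List (VWord k) → List (VWord k) → List (VWord k)
  | _, [] => []
  | ws, u :: us => evv ws u :: compL (ws.drop u.length) us

/-- Tree generated by a word and a list of variable words. -/
def tree {k : ℕ} (c : Word k) (us : List (VWord k)) : Set (Word k) :=
  {y | ∃ x : Word k, x.length ≤ us.length ∧ y = c ++ ev us x}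

/-- total length -/
def tot {k : ℕ} (us : List (VWord k)) : ℕ := (us.map List.length).sum

variable {k : ℕ}

@[simp] theorem ev_nil (ws : List (VWord k)) : ev ws [] = [] := by cases ws <;> rfl
@[simp] theorem evv_nil (ws : List (VWord k)) : evv ws [] = [] := by cases ws <;> rfl
@[simp] theorem ev_nil_left (x : Word k) : ev [] x = [] := by cases x <;> rfl
@[simp] theorem evv_nil_left (x : VWord k) : evv [] x = [] := by cases x <;> rfl
@[simp] theorem ev_cons (w : VWord k) (ws : List (VWord k)) (a : Fin k) (x : Word k) :
    ev (w :: ws) (a :: x) = subst w a ++ ev ws x := rfl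
@[simp] theorem evv_cons (w : VWord k) (ws : List (VWord k)) (a : Option (Fin k)) (x : VWord k) :
    evv (w :: ws) (a :: x) = sub w a ++ evv ws x := rfl

theorem subst_append (x y : VWord k) (a : Fin k) : subst (x ++ y) a = subst x a ++ subst y a := by
  simp [subst]

@[simp] theorem length_subst (x : VWord k) (a : Fin k) : (subst x a).length = x.length := by
  simp [subst]

@[simp] theorem length_sub (x : VWord k) (a : Option (Fin k)) : (sub x a).length = x.length := by
  simp [sub]

theorem subst_sub (w : VWord k) (o : Option (Fin k)) (a : Fin k) :
    subst (sub w o) a = subst w (o.getD a) := by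
  simp only [subst, sub, List.map_map]
  refine List.map_congr_left fun z _ => ?_
  cases z <;> cases o <;> rfl

theorem subst_evv (ws : List (VWord k)) (u : VWord k) (a : Fin k) :
    subst (evv ws u) a = ev ws (subst u a) := by
  induction ws generalizing u with
  | nil => simp [subst]
  | cons w ws ih =>
    cases u with
    | nil => simp [subst]
    | cons o u =>
      rw [evv_cons, subst_append, ih, subst_sub]
      rfl

theorem ev_append (ws : List (VWord k)) (x y : Word k) :
    ev ws (x ++ y) = ev ws x ++ ev (ws.drop x.length) y := by
  induction ws generalizing x with
  | nil => simp
  | cons w ws ih =>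
    cases x with
    | nil => simp
    | cons a x => simp [ih]

theorem ev_ev (ws us : List (VWord k)) (x : Word k) :
    ev ws (ev us x) = ev (compL ws us) x := by
  induction us generalizing ws x with
  | nil => simp [compL]
  | cons u us ih =>
    cases x with
    | nil => simp
    | cons a x => simp [compL, ev_append, ih, subst_evv]

@[simp] theorem length_compL (ws us : List (VWord k)) : (compL ws us).length = us.length := by
  induction us generalizing ws with
  | nil => rfl
  | cons u us ih => simp [compL, ih]

theorem comp_word (c c1 : Word k) (ws us : List (VWord k)) (x : Word k) :
    c ++ ev ws (c1 ++ ev us x) = (c ++ ev ws c1) ++ ev (compL (ws.drop c1.length) us) x := by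
  rw [ev_append, ev_ev, List.append_assoc]

/-- The image of a tree is a tree. -/
theorem image_tree (c c1 : Word k) (ws us : List (VWord k)) :
    (fun x => c ++ ev ws x) '' tree c1 us =
      tree (c ++ ev ws c1) (compL (ws.drop c1.length) us) := by
  ext y
  constructor
  · rintro ⟨_, ⟨x, hx, rfl⟩, rfl⟩
    exact ⟨x, by simpa using hx, comp_word ..⟩
  · rintro ⟨x, hx, rfl⟩
    exact ⟨_, ⟨x, by simpa using hx, rfl⟩, comp_word ..⟩

theorem left_cases {w : VWord k} (h : IsLeftVar w) : ∃ w', w = none :: w' := by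
  cases w with
  | nil => simp [IsLeftVar] at h
  | cons a w =>
    simp [IsLeftVar] at h
    exact ⟨w, by rw [h]⟩

theorem left_compL (ws us : List (VWord k)) (hws : ∀ w ∈ ws, IsLeftVar w)
    (hus : ∀ u ∈ us, IsLeftVar u) (hl : tot us ≤ ws.length) :
    ∀ u ∈ compL ws us, IsLeftVar u := by
  induction us generalizing ws with
  | nil => simp [compL]
  | cons u us ih =>
    simp only [List.mem_cons, forall_eq_or_imp] at hus
    obtain ⟨u', rfl⟩ := left_cases hus.1
    simp only [tot, List.map_cons, List.sum_cons, List.length_cons] at hl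
    cases ws with
    | nil => simp at hl
    | cons w ws =>
      obtain ⟨w', hw'⟩ := left_cases (hws w (by simp))
      simp only [compL, List.mem_cons, forall_eq_or_imp]
      refine ⟨?_, ih _ (fun z hz => hws z (List.mem_of_mem_drop hz)) hus.2 ?_⟩
      · rw [evv_cons, sub_none, hw']
        simp [IsLeftVar]
      · simp [tot] at hl ⊢
        omega

/-- Prefix lemma. -/
theorem prefix_lemma (ws : List (VWord k)) (hws : ∀ w ∈ ws, IsLeftVar w) (c1 y t : Word k)
    (hc : c1.length ≤ ws.length) (h : ev ws y = ev ws c1 ++ t) :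
    ∃ y', y = c1 ++ y' ∧ t = ev (ws.drop c1.length) y' := by
  induction ws generalizing c1 y with
  | nil =>
    have : c1 = [] := by simpa using hc
    subst this
    exact ⟨y, by simp, by simpa using h.symm⟩
  | cons w ws ih =>
    cases c1 with
    | nil => exact ⟨y, by simp, by simpa using h.symm⟩
    | cons a c1 =>
      obtain ⟨w', rfl⟩ := left_cases (hws w (by simp))
      cases y with
      | nil => simp [subst] at h
      | cons b y =>
        have hba : b = a := by
          simp [_root_.subst] at h
          exact h.1
        subst hba
        rw [ev_cons, ev_cons, List.append_assoc] at h
        obtain ⟨y', rfl, h2⟩ := ih (fun z hz => hws z (by simp [hz])) c1 y (by simpa using hc)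
          (List.append_cancel_left h)
        exact ⟨y', rfl, by simpa using h2⟩

theorem subst_inj (hk : 2 ≤ k) (u v : VWord k) (h : ∀ a, subst u a = subst v a) : u = v := by
  have h0 := h ⟨0, by omega⟩
  have h1 := h ⟨1, by omega⟩
  clear h
  induction u generalizing v with
  | nil =>
    cases v with
    | nil => rfl
    | cons => simp [subst] at h0
  | cons o u ih =>
    cases v with
    | nil => simp [subst] at h0
    | cons o' v =>
      simp only [subst, List.map_cons, List.cons.injEq] at h0 h1
      rw [ih v h0.2 h1.2]
      congr 1
      have e0 := h0.1
      have e1 := h1.1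
      cases o <;> cases o' <;> simp_all [Fin.ext_iff]
      · have := e0.trans e1.symm
        omega
      
theorem lift_var (hk : 2 ≤ k) (ws : List (VWord k)) (hws : ∀ w ∈ ws, IsLeftVar w) (u : VWord k)
    (h : ∀ a, ∃ y, subst u a = ev ws y) :
    ∃ u1 : VWord k, u1.length ≤ ws.length ∧ u = evv ws u1 ∧ u1.head? = u.head? := by
  induction ws generalizing u with
  | nil =>
    obtain ⟨y, hy⟩ := h ⟨0, by omega⟩
    have : u = [] := by simpa [subst] using hy
    exact ⟨[], by simp, by simpa using this, by simp [this]⟩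
  | cons w ws ih =>
    cases u with
    | nil => exact ⟨[], by simp, by simp, rfl⟩
    | cons o u =>
      obtain ⟨w', rfl⟩ := left_cases (hws w (by simp))
      have key : ∀ a, ∃ y, subst (o :: u) a = subst (none :: w') (o.getD a) ++ ev ws y := by
        intro a
        obtain ⟨y, hy⟩ := h a
        cases y with
        | nil => simp [subst] at hy
        | cons b y =>
          have hb : b = o.getD a := by
            simp [subst] at hy
            exact hy.1.symm
          exact ⟨y, by rw [hy, ev_cons, hb]⟩
      have h1 : (o :: u).take (w'.length + 1) = sub (none :: w') o := by
        refine subst_inj hk _ _ fun a => ?_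
        obtain ⟨y, hy⟩ := key a
        rw [subst_sub]
        have := congrArg (List.take (w'.length + 1)) hy
        rw [List.take_left' (by simp)] at this
        rw [← this]
        simp [subst, List.map_take]
      obtain ⟨u1, hl, hu, -⟩ := ih (fun z hz => hws z (by simp [hz]))
        ((o :: u).drop (w'.length + 1)) (by
          intro a
          obtain ⟨y, hy⟩ := key a
          refine ⟨y, ?_⟩
          have := congrArg (List.drop (w'.length + 1)) hy
          rw [List.drop_left' (by simp)] at this
          rw [← this]
          simp [subst, List.map_drop])
      refine ⟨o :: u1, by simpa using hl, ?_, rfl⟩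
      rw [evv_cons, ← hu, ← h1, List.take_append_drop]

theorem lift_list (hk : 2 ≤ k) (us : List (VWord k)) : ∀ (ws : List (VWord k)),
    (∀ w ∈ ws, IsLeftVar w) → (∀ u ∈ us, IsLeftVar u) →
    (∀ x : Word k, x.length ≤ us.length → ∃ y, ev us x = ev ws y) →
    ∃ us1 : List (VWord k), us1.length = us.length ∧ (∀ u ∈ us1, IsLeftVar u) ∧
      tot us1 ≤ ws.length ∧ us = compL ws us1 := by
  induction us with
  | nil => intro ws _ _ _; exact ⟨[], rfl, by simp, by simp [tot], rfl⟩
  | cons u us ih =>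
    intro ws hws hus h
    obtain ⟨u1, hl, hu, hh⟩ := lift_var hk ws hws u (by
      intro a
      obtain ⟨y, hy⟩ := h [a] (by simp)
      exact ⟨y, by simpa using hy⟩)
    obtain ⟨us1, g1, g2, g3, g4⟩ := ih (ws.drop u1.length)
      (fun z hz => hws z (List.mem_of_mem_drop hz)) (fun z hz => hus z (by simp [hz])) (by
        intro x hx
        obtain ⟨y, hy⟩ := h (⟨0, by omega⟩ :: x) (by simpa using hx)
        rw [ev_cons, hu, subst_evv] at hy
        obtain ⟨y', -, h2⟩ := prefix_lemma ws hws _ _ _ (by simpa using hl) hy.symm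
        exact ⟨y', by simpa using h2⟩)
    refine ⟨u1 :: us1, by simp [g1], ?_, ?_, ?_⟩
    · simp only [List.mem_cons, forall_eq_or_imp]
      refine ⟨?_, g2⟩
      have := hus u (by simp)
      unfold IsLeftVar at this ⊢
      rw [hh, this]
    · simp [tot] at g3 ⊢
      omega
    · rw [compL, ← hu, ← g4]

/-- Subtrees of a tree come from canonical ones. -/
theorem subtree_lift (hk : 2 ≤ k) (c c' : Word k) (ws us : List (VWord k))
    (hws : ∀ w ∈ ws, IsLeftVar w) (hus : ∀ u ∈ us, IsLeftVar u)
    (h : tree c' us ⊆ tree c ws) :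
    ∃ (c1 : Word k) (us1 : List (VWord k)), us1.length = us.length ∧ (∀ u ∈ us1, IsLeftVar u) ∧
      c1.length + tot us1 ≤ ws.length ∧ tree c' us = (fun x => c ++ ev ws x) '' tree c1 us1 := by
  obtain ⟨c1, hc1, hc⟩ := h (show c' ∈ tree c' us from ⟨[], by simp, by simp⟩)
  obtain ⟨us1, g1, g2, g3, g4⟩ := lift_list hk us (ws.drop c1.length)
      (fun z hz => hws z (List.mem_of_mem_drop hz)) hus (by
        intro x hx
        obtain ⟨y, -, hy⟩ := h ⟨x, hx, rfl⟩
        rw [hc, List.append_assoc] at hy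
        obtain ⟨y', -, h2⟩ := prefix_lemma ws hws _ _ _ hc1 (List.append_cancel_left hy).symm
        exact ⟨y', h2⟩)
  refine ⟨c1, us1, g1, g2, ?_, ?_⟩
  · simp at g3
    omega
  · rw [image_tree, ← g4, hc]

theorem csWord_eq (c : Word k) (ws : ℕ → VWord k) (n : ℕ) (a : ℕ → Fin k) :
    csWord c ws n a = c ++ ((List.range (n + 1)).map fun i => subst (ws i) (a i)).flatten := rfl

theorem ev_range (m n : ℕ) (hn : n ≤ m) (ws : ℕ → VWord k) (a : ℕ → Fin k) :
    ev ((List.range m).map ws) ((List.range n).map a) =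
      ((List.range n).map fun i => subst (ws i) (a i)).flatten := by
  induction n generalizing m ws a with
  | zero => simp
  | succ n ih =>
    obtain ⟨m, rfl⟩ : ∃ m', m = m' + 1 := ⟨m - 1, by omega⟩
    rw [List.range_succ_eq_map, List.range_succ_eq_map]
    simp only [List.map_cons, ev_cons, List.map_map, List.flatten_cons]
    congr 1
    exact ih m (by omega) (ws ∘ Nat.succ) (a ∘ Nat.succ)

theorem csSet_eq (hk : 2 ≤ k) (c : Word k) (m : ℕ) (ws : ℕ → VWord k) :
    csSet c m ws = tree c ((List.range m).map ws) := by
  ext y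
  constructor
  · rintro (rfl | ⟨n, hn, a, rfl⟩)
    · exact ⟨[], by simp, by simp⟩
    · refine ⟨(List.range (n + 1)).map a, by simpa using hn, ?_⟩
      rw [ev_range _ _ hn]
      rfl
  · rintro ⟨x, hx, rfl⟩
    rcases Nat.eq_zero_or_pos x.length with h0 | h0
    · left
      simp [List.eq_nil_of_length_eq_zero h0]
    · right
      refine ⟨x.length - 1, by simp at hx; omega, fun i => x.getD i ⟨0, by omega⟩, ?_⟩
      have hx' : x = (List.range x.length).map (fun i => x.getD i ⟨0, by omega⟩) := by
        refine List.ext_getElem (by simp) fun i h1 h2 => ?_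
        simp [h1]
      conv_lhs => rw [hx']
      rw [ev_range _ _ (by simpa using hx), csWord_eq, Nat.sub_add_cancel h0]

theorem isCSTree_iff (hk : 2 ≤ k) (m : ℕ) (S : Set (Word k)) : IsCSTree k m S ↔
    1 ≤ m ∧ ∃ (c : Word k) (us : List (VWord k)), us.length = m ∧ (∀ u ∈ us, IsLeftVar u) ∧
      S = tree c us := by
  refine and_congr_right fun _ => ⟨?_, ?_⟩
  · rintro ⟨c, ws, h, rfl⟩
    refine ⟨c, (List.range m).map ws, by simp, by simpa using h, csSet_eq hk ..⟩
  · rintro ⟨c, us, rfl, h, rfl⟩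
    refine ⟨c, fun i => us.getD i [], ?_, ?_⟩
    · intro i hi
      simpa [hi] using h us[i] (by simp)
    · rw [csSet_eq hk]
      congr 1
      refine List.ext_getElem (by simp) fun i h1 h2 => ?_
      simp [h1]

theorem reach_evv (ws : List (VWord k)) (y u : VWord k) (L L' : List (VWord k))
    (hy : y.length ≤ ws.length)
    (h : Reach (ws.drop y.length) ((u ++ evv ws y) :: L) L') : Reach ws (u :: L) L' := by
  induction ws generalizing y u with
  | nil => simpa using h
  | cons w ws ih =>
    cases y with
    | nil => simpa using h
    | cons o y =>
      refine Reach.app o w u ws L L' (ih y _ (by simpa using hy) ?_)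
      simpa using h

theorem reach_comp (us : List (VWord k)) : ∀ (ws L : List (VWord k)),
    (∀ u ∈ us, IsLeftVar u) → tot us ≤ ws.length → Reach ws L ((compL ws us).reverse ++ L) := by
  induction us with
  | nil => intro ws L _ _; exact Reach.halt ws L
  | cons u us ih =>
    intro ws L hus hl
    obtain ⟨u', rfl⟩ := left_cases (hus u (by simp))
    simp only [tot, List.map_cons, List.sum_cons, List.length_cons] at hl
    cases ws with
    | nil => simp at hl
    | cons w ws =>
      simp only [List.length_cons] at hl
      refine Reach.ext w ws L _ (reach_evv ws u' w L _ (by omega) ?_)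
      have := ih (ws.drop u'.length) ((w ++ evv ws u') :: L) (fun z hz => hus z (by simp [hz]))
        (by simp [tot]; omega)
      simpa [compL, sub_none] using this

theorem length_ev (us : List (VWord k)) (x : Word k) : (ev us x).length ≤ tot us := by
  induction us generalizing x with
  | nil => simp
  | cons u us ih =>
    cases x with
    | nil => simp
    | cons a x =>
      have := ih x
      simp [tot] at this ⊢
      exact this

/-- Canonical subtrees of bounded height. -/
def canon (k m d : ℕ) : Set (Set (Word k)) :=
  {S | ∃ (c1 : Word k) (us1 : List (VWord k)), us1.length = m ∧ (∀ u ∈ us1, IsLeftVar u) ∧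
      c1.length + tot us1 ≤ d ∧ S = tree c1 us1}

theorem canon_finite (k m d : ℕ) : (canon k m d).Finite := by
  refine ((List.finite_length_le (Fin k) d).powerset).subset ?_
  rintro S ⟨c1, us1, -, -, h, rfl⟩ y ⟨x, -, rfl⟩
  have := length_ev us1 x
  simp only [Set.mem_ofPred_eq, List.length_append]
  omega

theorem main (k d m r : ℕ) (hk : 2 ≤ k) (hm : 1 ≤ m) (hmd : m ≤ d) :
    ∃ N : ℕ, ∀ n, N ≤ n → ∀ W : Set (Word k), IsCSTree k n W →
      ∀ χ : Set (Word k) → Fin r, ∃ U : Set (Word k), IsCSTree k d U ∧ U ⊆ W ∧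
        ∀ S T : Set (Word k), IsCSTree k m S → S ⊆ U → IsCSTree k m T → T ⊆ U →
          χ S = χ T := by
  by_contra hcon
  push Not at hcon
  choose n hn W hW χ hχ using hcon
  have hW' := fun N => ((isCSTree_iff hk _ _).1 (hW N)).2
  choose c ws hlen hleft hWeq using hW'
  let a0 : Fin k := ⟨0, by omega⟩
  let g : List (VWord k) → Fin r := fun L => ulim (hyperfilter ℕ) fun N =>
    χ N ((fun x => c N ++ ev (ws N) x) '' tree (subst (L.reverse.headD []) a0) L.reverse.tail)
  obtain ⟨κ, vs, hvs, hvl, hg⟩ := infinite_thm g (m + 1) (d + 1)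
  obtain ⟨w0, us, rfl⟩ := List.exists_cons_of_length_eq_add_one hvs
  have hus : us.length = d := by simpa using hvs
  have husl : ∀ u ∈ us, IsLeftVar u := fun u hu => hvl u (by simp [hu])
  have key : ∀ S ∈ canon k m d, ∀ᶠ N in (hyperfilter ℕ : Filter ℕ),
      χ N ((fun x => c N ++ ev (ws N) x) '' ((fun x => subst w0 a0 ++ ev us x) '' S)) = κ := by
    rintro S ⟨c1, us1, h1, h2, h3, rfl⟩
    have hR : Reach (w0 :: us) [] ((compL (us.drop c1.length) us1).reverse ++
        [w0 ++ evv us (c1.map some)]) := by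
      refine Reach.ext w0 us [] _ (reach_evv us (c1.map some) w0 [] _ (by simp; omega) ?_)
      rw [List.length_map]
      exact reach_comp us1 _ _ h2 (by simp; omega)
    have := hg _ hR (by simp [h1])
    have hs := ulim_spec (hyperfilter ℕ) fun N => χ N ((fun x => c N ++ ev (ws N) x) '' tree
      (subst (((compL (us.drop c1.length) us1).reverse ++
        [w0 ++ evv us (c1.map some)]).reverse.headD []) a0) ((compL (us.drop c1.length) us1).reverse ++
        [w0 ++ evv us (c1.map some)]).reverse.tail)
    filter_upwards [hs] with N hN
    rw [← this]
    refine Eq.trans ?_ hN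
    rw [image_tree (subst w0 a0) c1 us us1]
    have hc : subst (c1.map some) a0 = c1 := by simp [subst, Function.comp_def]
    simp [subst_append, subst_evv, hc]
  have hall := (Filter.eventually_all_finite (canon_finite k m d)).2 key
  have hge : ∀ᶠ N in (hyperfilter ℕ : Filter ℕ), w0.length + tot us ≤ N :=
    Nat.hyperfilter_le_atTop (Filter.eventually_ge_atTop _)
  obtain ⟨N, hN, hNge⟩ := (hall.and hge).exists
  have hU := image_tree (c N) (subst w0 a0) (ws N) us
  obtain ⟨S, T, hS, hSU, hT, hTU, hne⟩ := hχ N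
    ((fun x => c N ++ ev (ws N) x) '' tree (subst w0 a0) us) (by
      rw [isCSTree_iff hk]
      refine ⟨by omega, _, _, ?_, ?_, hU⟩
      · simp [hus]
      · refine left_compL _ _ (fun z hz => hleft N z (List.mem_of_mem_drop hz)) husl ?_
        have := hn N
        have := hlen N
        simp
        omega) (by
      rw [hWeq N]
      rintro _ ⟨_, ⟨x, -, rfl⟩, rfl⟩
      refine ⟨_, ?_, rfl⟩
      have := length_ev us x
      have := hn N
      have := hlen N
      simp
      omega)
  have fin : ∀ S, IsCSTree k m S →
      S ⊆ ((fun x => c N ++ ev (ws N) x) '' tree (subst w0 a0) us) → χ N S = κ := by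
    intro S hS hSU
    obtain ⟨-, c', us', hl', hv', rfl⟩ := (isCSTree_iff hk _ _).1 hS
    rw [hU] at hSU
    obtain ⟨c1, us1, g1, g2, g3, g4⟩ := subtree_lift hk _ _ _ _ (by
      refine left_compL _ _ (fun z hz => hleft N z (List.mem_of_mem_drop hz)) husl ?_
      have := hn N
      have := hlen N
      simp
      omega) hv' hSU
    rw [g4]
    have hcan := hN (tree c1 us1) ⟨c1, us1, by rw [g1, hl'], g2, by simpa [hus] using g3, rfl⟩
    rw [Set.image_image] at hcan
    rw [← hcan]
    congr 1
    refine Set.image_congr fun x _ => ?_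
    exact (comp_word ..).symm
  exact hne ((fin S hS hSU).trans (fin T hT hTU).symm)

end CSProof

/-- The partition theorem for Carlson–Simpson trees (a variant of the
Graham–Rothschild theorem for left variable words): an `r`-coloring of a set `X` is a
function `X → Fin r`, and monochromaticity of `Subtr_m(U)` means the coloring takes the
same value at any two `m`-dimensional Carlson–Simpson trees contained in `U`. -/
theorem cs_tree_partition (k d m r : ℕ) (hk : 2 ≤ k) (hm : 1 ≤ m) (hmd : m ≤ d)
    (hr : 1 ≤ r) :
    ∃ N : ℕ, ∀ n, N ≤ n → ∀ W : Set (Word k), IsCSTree k n W →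
      ∀ χ : Set (Word k) → Fin r, ∃ U : Set (Word k), IsCSTree k d U ∧ U ⊆ W ∧
        ∀ S T : Set (Word k), IsCSTree k m S → S ⊆ U → IsCSTree k m T → T ⊆ U →
          χ S = χ T := by
  exact CSProof.main k d m r hk hm hmd
end
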